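/- arXiv:math/0402165 — 3 statements merged into one kernel-verified Lean document; each statement's English description precedes it below -/
import Mathlib

section
/- Let m and n be relatively prime integers, each at least 2. If μ is a Borel probability measure on 𝕋 that is invariant under ×m and is N_n-recurrent, then μ is Lebesgue measure on 𝕋. -/
open MeasureTheory

/-- The subgroup `N_n = { q/nᵏ mod 1 }` of `n`-adic rationals in `𝕋`. -/
def nAdicRationals (n : ℕ) : Set UnitAddCircle :=
  {t | ∃ (k : ℕ) (q : ℤ), t = (((q : ℝ) / n ^ k : ℝ) : UnitAddCircle)}

/-- A Borel probability measure `μ` on `𝕋` is `N_n`-recurrent if for every Borel set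
`B` of positive measure and `μ`-a.e. `x ∈ B` there are infinitely many `t ∈ N_n` with
`x + t ∈ B`. -/
def NnRecurrent (n : ℕ) (μ : Measure UnitAddCircle) : Prop :=
  ∀ B : Set UnitAddCircle, MeasurableSet B → 0 < μ B →
    ∀ᵐ x ∂μ, x ∈ B → {t : UnitAddCircle | t ∈ nAdicRationals n ∧ x + t ∈ B}.Infinite

open scoped ENNReal

lemma nt_lte (m n : ℕ) (hm : 2 ≤ m) (hn : 2 ≤ n) (hmn : Nat.Coprime m n) :
    ∃ C : ℕ, 0 < C ∧ ∀ (T K : ℕ) (a : ℤ), (n : ℤ) ^ K ∣ a * ((m : ℤ) ^ T - 1) →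
      (n : ℤ) ^ K ∣ a * C * T := by
  set s := Nat.totient (n ^ 2) with hs
  have hs0 : s ≠ 0 := (Nat.totient_pos.2 (by positivity)).ne'
  have hu : n ^ 2 ∣ m ^ s - 1 := by
    have := Nat.ModEq.pow_totient (hmn.pow_right 2)
    exact (Nat.modEq_iff_dvd' (Nat.one_le_pow _ _ (by omega))).1 this.symm
  have hu1 : 1 < m ^ s := Nat.one_lt_pow hs0 (by omega)
  have hcast : ((m ^ s - 1 : ℕ) : ℤ) = (m : ℤ) ^ s - 1 := by
    rw [Nat.cast_sub hu1.le]; simp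
  refine ⟨m ^ s - 1, by omega, fun T K a h => ?_⟩
  have huz : (n : ℤ) ^ 2 ∣ (m : ℤ) ^ s - 1 := by
    rw [← hcast]; exact_mod_cast hu
  have h2 : (n : ℤ) ^ K ∣ a * (((m : ℤ) ^ s) ^ T - 1) := by
    refine h.trans (mul_dvd_mul_left _ ?_)
    rw [← pow_mul, mul_comm, pow_mul]
    simpa using sub_dvd_pow_sub_pow ((m : ℤ) ^ T) 1 s
  have key : ∀ p : ℕ, p.Prime → p ∣ n → emultiplicity (p : ℤ) (((m : ℤ) ^ s) ^ T - 1) =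
      emultiplicity (p : ℤ) ((m : ℤ) ^ s - 1) + emultiplicity (p : ℤ) T := by
    intro p hp hpn
    have hpm : ¬ (p : ℤ) ∣ (m : ℤ) ^ s := by
      intro hd
      have hd' : p ∣ m ^ s := by exact_mod_cast hd
      have := hp.dvd_of_dvd_pow hd'
      have := Nat.dvd_gcd this hpn
      rw [hmn] at this
      exact hp.one_lt.ne' (Nat.dvd_one.1 this)
    have hp2 : (p : ℤ) ^ 2 ∣ (m : ℤ) ^ s - 1 :=
      (pow_dvd_pow_of_dvd (by exact_mod_cast hpn) 2).trans huz
    rcases hp.eq_two_or_odd' with rfl | hodd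
    · have := Int.two_pow_sub_pow' (x := (m : ℤ) ^ s) (y := 1) T (by simpa using hp2) (by simpa using hpm)
      simpa using this
    · have := Int.emultiplicity_pow_sub_pow hp hodd (x := (m : ℤ) ^ s) (y := 1)
        ((dvd_pow_self _ two_ne_zero).trans hp2) hpm T
      rw [one_pow] at this
      rw [this, Int.natCast_emultiplicity]
  rw [hcast]
  by_cases hX : a * ((m : ℤ) ^ s - 1) * T = 0
  · rw [hX]; exact dvd_zero _
  rw [← Int.natAbs_dvd_natAbs, Nat.dvd_iff_prime_pow_dvd_dvd]
  intro p k hp hk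
  rw [Int.natAbs_pow, Int.natAbs_natCast] at hk
  rcases Nat.eq_zero_or_pos k with rfl | hk0
  · simp
  have hpn : p ∣ n := hp.dvd_of_dvd_pow ((dvd_pow_self p hk0.ne').trans hk)
  have hkz : (p : ℤ) ^ k ∣ a * (((m : ℤ) ^ s) ^ T - 1) :=
    dvd_trans (by exact_mod_cast hk) h2
  have hpz : Prime (p : ℤ) := Nat.prime_iff_prime_int.1 hp
  have : (p : ℤ) ^ k ∣ a * ((m : ℤ) ^ s - 1) * T := by
    rw [pow_dvd_iff_le_emultiplicity] at hkz ⊢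
    rw [emultiplicity_mul hpz, key p hp hpn] at hkz
    rwa [emultiplicity_mul hpz, emultiplicity_mul hpz, add_assoc]
  rw [← Int.natAbs_dvd_natAbs] at this
  simpa [Int.natAbs_pow] using this

lemma nt_count (m n : ℕ) (hm : 2 ≤ m) (hn : 2 ≤ n) (hmn : Nat.Coprime m n) (a : ℤ) (ha : a ≠ 0) :
    ∃ c : ℕ, ∀ K l : ℕ,
      ((Finset.range (n ^ K)).filter
        (fun k => ((n ^ K : ℕ) : ℤ) ∣ a * (m : ℤ) ^ k - a * (m : ℤ) ^ l)).card ≤ c := by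
  obtain ⟨C, hC, h⟩ := nt_lte m n hm hn hmn
  have aux : ∀ K k l : ℕ, l ≤ k → (n : ℤ) ^ K ∣ a * (m : ℤ) ^ k - a * (m : ℤ) ^ l →
      (n : ℤ) ^ K ∣ a * C * ((k : ℤ) - l) := by
    intro K k l hlk hd
    obtain ⟨T, rfl⟩ := Nat.exists_eq_add_of_le hlk
    have e : a * (m : ℤ) ^ (l + T) - a * (m : ℤ) ^ l = (m : ℤ) ^ l * (a * ((m : ℤ) ^ T - 1)) := by
      ring
    rw [e] at hd
    have hco : IsCoprime ((n : ℤ) ^ K) ((m : ℤ) ^ l) :=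
      (Nat.isCoprime_iff_coprime.2 hmn.symm).pow
    have := h T K a (hco.dvd_of_dvd_mul_left hd)
    simpa using this
  have aux2 : ∀ K k l : ℕ, (n : ℤ) ^ K ∣ a * (m : ℤ) ^ k - a * (m : ℤ) ^ l →
      (n : ℤ) ^ K ∣ (a.natAbs * C : ℕ) * ((k : ℤ) - l) := by
    intro K k l hd
    have : (n : ℤ) ^ K ∣ a * C * ((k : ℤ) - l) := by
      rcases le_total l k with hlk | hlk
      · exact aux K k l hlk hd
      · have := aux K l k hlk (by rw [← dvd_neg]; simpa using hd)
        have e : a * C * ((k : ℤ) - l) = -(a * C * ((l : ℤ) - k)) := by ring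
        rw [e, dvd_neg]
        exact this
    rw [← Int.dvd_natAbs] at this ⊢
    simpa [Int.natAbs_mul] using this
  refine ⟨a.natAbs * C, fun K l => ?_⟩
  set c := a.natAbs * C with hc
  have hc0 : 0 < c := Nat.mul_pos (Int.natAbs_pos.2 ha) hC
  have hN : 0 < n ^ K := by positivity
  rw [← Finset.card_range c]
  refine Finset.card_le_card_of_injOn (fun k => c * k / n ^ K) ?_ ?_
  · intro k hk
    simp only [Finset.coe_filter, Finset.mem_range, Set.mem_ofPred_eq] at hk
    simp only [Finset.coe_range, Set.mem_Iio]
    rw [Nat.div_lt_iff_lt_mul hN]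
    exact Nat.mul_lt_mul_of_pos_left hk.1 hc0
  · have hmod : ∀ k : ℕ, ((n ^ K : ℕ) : ℤ) ∣ a * (m : ℤ) ^ k - a * (m : ℤ) ^ l →
        c * k % n ^ K = c * l % n ^ K := by
      intro k hk
      have := aux2 K k l (by simpa using hk)
      refine Nat.ModEq.symm ((Nat.modEq_iff_dvd).2 ?_)
      push_cast
      rw [mul_sub] at this
      simpa using this
    intro k hk k' hk' he
    simp only [Finset.coe_filter, Finset.mem_range, Set.mem_ofPred_eq] at hk hk'
    simp only at he
    have h1 := Nat.div_add_mod (c * k) (n ^ K)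
    have h2 := Nat.div_add_mod (c * k') (n ^ K)
    rw [hmod k hk.2, he] at h1
    rw [hmod k' hk'.2] at h2
    exact Nat.eq_of_mul_eq_mul_left hc0 (h1.symm.trans h2)

noncomputable def muD (D : Finset UnitAddCircle) (μ : Measure UnitAddCircle) : Measure UnitAddCircle :=
  ∑ t ∈ D, μ.map (fun x => x + t)

lemma lintegral_muD (D : Finset UnitAddCircle) (μ : Measure UnitAddCircle)
    {g : UnitAddCircle → ℝ≥0∞} (hg : Measurable g) :
    ∫⁻ x, g x ∂(muD D μ) = ∑ t ∈ D, ∫⁻ x, g (x + t) ∂μ := by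
  rw [muD, lintegral_finsetSum_measure]
  exact Finset.sum_congr rfl fun t _ => lintegral_map hg (measurable_add_const t)

instance muD_finite (D : Finset UnitAddCircle) (μ : Measure UnitAddCircle) [IsFiniteMeasure μ] :
    IsFiniteMeasure (muD D μ) := by
  unfold muD
  infer_instance

lemma muD_mono {D D' : Finset UnitAddCircle} (h : D ⊆ D') (μ : Measure UnitAddCircle) :
    muD D μ ≤ muD D' μ := by
  unfold muD
  exact Finset.sum_le_sum_of_subset_of_nonneg h (fun _ _ _ => Measure.zero_le _)

lemma muD_zero_mem {D : Finset UnitAddCircle} (h : 0 ∈ D) (μ : Measure UnitAddCircle) :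
    μ ≤ muD D μ := by
  have := muD_mono (Finset.singleton_subset_iff.2 h) μ
  simpa [muD] using this

lemma muD_inv {D : Finset UnitAddCircle} (hadd : ∀ s ∈ D, ∀ t ∈ D, s + t ∈ D)
    (hneg : ∀ s ∈ D, -s ∈ D) (μ : Measure UnitAddCircle) {g : UnitAddCircle → ℝ≥0∞}
    (hg : Measurable g) {t : UnitAddCircle} (ht : t ∈ D) :
    ∫⁻ x, g (x + t) ∂(muD D μ) = ∫⁻ x, g x ∂(muD D μ) := by
  rw [lintegral_muD D μ hg, lintegral_muD D μ (g := fun x => g (x + t)) (hg.comp (measurable_add_const t))]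
  refine Finset.sum_bij' (fun s _ => s + t) (fun s _ => s + -t) (fun s hs => hadd s hs t ht)
    (fun s hs => hadd s hs _ (hneg t ht)) (by simp) (by simp) ?_
  intro s hs
  simp [add_assoc]

instance muD_leb (D : Finset UnitAddCircle) (μ : Measure UnitAddCircle) [IsFiniteMeasure μ] : μ.HaveLebesgueDecomposition (muD D μ) := by
  exact Measure.haveLebesgueDecomposition_of_sigmaFinite _ _
lemma sum_rn {D : Finset UnitAddCircle} (h0 : 0 ∈ D) (hadd : ∀ s ∈ D, ∀ t ∈ D, s + t ∈ D)
    (hneg : ∀ s ∈ D, -s ∈ D) (μ : Measure UnitAddCircle) [IsFiniteMeasure μ] :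
    ∀ᵐ x ∂(muD D μ), ∑ t ∈ D, μ.rnDeriv (muD D μ) (x + t) ≤ 1 := by
  have hac : μ ≪ muD D μ := Measure.absolutelyContinuous_of_le (muD_zero_mem h0 μ)
  set f := μ.rnDeriv (muD D μ) with hf
  have hfm : Measurable f := Measure.measurable_rnDeriv _ _
  refine ae_le_of_forall_setLIntegral_le_of_sigmaFinite (g := fun _ => 1)
    (Finset.measurable_fun_sum _ fun t _ => hfm.comp (measurable_add_const t)) ?_
  intro s hs _
  rw [lintegral_finsetSum (f := fun t x => f (x + t)) _ (fun t _ => hfm.comp (measurable_add_const t))]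
  have h1 : ∀ t ∈ D, ∫⁻ x in s, f (x + t) ∂(muD D μ) = ∫⁻ x, s.indicator 1 (x + -t) ∂μ := by
    intro t ht
    have hs' : MeasurableSet ((fun x => x + -t) ⁻¹' s) := measurable_add_const _ hs
    have e : ∀ x, s.indicator (fun x => f (x + t)) x
        = (((fun x => x + -t) ⁻¹' s).indicator f) (x + t) := by
      intro x
      by_cases hx : x ∈ s <;> simp [Set.indicator, hx]
    rw [← lintegral_indicator hs]
    simp_rw [e]
    rw [muD_inv hadd hneg μ (hfm.indicator hs') ht, lintegral_indicator hs', hf,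
      Measure.setLIntegral_rnDeriv hac]
    have : ∀ x, s.indicator (1 : UnitAddCircle → ℝ≥0∞) (x + -t)
      = ((fun x => x + -t) ⁻¹' s).indicator 1 x := fun x => rfl
    simp_rw [this]
    rw [lintegral_indicator_one hs']
  rw [Finset.sum_congr rfl h1, ← lintegral_indicator hs]
  refine le_of_eq ?_
  have := lintegral_muD D μ (g := s.indicator 1) (measurable_one.indicator hs)
  refine Eq.trans ?_ this.symm
  refine Finset.sum_bij' (fun s _ => -s) (fun s _ => -s) hneg hneg (by simp) (by simp) (by simp)

lemma rn_anti {D D' : Finset UnitAddCircle} (h0 : 0 ∈ D) (h : D ⊆ D')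
    (μ : Measure UnitAddCircle) [IsFiniteMeasure μ] :
    ∀ᵐ x ∂μ, μ.rnDeriv (muD D' μ) x ≤ μ.rnDeriv (muD D μ) x := by
  have hac : μ ≪ muD D μ := Measure.absolutelyContinuous_of_le (muD_zero_mem h0 μ)
  have hac' : μ ≪ muD D' μ := Measure.absolutelyContinuous_of_le (muD_zero_mem (h h0) μ)
  refine hac.ae_le (ae_le_of_forall_setLIntegral_le_of_sigmaFinite
    (Measure.measurable_rnDeriv _ _) fun s hs _ => ?_)
  rw [Measure.setLIntegral_rnDeriv hac, ← Measure.setLIntegral_rnDeriv hac' s]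
  exact lintegral_mono' (Measure.restrict_mono le_rfl (muD_mono h μ)) le_rfl

lemma rn_tendsto (D : ℕ → Finset UnitAddCircle) (hD : Monotone D) (h0 : ∀ K, 0 ∈ D K)
    (hadd : ∀ K, ∀ s ∈ D K, ∀ t ∈ D K, s + t ∈ D K) (hneg : ∀ K, ∀ s ∈ D K, -s ∈ D K)
    (μ : Measure UnitAddCircle) [IsFiniteMeasure μ]
    (hrec : ∀ B : Set UnitAddCircle, MeasurableSet B → 0 < μ B →
      ∀ᵐ x ∂μ, x ∈ B → {t : UnitAddCircle | t ∈ (⋃ K, (D K : Set UnitAddCircle)) ∧ x + t ∈ B}.Infinite)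
    (ε : ℝ≥0∞) (hε : ε ≠ 0) :
    Filter.Tendsto (fun K => μ {x | ε ≤ μ.rnDeriv (muD (D K) μ) x}) Filter.atTop (nhds 0) := by
  set f := fun K => μ.rnDeriv (muD (D K) μ) with hf
  have hfm : ∀ K, Measurable (f K) := fun K => Measure.measurable_rnDeriv _ _
  have hS : ∀ K, MeasurableSet {x | ε ≤ f K x} := fun K => measurableSet_le measurable_const (hfm K)
  set B : Set UnitAddCircle := ⋂ K, {x | ε ≤ f K x} with hB
  have hBm : MeasurableSet B := MeasurableSet.iInter hS
  have hB0 : μ B = 0 := by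
    by_contra hne
    have h1 := hrec B hBm (pos_iff_ne_zero.2 hne)
    have h2 : ∀ᵐ x ∂μ, ∀ K, ∑ t ∈ D K, f K (x + t) ≤ 1 := by
      rw [ae_all_iff]
      intro K
      exact (Measure.absolutelyContinuous_of_le (muD_zero_mem (h0 K) μ)).ae_le
        (sum_rn (h0 K) (hadd K) (hneg K) μ)
    have h3 : ∀ᵐ x ∂μ, x ∉ B := by
      filter_upwards [h1, h2] with x hx1 hx2 hxB
      have hinf := hx1 hxB
      obtain ⟨M, hM⟩ := ENNReal.exists_nat_mul_gt hε ENNReal.one_ne_top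
      obtain ⟨F, hF, hcard⟩ := hinf.exists_subset_card_eq M
      have : ∃ K, F ⊆ D K := by
        have hF' : (F : Set UnitAddCircle) ⊆ ⋃ K, (D K : Set UnitAddCircle) := fun t ht => (hF ht).1
        have hdir : Directed (· ⊆ ·) (fun K => (D K : Set UnitAddCircle)) :=
          Monotone.directed_le (fun i j hij => Finset.coe_subset.2 (hD hij))
        obtain ⟨K, hK⟩ := hdir.exists_mem_subset_of_finset_subset_biUnion hF'
        exact ⟨K, Finset.coe_subset.1 hK⟩
      obtain ⟨K, hK⟩ := this
      have h4 : ∑ t ∈ F, ε ≤ 1 := by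
        refine le_trans (Finset.sum_le_sum fun t ht => ?_)
          ((Finset.sum_le_sum_of_subset hK).trans (hx2 K))
        exact Set.mem_iInter.1 (hF ht).2 K
      rw [Finset.sum_const, hcard, nsmul_eq_mul] at h4
      exact absurd hM (not_lt.2 h4)
    exact hne (measure_eq_zero_iff_ae_notMem.2 h3)
  set S : ℕ → Set UnitAddCircle := fun K => ⋂ j ≤ K, {x | ε ≤ f j x} with hSdef
  have hSm : ∀ K, MeasurableSet (S K) := fun K =>
    MeasurableSet.iInter fun j => MeasurableSet.iInter fun _ => hS j
  have hSanti : Antitone S := by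
    intro i j hij x hx
    simp only [hSdef, Set.mem_iInter] at hx ⊢
    exact fun k hk => hx k (hk.trans hij)
  have hlim : Filter.Tendsto (fun K => μ (S K)) Filter.atTop (nhds 0) := by
    have := tendsto_measure_iInter_atTop (μ := μ) (fun K => (hSm K).nullMeasurableSet) hSanti
      ⟨0, measure_ne_top _ _⟩
    have e : ⋂ K, S K = B := by
      ext x
      simp only [hSdef, hB, Set.mem_iInter]
      exact ⟨fun h K => h K K le_rfl, fun h K j _ => h j⟩
    rwa [e, hB0] at this
  refine tendsto_of_tendsto_of_tendsto_of_le_of_le tendsto_const_nhds hlim (fun _ => zero_le) ?_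
  intro K
  refine measure_mono_ae ?_
  have : ∀ᵐ x ∂μ, ∀ j, j ≤ K → f K x ≤ f j x := by
    rw [ae_all_iff]
    intro j
    rw [ae_all_iff]
    intro hj
    exact rn_anti (h0 j) (hD hj) μ
  filter_upwards [this] with x hx hxK
  have hxK' : ε ≤ f K x := hxK
  have : x ∈ S K := by
    simp only [hSdef, Set.mem_iInter]
    exact fun j hj => hxK'.trans (hx j hj)
  exact this

noncomputable def Dset (n K : ℕ) : Finset UnitAddCircle :=
  haveI := Classical.decEq UnitAddCircle
  (Finset.range (n ^ K)).image (fun j : ℕ => (((j : ℝ) / n ^ K : ℝ) : UnitAddCircle))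

lemma Dset_card (n K : ℕ) : (Dset n K).card ≤ n ^ K := by
  unfold Dset
  exact (@Finset.card_image_le _ _ _ _ (Classical.decEq UnitAddCircle)).trans (by simp)

lemma mem_Dset {n K : ℕ} (hn : 2 ≤ n) (t : UnitAddCircle) :
    t ∈ Dset n K ↔ ∃ q : ℤ, t = (((q : ℝ) / n ^ K : ℝ) : UnitAddCircle) := by
  unfold Dset
  have hN : (0 : ℤ) < (n : ℤ) ^ K := by positivity
  simp only [Finset.mem_image, Finset.mem_range]
  constructor
  · rintro ⟨j, _, rfl⟩
    exact ⟨j, by simp⟩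
  · rintro ⟨q, rfl⟩
    refine ⟨(q % (n : ℤ) ^ K).toNat, ?_, ?_⟩
    · have := Int.emod_lt_of_pos q hN
      zify
      rwa [Int.toNat_of_nonneg (Int.emod_nonneg _ hN.ne')]
    · have h1 : (((q % (n : ℤ) ^ K).toNat : ℕ) : ℝ) = ((q % (n : ℤ) ^ K : ℤ) : ℝ) := by
        rw [← Int.cast_natCast, Int.toNat_of_nonneg (Int.emod_nonneg _ hN.ne')]
      rw [h1]
      have h2 := Int.emod_add_mul_ediv q ((n : ℤ) ^ K)
      have h3 : (q : ℝ) / n ^ K = ((q % (n : ℤ) ^ K : ℤ) : ℝ) / n ^ K + ((q / (n : ℤ) ^ K : ℤ) : ℝ) := by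
        have hN' : (n : ℝ) ^ K ≠ 0 := by positivity
        conv_lhs => rw [← h2]
        push_cast
        field_simp
      rw [h3, AddCircle.coe_add]
      have h4 : (((q / (n : ℤ) ^ K : ℤ) : ℝ) : UnitAddCircle) = 0 := by
        rw [AddCircle.coe_eq_zero_iff]
        exact ⟨q / (n : ℤ) ^ K, by simp⟩
      rw [h4, add_zero]

lemma Dset_zero {n : ℕ} (hn : 2 ≤ n) (K : ℕ) : 0 ∈ Dset n K :=
  (mem_Dset hn _).2 ⟨0, by simp⟩

lemma Dset_add {n : ℕ} (hn : 2 ≤ n) (K : ℕ) : ∀ s ∈ Dset n K, ∀ t ∈ Dset n K, s + t ∈ Dset n K := by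
  intro s hs t ht
  rw [mem_Dset hn] at *
  obtain ⟨p, rfl⟩ := hs
  obtain ⟨q, rfl⟩ := ht
  exact ⟨p + q, by rw [← AddCircle.coe_add]; congr 1; push_cast; ring⟩

lemma Dset_neg {n : ℕ} (hn : 2 ≤ n) (K : ℕ) : ∀ s ∈ Dset n K, -s ∈ Dset n K := by
  intro s hs
  rw [mem_Dset hn] at *
  obtain ⟨p, rfl⟩ := hs
  exact ⟨-p, by rw [← AddCircle.coe_neg]; congr 1; push_cast; ring⟩

lemma Dset_mono {n : ℕ} (hn : 2 ≤ n) : Monotone (Dset n) := by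
  refine monotone_nat_of_le_succ fun K t ht => ?_
  rw [mem_Dset hn] at *
  obtain ⟨p, rfl⟩ := ht
  refine ⟨p * n, ?_⟩
  congr 1
  have : (n : ℝ) ≠ 0 := by positivity
  push_cast
  field_simp
  ring

lemma fourier_pt_add (b : ℤ) (x t : UnitAddCircle) :
    fourier b (x + t) = fourier b x * fourier b t := by
  simp [fourier_apply, smul_add, AddCircle.toCircle_add]

lemma sum_fourier_D {n : ℕ} (hn : 2 ≤ n) (K : ℕ) (b : ℤ) (hb : ¬ ((n ^ K : ℕ) : ℤ) ∣ b) :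
    ∑ t ∈ Dset n K, fourier b t = 0 := by
  set s : UnitAddCircle := ((((1 : ℤ) : ℝ) / n ^ K : ℝ) : UnitAddCircle) with hs
  have hsD : s ∈ Dset n K := (mem_Dset hn _).2 ⟨1, rfl⟩
  have h1 : ∑ t ∈ Dset n K, fourier b t = (∑ t ∈ Dset n K, fourier b t) * fourier b s := by
    rw [Finset.sum_mul]
    simp_rw [← fourier_pt_add]
    symm
    refine Finset.sum_bij' (fun t _ => t + s) (fun t _ => t + -s)
      (fun t ht => Dset_add hn K t ht s hsD)
      (fun t ht => Dset_add hn K t ht _ (Dset_neg hn K s hsD)) (by simp) (by simp) (by simp)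
  have h2 : fourier b s ≠ 1 := by
    intro h
    rw [hs, fourier_coe_apply, Complex.exp_eq_one_iff] at h
    obtain ⟨q, hq⟩ := h
    apply hb
    refine ⟨q, ?_⟩
    have hpi : (2 * Real.pi * Complex.I : ℂ) ≠ 0 := Complex.two_pi_I_ne_zero
    have hN : (n : ℂ) ^ K ≠ 0 := by
      have : n ≠ 0 := by omega
      positivity
    have : (b : ℂ) = (n : ℂ) ^ K * q := by
      have h5 : (2 * Real.pi * Complex.I : ℂ) * (b : ℂ) = (2 * Real.pi * Complex.I : ℂ) * ((n : ℂ) ^ K * q) := by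
        push_cast at hq
        field_simp at hq
        linear_combination (2 * Real.pi * Complex.I : ℂ) * hq
      exact mul_left_cancel₀ hpi h5
    exact_mod_cast this
  have h3 : (∑ t ∈ Dset n K, fourier b t) * (fourier b s - 1) = 0 := by
    rw [mul_sub, mul_one, ← h1, sub_self]
  exact (mul_eq_zero.1 h3).resolve_right (sub_ne_zero.2 h2)

lemma norm_sum_fourier_D {n : ℕ} (hn : 2 ≤ n) (K : ℕ) (b : ℤ) :
    ‖∑ t ∈ Dset n K, fourier b t‖ ≤ if ((n ^ K : ℕ) : ℤ) ∣ b then (n : ℝ) ^ K else 0 := by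
  split_ifs with h
  · refine (norm_sum_le _ _).trans ?_
    simp only [fourier_apply, Circle.norm_coe, Finset.sum_const, nsmul_eq_mul, mul_one]
    exact_mod_cast Dset_card n K
  · rw [sum_fourier_D hn K b h, norm_zero]

lemma sq_sum_D {n : ℕ} (hn : 2 ≤ n) (K : ℕ) (b : ℕ → ℤ) (c : ℕ)
    (hc : ∀ l, ((Finset.range (n ^ K)).filter
        (fun k => ((n ^ K : ℕ) : ℤ) ∣ b k - b l)).card ≤ c) (x : UnitAddCircle) :
    ∑ t ∈ Dset n K, ‖∑ k ∈ Finset.range (n ^ K), fourier (b k) (x + t)‖ ^ 2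
      ≤ c * ((n : ℝ) ^ K) ^ 2 := by
  have h1 : ((∑ t ∈ Dset n K, ‖∑ k ∈ Finset.range (n ^ K), fourier (b k) (x + t)‖ ^ 2 : ℝ) : ℂ)
      = ∑ l ∈ Finset.range (n ^ K), ∑ k ∈ Finset.range (n ^ K), fourier (b k - b l) x *
        ∑ t ∈ Dset n K, fourier (b k - b l) t := by
    push_cast
    have : ∀ t, (‖∑ k ∈ Finset.range (n ^ K), fourier (b k) (x + t)‖ : ℂ) ^ 2
        = ∑ l ∈ Finset.range (n ^ K), ∑ k ∈ Finset.range (n ^ K),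
          fourier (b k - b l) x * fourier (b k - b l) t := by
      intro t
      rw [← Complex.mul_conj', map_sum, Finset.sum_mul_sum, Finset.sum_comm]
      refine Finset.sum_congr rfl fun l _ => Finset.sum_congr rfl fun k _ => ?_
      rw [← fourier_pt_add, sub_eq_add_neg, fourier_add, fourier_neg]
    simp_rw [this, Finset.mul_sum]
    rw [Finset.sum_comm]
    refine Finset.sum_congr rfl fun l _ => ?_
    rw [Finset.sum_comm]
  have h2 : (∑ t ∈ Dset n K, ‖∑ k ∈ Finset.range (n ^ K), fourier (b k) (x + t)‖ ^ 2 : ℝ)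
      = ‖((∑ t ∈ Dset n K, ‖∑ k ∈ Finset.range (n ^ K), fourier (b k) (x + t)‖ ^ 2 : ℝ) : ℂ)‖ := by
    rw [Complex.norm_real, Real.norm_of_nonneg]
    positivity
  rw [h2, h1]
  calc _ ≤ ∑ l ∈ Finset.range (n ^ K), ∑ k ∈ Finset.range (n ^ K),
        (if ((n ^ K : ℕ) : ℤ) ∣ b k - b l then (n : ℝ) ^ K else 0) := by
        refine (norm_sum_le _ _).trans (Finset.sum_le_sum fun l _ => ?_)
        refine (norm_sum_le _ _).trans (Finset.sum_le_sum fun k _ => ?_)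
        rw [norm_mul]
        have : ‖fourier (b k - b l) x‖ = 1 := by rw [fourier_apply, Circle.norm_coe]
        rw [this, one_mul]
        exact norm_sum_fourier_D hn K _
    _ ≤ ∑ l ∈ Finset.range (n ^ K), (c : ℝ) * (n : ℝ) ^ K := by
        refine Finset.sum_le_sum fun l _ => ?_
        rw [← Finset.sum_filter, Finset.sum_const, nsmul_eq_mul]
        gcongr
        exact hc l
    _ = _ := by
        simp; ring

lemma integral_fourier_inv (m : ℕ) (μ : Measure UnitAddCircle) [IsProbabilityMeasure μ]
    (hinv : Measure.map (fun x : UnitAddCircle => m • x) μ = μ) (a : ℤ) (k : ℕ) :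
    ∫ x, fourier (a * (m : ℤ) ^ k) x ∂μ = ∫ x, fourier a x ∂μ := by
  induction k with
  | zero => simp
  | succ k ih =>
    rw [← ih]
    conv_rhs => rw [← hinv]
    rw [integral_map]
    · refine integral_congr_ae (Filter.Eventually.of_forall fun x => ?_)
      simp only [fourier_apply]
      congr 2
      rw [← natCast_zsmul, smul_smul, pow_succ, mul_assoc]
    · exact (continuous_id.nsmul m).measurable.aemeasurable
    · exact (fourier _).continuous.aestronglyMeasurable

lemma eq_volume_of_fourier (μ : Measure UnitAddCircle) [IsProbabilityMeasure μ]
    (h : ∀ a : ℤ, a ≠ 0 → ∫ x, fourier a x ∂μ = 0) : μ = volume := by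
  haveI : IsProbabilityMeasure (volume : Measure UnitAddCircle) := ⟨UnitAddCircle.measure_univ⟩
  have hv : ∀ a : ℤ, a ≠ 0 → ∫ x : UnitAddCircle, fourier a x = 0 := by
    intro a ha
    set I := ∫ x : UnitAddCircle, fourier a x with hI
    have hx : ∃ s : UnitAddCircle, fourier a s ≠ 1 := by
      refine ⟨((1 / (2 * a) : ℝ) : UnitAddCircle), ?_⟩
      rw [fourier_coe_apply]
      have ha' : (a : ℂ) ≠ 0 := by exact_mod_cast ha
      have : (2 * Real.pi * Complex.I * a * ((1 / (2 * a) : ℝ) : ℂ) / (1 : ℝ) : ℂ) = Real.pi * Complex.I := by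
        push_cast
        field_simp
      rw [this, Complex.exp_pi_mul_I]
      norm_num
    obtain ⟨s, hs⟩ := hx
    have h1 : I = I * fourier a s := by
      conv_lhs => rw [hI, ← integral_add_right_eq_self _ s]
      simp_rw [fourier_pt_add]
      rw [integral_mul_const]
    have h3 : I * (fourier a s - 1) = 0 := by
      rw [mul_sub, mul_one, ← h1, sub_self]
    exact (mul_eq_zero.1 h3).resolve_right (sub_ne_zero.2 hs)
  have hint : ∀ (ν : Measure UnitAddCircle) [IsProbabilityMeasure ν] (f : C(UnitAddCircle, ℂ)),
      Integrable f ν := by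
    intro ν _ f
    exact f.continuous.integrable_of_hasCompactSupport (HasCompactSupport.of_compactSpace _)
  have key : ∀ f : C(UnitAddCircle, ℂ), ∫ x, f x ∂μ = ∫ x, f x := by
    intro f
    have hmem : f ∈ (Submodule.span ℂ (Set.range <| @fourier 1)).topologicalClosure := by
      rw [span_fourier_closure_eq_top]; trivial
    have hcont : ∀ (ν : Measure UnitAddCircle) [IsProbabilityMeasure ν],
        Continuous (fun f : C(UnitAddCircle, ℂ) => ∫ x, f x ∂ν) := by
      intro ν _
      refine (LipschitzWith.of_dist_le_mul (K := 1) fun f g => ?_).continuous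
      rw [dist_eq_norm, dist_eq_norm, ← integral_sub (hint ν f) (hint ν g)]
      refine (norm_integral_le_of_norm_le_const (C := ‖f - g‖)
        (Filter.Eventually.of_forall fun x => (f - g).norm_coe_le_norm x)).trans ?_
      simp
    refine closure_minimal (s := (Submodule.span ℂ (Set.range <| @fourier 1) : Set C(UnitAddCircle, ℂ)))
      (t := {f | ∫ x, f x ∂μ = ∫ x, f x}) ?_ (isClosed_eq (hcont μ) (hcont volume)) hmem
    intro g hg
    induction hg using Submodule.span_induction with
    | mem g hg =>
      obtain ⟨a, rfl⟩ := hg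
      show ∫ x, fourier a x ∂μ = ∫ x, fourier a x
      by_cases ha : a = 0
      · subst ha; simp
      · rw [h a ha, hv a ha]
    | zero => simp
    | add f g _ _ hf hg =>
      have hf' : ∫ x, f x ∂μ = ∫ x, f x := hf
      have hg' : ∫ x, g x ∂μ = ∫ x, g x := hg
      show ∫ x, (f x + g x) ∂μ = ∫ x, (f x + g x)
      rw [integral_add (hint μ f) (hint μ g), integral_add (hint volume f) (hint volume g), hf', hg']
    | smul c f _ hf =>
      have hf' : ∫ x, f x ∂μ = ∫ x, f x := hf
      show ∫ x, (c • f x) ∂μ = ∫ x, (c • f x)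
      rw [integral_smul, integral_smul, hf']
  refine ext_of_forall_integral_eq_of_IsFiniteMeasure fun f => ?_
  have := key ⟨fun x => (f x : ℂ), Complex.continuous_ofReal.comp f.continuous⟩
  simp only [ContinuousMap.coe_mk] at this
  rw [integral_complex_ofReal, integral_complex_ofReal] at this
  exact_mod_cast this

lemma fourier_vanish (m n : ℕ) (hm : 2 ≤ m) (hn : 2 ≤ n) (hmn : Nat.Coprime m n)
    (μ : Measure UnitAddCircle) [IsProbabilityMeasure μ]
    (hinv : Measure.map (fun x : UnitAddCircle => m • x) μ = μ)
    (hrec : NnRecurrent n μ) (a : ℤ) (ha : a ≠ 0) : ∫ x, fourier a x ∂μ = 0 := by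
  obtain ⟨c, hc⟩ := nt_count m n hm hn hmn a ha
  have hU : (⋃ K, (Dset n K : Set UnitAddCircle)) = nAdicRationals n := by
    ext t
    simp only [Set.mem_iUnion, Finset.mem_coe, mem_Dset hn]
    rfl
  have hlim := rn_tendsto (Dset n) (Dset_mono hn) (Dset_zero hn) (Dset_add hn) (Dset_neg hn) μ
    (by rw [hU]; exact hrec)
  have bound : ∀ (δ : NNReal), 0 < δ → ∀ K, ‖∫ x, fourier a x ∂μ‖ₑ ≤
      (δ : ℝ≥0∞) * (1 + c) + μ {x | (δ : ℝ≥0∞) ^ 2 ≤ μ.rnDeriv (muD (Dset n K) μ) x} := by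
    intro δ hδ K
    set ν := muD (Dset n K) μ with hν
    have hac : μ ≪ ν := Measure.absolutelyContinuous_of_le (muD_zero_mem (Dset_zero hn K) μ)
    set f := μ.rnDeriv ν with hf
    have hfm : Measurable f := Measure.measurable_rnDeriv _ _
    set E : Set UnitAddCircle := {x | (δ : ℝ≥0∞) ^ 2 ≤ f x} with hE
    have hEm : MeasurableSet E := measurableSet_le measurable_const hfm
    have hNpos : (0 : ℝ) < (n : ℝ) ^ K := by positivity
    set S : UnitAddCircle → ℂ := fun x =>
      ∑ k ∈ Finset.range (n ^ K), fourier (a * (m : ℤ) ^ k) x with hS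
    have hScont : Continuous S := by
      rw [hS]
      exact continuous_finsetSum _ fun k _ => (fourier _).continuous
    set A : UnitAddCircle → ℂ := fun x => ((((n : ℝ) ^ K)⁻¹ : ℝ) : ℂ) * S x with hA
    have hAcont : Continuous A := continuous_const.mul hScont
    have hAint : ∫ x, A x ∂μ = ∫ x, fourier a x ∂μ := by
      simp only [hA, hS]
      rw [integral_const_mul, integral_finsetSum]
      · simp_rw [integral_fourier_inv m μ hinv a]
        rw [Finset.sum_const, Finset.card_range, nsmul_eq_mul, ← mul_assoc]
        have : ((((n : ℝ) ^ K)⁻¹ : ℝ) : ℂ) * ((n ^ K : ℕ) : ℂ) = 1 := by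
          push_cast
          refine inv_mul_cancel₀ ?_
          exact_mod_cast hNpos.ne'
        rw [this, one_mul]
      · intro k _
        exact (fourier _).continuous.integrable_of_hasCompactSupport
          (HasCompactSupport.of_compactSpace _)
    have hA1 : ∀ x, ‖A x‖ ≤ 1 := by
      intro x
      simp only [hA, hS]
      rw [norm_mul, Complex.norm_real, Real.norm_of_nonneg (by positivity), inv_mul_le_iff₀ hNpos]
      refine (norm_sum_le _ _).trans ?_
      simp only [fourier_apply, Circle.norm_coe, Finset.sum_const, nsmul_eq_mul, mul_one,
        Finset.card_range]
      push_cast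
      exact le_rfl
    set g : UnitAddCircle → ℝ≥0∞ := fun x => ‖A x‖ₑ with hg
    have hgm : Measurable g := hAcont.measurable.enorm
    have hg1 : ∀ x, g x ≤ 1 := by
      intro x
      simp only [hg]
      rw [← ofReal_norm_eq_enorm]
      exact ENNReal.ofReal_le_one.2 (hA1 x)
    have hgsq : ∫⁻ x, g x ^ 2 ∂ν ≤ c := by
      rw [hν, lintegral_muD _ _ (hgm.pow_const 2), ← lintegral_finsetSum]
      · calc _ ≤ ∫⁻ x, (c : ℝ≥0∞) ∂μ := by
              refine lintegral_mono fun x => ?_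
              have h1 := sq_sum_D hn K (fun k => a * (m : ℤ) ^ k) c (hc K) x
              have h2 : ∀ t, g (x + t) ^ 2 = ENNReal.ofReal (‖A (x + t)‖ ^ 2) := by
                intro t
                simp only [hg]
                rw [← ofReal_norm_eq_enorm, ENNReal.ofReal_pow (norm_nonneg _)]
              simp_rw [h2]
              rw [← ENNReal.ofReal_sum_of_nonneg (fun _ _ => by positivity)]
              rw [← ENNReal.ofReal_natCast]
              refine ENNReal.ofReal_le_ofReal ?_
              have h3 : ∀ t, ‖A (x + t)‖ ^ 2 = (((n : ℝ) ^ K)⁻¹) ^ 2 * ‖S (x + t)‖ ^ 2 := by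
                intro t
                simp only [hA]
                rw [norm_mul, Complex.norm_real, Real.norm_of_nonneg (by positivity), mul_pow]
              simp_rw [h3]
              rw [← Finset.mul_sum]
              calc _ ≤ (((n : ℝ) ^ K)⁻¹) ^ 2 * (c * ((n : ℝ) ^ K) ^ 2) :=
                    mul_le_mul_of_nonneg_left h1 (by positivity)
                _ = c := by field_simp
          _ = c := by simp
      · intro t _
        exact (hgm.pow_const 2).comp (measurable_add_const t)
    have hpt : ∀ x, g x ≤ (δ : ℝ≥0∞) + (δ : ℝ≥0∞)⁻¹ * Eᶜ.indicator (fun x => g x ^ 2) x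
        + E.indicator 1 x := by
      intro x
      have hδ0 : (δ : ℝ≥0∞) ≠ 0 := by exact_mod_cast hδ.ne'
      by_cases hx : x ∈ E
      · simp only [hx, Set.indicator_of_mem, Pi.one_apply]
        exact (hg1 x).trans le_add_self
      · have hx' : x ∈ Eᶜ := hx
        rw [Set.indicator_of_mem hx', Set.indicator_of_notMem hx, add_zero]
        rcases le_total (g x) δ with h | h
        · exact h.trans le_self_add
        · refine le_trans ?_ le_add_self
          calc g x = (δ : ℝ≥0∞)⁻¹ * (δ * g x) := by
                rw [← mul_assoc, ENNReal.inv_mul_cancel hδ0 ENNReal.coe_ne_top, one_mul]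
            _ ≤ (δ : ℝ≥0∞)⁻¹ * g x ^ 2 := by
                rw [sq]; gcongr
    have hmid : ∫⁻ x, Eᶜ.indicator (fun x => g x ^ 2) x ∂μ ≤ (δ : ℝ≥0∞) ^ 2 * c := by
      have hm1 : Measurable (Eᶜ.indicator (fun x => g x ^ 2)) := (hgm.pow_const 2).indicator hEm.compl
      rw [← lintegral_rnDeriv_mul hac hm1.aemeasurable]
      calc _ ≤ ∫⁻ x, (δ : ℝ≥0∞) ^ 2 * g x ^ 2 ∂ν := by
            refine lintegral_mono fun x => ?_
            by_cases hx : x ∈ E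
            · have hx' : x ∉ Eᶜ := fun h => h hx
              simp only [Set.indicator_of_notMem hx', mul_zero]
              exact zero_le
            · have hx' : x ∈ Eᶜ := hx
              simp only [Set.indicator_of_mem hx']
              have : f x ≤ (δ : ℝ≥0∞) ^ 2 := (not_le.1 hx).le
              gcongr
        _ = (δ : ℝ≥0∞) ^ 2 * ∫⁻ x, g x ^ 2 ∂ν := lintegral_const_mul _ (hgm.pow_const 2)
        _ ≤ _ := by gcongr
    have hδ0 : (δ : ℝ≥0∞) ≠ 0 := by exact_mod_cast hδ.ne'
    have hm1 : Measurable (Eᶜ.indicator (fun x => g x ^ 2)) := (hgm.pow_const 2).indicator hEm.compl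
    rw [← hAint]
    calc ‖∫ x, A x ∂μ‖ₑ ≤ ∫⁻ x, g x ∂μ := enorm_integral_le_lintegral_enorm _
      _ ≤ ∫⁻ x, ((δ : ℝ≥0∞) + (δ : ℝ≥0∞)⁻¹ * Eᶜ.indicator (fun x => g x ^ 2) x
        + E.indicator 1 x) ∂μ := lintegral_mono hpt
      _ = δ + (δ : ℝ≥0∞)⁻¹ * ∫⁻ x, Eᶜ.indicator (fun x => g x ^ 2) x ∂μ + μ E := by
        rw [lintegral_add_right _ (measurable_one.indicator hEm), lintegral_indicator_one hEm,
          lintegral_add_left measurable_const, lintegral_const_mul _ hm1]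
        simp
      _ ≤ δ + (δ : ℝ≥0∞)⁻¹ * ((δ : ℝ≥0∞) ^ 2 * c) + μ E := by gcongr
      _ = (δ : ℝ≥0∞) * (1 + c) + μ E := by
        rw [sq, mul_assoc, ← mul_assoc _ (δ : ℝ≥0∞) ((δ : ℝ≥0∞) * c),
          ENNReal.inv_mul_cancel hδ0 ENNReal.coe_ne_top, one_mul, mul_add, mul_one]
  have bound2 : ∀ (δ : NNReal), 0 < δ → ‖∫ x, fourier a x ∂μ‖ₑ ≤ (δ : ℝ≥0∞) * (1 + c) := by
    intro δ hδ
    have h1 := hlim ((δ : ℝ≥0∞) ^ 2) (pow_ne_zero 2 (by exact_mod_cast hδ.ne'))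
    have h2 := h1.const_add ((δ : ℝ≥0∞) * (1 + c))
    rw [add_zero] at h2
    exact ge_of_tendsto' h2 (bound δ hδ)
  by_contra hne
  have hpos : 0 < ‖∫ x, fourier a x ∂μ‖₊ := nnnorm_pos.2 hne
  have h3 := bound2 (‖∫ x, fourier a x ∂μ‖₊ / (2 * (1 + c))) (by positivity)
  rw [enorm_eq_nnnorm] at h3
  have h4 : ‖∫ x, fourier a x ∂μ‖₊ ≤ (‖∫ x, fourier a x ∂μ‖₊ / (2 * (1 + c))) * (1 + c) := by
    exact_mod_cast h3
  have h5 : (‖∫ x, fourier a x ∂μ‖₊ / (2 * (1 + c))) * (1 + c) = ‖∫ x, fourier a x ∂μ‖₊ / 2 := by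
    have : (1 + (c : NNReal)) ≠ 0 := by positivity
    field_simp
  rw [h5] at h4
  exact absurd (NNReal.half_lt_self hpos.ne') (not_lt.2 h4)

/-- Host: Let `m` and `n` be relatively prime integers, each at least 2.
If `μ` is a Borel probability measure on `𝕋` invariant under `×m` and `N_n`-recurrent,
then `μ` is Lebesgue measure on `𝕋`. -/
theorem host_times_m_invariant_Nn_recurrent
    (m n : ℕ) (hm : 2 ≤ m) (hn : 2 ≤ n) (hmn : Nat.Coprime m n)
    (μ : Measure UnitAddCircle) [IsProbabilityMeasure μ]
    (hinv : Measure.map (fun x : UnitAddCircle => m • x) μ = μ)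
    (hrec : NnRecurrent n μ) :
    μ = volume :=
  eq_volume_of_fourier μ (fourier_vanish m n hm hn hmn μ hinv hrec)
end

section
/- Let n ≥ 2 and let μ be a Borel probability measure on 𝕋 invariant under ×n such that almost every ergodic component of μ with respect to ×n has positive measure-theoretic entropy. Then μ is N_n-recurrent. -/
open MeasureTheory ENNReal

section Entropy

variable {α : Type*} [MeasurableSpace α]

/-- `P : Fin m → Set α` is a finite measurable partition of `α` modulo `μ`-null sets. -/
def IsFinMeasPartition (μ : Measure α) {m : ℕ} (P : Fin m → Set α) : Prop :=
  (∀ i, MeasurableSet (P i)) ∧ Pairwise (Function.onFun Disjoint P) ∧ μ (⋃ i, P i)ᶜ = 0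

/-- Shannon entropy (information) of a finite family of sets with respect to `μ`. -/
noncomputable def finPartitionEntropy (μ : Measure α) {ι : Type*} [Fintype ι]
    (P : ι → Set α) : ℝ≥0∞ :=
  ENNReal.ofReal (∑ i, Real.negMulLog ((μ (P i)).toReal))

/-- The common refinement `P ∨ T⁻¹ P ∨ ⋯ ∨ T^{-(n-1)} P`, indexed by `Fin n → Fin m`. -/
def refinedPartition (T : α → α) {m : ℕ} (P : Fin m → Set α) (n : ℕ) :
    (Fin n → Fin m) → Set α :=
  fun f => ⋂ i : Fin n, T^[(i : ℕ)] ⁻¹' P (f i)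

/-- The measure-theoretic (Kolmogorov–Sinai) entropy `h_μ(T)` of a transformation `T`
preserving `μ`, defined as the supremum over all finite measurable partitions `P` of
`inf_n H_μ(P ∨ T⁻¹P ∨ ⋯ ∨ T^{-n}P)/(n+1)` (by subadditivity this infimum equals the
usual limit). -/
noncomputable def ksEntropy (T : α → α) (μ : Measure α) : ℝ≥0∞ :=
  ⨆ (m : ℕ) (P : Fin m → Set α) (_ : IsFinMeasPartition μ P),
    ⨅ n : ℕ, finPartitionEntropy μ (refinedPartition T P (n + 1)) / (n + 1 : ℝ≥0∞)

end Entropy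

open MeasureTheory

section HostEntropy
open Finset

/-- entropy of a finite-valued function -/
noncomputable def Hfun {Ω : Type*} [MeasurableSpace Ω] (ρ : Measure Ω) {ι : Type*} [Fintype ι]
    (X : Ω → ι) : ℝ := ∑ a, Real.negMulLog (ρ.real (X ⁻¹' {a}))

variable {Ω : Type*} [MeasurableSpace Ω]

lemma real_preimage_eq_sum (ρ : Measure Ω) [IsProbabilityMeasure ρ] {ι κ : Type*}
    [Fintype κ] [MeasurableSpace κ] [MeasurableSingletonClass κ] [DecidableEq ι]
    (Z : Ω → κ) (hZ : Measurable Z) (g : κ → ι) (a : ι) :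
    ρ.real ((fun x => g (Z x)) ⁻¹' {a}) = ∑ b with g b = a, ρ.real (Z ⁻¹' {b}) := by
  have h : (fun x => g (Z x)) ⁻¹' {a} = ⋃ b ∈ (univ.filter (fun b => g b = a)), Z ⁻¹' {b} := by
    ext x; simp
  rw [h, measureReal_biUnion_finset]
  · intro b _ c _ hbc
    exact Disjoint.preimage _ (by simpa using hbc)
  · intro b _
    exact hZ (measurableSet_singleton b)

lemma Hfun_comp_le (ρ : Measure Ω) [IsProbabilityMeasure ρ] {ι κ : Type*} [Fintype ι]
    [Fintype κ] [MeasurableSpace κ] [MeasurableSingletonClass κ]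
    (Z : Ω → κ) (hZ : Measurable Z) (g : κ → ι) :
    Hfun ρ (fun x => g (Z x)) ≤ Hfun ρ Z := by
  classical
  unfold Hfun
  rw [← Finset.sum_fiberwise (s := univ) (g := g) (f := fun b => Real.negMulLog (ρ.real (Z ⁻¹' {b})))]
  apply Finset.sum_le_sum
  intro a _
  rw [real_preimage_eq_sum ρ Z hZ g a]
  set P := ∑ b with g b = a, ρ.real (Z ⁻¹' {b}) with hP
  rw [Real.negMulLog, neg_mul, ← mul_neg]
  conv_lhs => rw [hP, Finset.sum_mul]
  apply Finset.sum_le_sum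
  intro b hb
  rw [Real.negMulLog, neg_mul, ← mul_neg]
  rcases (measureReal_nonneg (μ := ρ) (s := Z ⁻¹' {b})).eq_or_lt with h0 | h0
  · rw [← h0]; simp
  · apply mul_le_mul_of_nonneg_left _ h0.le
    apply neg_le_neg
    apply Real.log_le_log h0
    exact Finset.single_le_sum (f := fun b => ρ.real (Z ⁻¹' {b})) (fun _ _ => measureReal_nonneg) hb

lemma Hfun_pair_le (ρ : Measure Ω) [IsProbabilityMeasure ρ] {ι κ : Type*} [Fintype ι]
    [MeasurableSpace ι] [MeasurableSingletonClass ι]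
    [Fintype κ] [MeasurableSpace κ] [MeasurableSingletonClass κ]
    (X : Ω → ι) (hX : Measurable X) (Y : Ω → κ) (hY : Measurable Y) (G : κ → ι)
    (δ : ℝ) (hδ : 0 < δ) (hδ1 : δ < 1) (herr : ρ.real {x | X x ≠ G (Y x)} ≤ δ) :
    Hfun ρ (fun x => (X x, Y x)) ≤ Hfun ρ Y +
      (-Real.log (1 - δ) + δ * Real.log (Fintype.card ι) + Real.negMulLog δ) := by
  classical
  set p : ι × κ → ℝ := fun z => ρ.real ((fun x => (X x, Y x)) ⁻¹' {z}) with hp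
  have hZ : Measurable (fun x => (X x, Y x)) := hX.prodMk hY
  have hp0 : ∀ z, 0 ≤ p z := fun z => measureReal_nonneg
  have hne : Nonempty ι := by
    obtain ⟨x⟩ : Nonempty Ω := nonempty_of_isProbabilityMeasure ρ
    exact ⟨X x⟩
  set s : ℝ := (Fintype.card ι : ℝ) with hs
  have hs1 : 1 ≤ s := by
    rw [hs]; exact_mod_cast Fintype.card_pos
  set r : ι × κ → ℝ := fun z => if z.1 = G z.2 then 1 - δ else δ / s with hr
  have hr0 : ∀ z, 0 < r z := by
    intro z; simp only [hr]; split_ifs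
    · linarith
    · positivity
  set pY : κ → ℝ := fun b => ρ.real (Y ⁻¹' {b}) with hpY
  have hpYsum : ∀ b, pY b = ∑ a, p (a, b) := by
    intro b
    have := real_preimage_eq_sum ρ _ hZ (Prod.snd) b
    simp only [hpY]
    rw [show Y ⁻¹' {b} = (fun x => (X x, Y x).2) ⁻¹' {b} from rfl, this]
    refine Eq.trans ?_ (Finset.sum_map univ
      (⟨fun a => (a, b), fun _ _ h => by simpa using h⟩ : ι ↪ ι × κ) p)
    apply Finset.sum_congr _ (fun _ _ => rfl)
    ext ⟨a, c⟩
    simp only [mem_filter, mem_univ, true_and, mem_map]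
    constructor
    · rintro rfl; exact ⟨a, rfl⟩
    · rintro ⟨_, h⟩; exact (congrArg Prod.snd h).symm
  have hple : ∀ z, p z ≤ pY z.2 := by
    rintro ⟨a, b⟩
    rw [hpYsum]
    exact Finset.single_le_sum (f := fun a => p (a, b)) (fun _ _ => hp0 _) (mem_univ a)
  have hptot : ∑ z, p z = 1 := by
    have := real_preimage_eq_sum ρ _ hZ (fun _ => ()) ()
    simpa using this.symm
  have hterm : ∀ z, Real.negMulLog (p z) ≤
      p z * (-Real.log (pY z.2)) + p z * (-Real.log (r z)) + (pY z.2 * r z - p z) := by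
    intro z
    rcases (hp0 z).eq_or_lt with h0 | h0
    · rw [← h0]; simp
      exact mul_nonneg measureReal_nonneg (hr0 z).le
    · have hy : 0 < pY z.2 := h0.trans_le (hple z)
      have h1 := Real.log_le_sub_one_of_pos (x := pY z.2 * r z / p z) (by have := hr0 z; positivity)
      rw [Real.log_div (by have := hr0 z; positivity) h0.ne', Real.log_mul hy.ne' (hr0 z).ne'] at h1
      have h2 := mul_le_mul_of_nonneg_left h1 h0.le
      have h3 : p z * (pY z.2 * r z / p z - 1) = pY z.2 * r z - p z := by
        field_simp
      rw [h3] at h2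
      rw [Real.negMulLog]; linarith
  have hsum1 : ∑ z, p z * (-Real.log (pY z.2)) = Hfun ρ Y := by
    rw [Fintype.sum_prod_type_right]
    unfold Hfun
    apply Finset.sum_congr rfl
    intro b _
    simp only
    rw [← Finset.sum_mul, ← hpYsum, Real.negMulLog]; simp only [hpY]; ring
  have hsum3 : ∑ z, pY z.2 * r z ≤ 1 := by
    have hYtot : ∑ b, pY b = 1 := by
      have := real_preimage_eq_sum ρ _ hY (fun _ => ()) ()
      simpa using this.symm
    rw [← hYtot, Fintype.sum_prod_type_right]
    apply Finset.sum_le_sum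
    intro b _
    simp only
    rw [← Finset.mul_sum]
    have : ∑ a, r (a, b) ≤ 1 := by
      calc ∑ a, r (a, b) ≤ ∑ a, ((if a = G b then 1 - δ else 0) + δ / s) := by
            apply Finset.sum_le_sum
            intro a _
            simp only [hr]
            split_ifs
            · have : 0 < δ / s := by positivity
              linarith
            · linarith
        _ = 1 := by
            rw [Finset.sum_add_distrib]
            simp
            rw [← hs]; field_simp; ring
    have h0 : 0 ≤ pY b := measureReal_nonneg
    nlinarith
  have hsum2 : ∑ z, p z * (-Real.log (r z)) ≤
      -Real.log (1 - δ) + δ * Real.log s + Real.negMulLog δ := by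
    have hl1 : 0 ≤ -Real.log (1 - δ) := by
      have := Real.log_nonpos (x := 1 - δ) (by linarith) (by linarith)
      linarith
    have hl2 : 0 ≤ -Real.log (δ / s) := by
      have := Real.log_nonpos (x := δ / s) (by positivity) (by rw [div_le_one (by linarith)]; linarith)
      linarith
    have hE : ∑ z with ¬ (z.1 = G z.2), p z ≤ δ := by
      have := real_preimage_eq_sum ρ _ hZ (fun z => decide (z.1 = G z.2)) false
      simp only [decide_eq_false_iff_not] at this
      rw [← this]
      refine le_trans (le_of_eq ?_) herr
      congr 1; ext x; simp
    calc ∑ z, p z * (-Real.log (r z)) ≤ ∑ z, (p z * (-Real.log (1 - δ)) +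
          (if ¬ (z.1 = G z.2) then p z else 0) * (-Real.log (δ / s))) := by
          apply Finset.sum_le_sum
          intro z _
          simp only [hr]
          have := hp0 z
          split_ifs
          · simp
          · have := mul_nonneg (hp0 z) hl1
            linarith
      _ = -Real.log (1 - δ) + (∑ z with ¬ (z.1 = G z.2), p z) * (-Real.log (δ / s)) := by
          rw [Finset.sum_add_distrib, ← Finset.sum_mul, hptot, ← Finset.sum_mul, ← Finset.sum_filter]
          ring
      _ ≤ -Real.log (1 - δ) + δ * (-Real.log (δ / s)) := by gcongr
      _ = _ := by
          rw [Real.log_div hδ.ne' (by linarith), Real.negMulLog]; ring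
  calc Hfun ρ (fun x => (X x, Y x)) = ∑ z, Real.negMulLog (p z) := rfl
    _ ≤ ∑ z, (p z * (-Real.log (pY z.2)) + p z * (-Real.log (r z)) + (pY z.2 * r z - p z)) :=
        Finset.sum_le_sum (fun z _ => hterm z)
    _ = ∑ z, p z * (-Real.log (pY z.2)) + ∑ z, p z * (-Real.log (r z)) +
        (∑ z, pY z.2 * r z - ∑ z, p z) := by
        rw [Finset.sum_add_distrib, Finset.sum_add_distrib, Finset.sum_sub_distrib]
    _ ≤ _ := by rw [hsum1, hptot]; linarith

lemma Hfun_iterate_succ_le {ρ : Measure Ω} [IsProbabilityMeasure ρ] {T : Ω → Ω}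
    (hT : MeasurePreserving T ρ ρ) {ι : Type*} [Fintype ι] [MeasurableSpace ι]
    [MeasurableSingletonClass ι] (q : Ω → ι) (hq : Measurable q)
    (K : ℕ) (F : (Fin K → ι) → ι) (δ : ℝ) (hδ : 0 < δ) (hδ1 : δ < 1)
    (herr : ρ.real {x | q x ≠ F (fun i => q (T^[(i : ℕ) + 1] x))} ≤ δ) (N : ℕ) (hN : K ≤ N) :
    Hfun ρ (fun x (i : Fin (N + 1)) => q (T^[(i : ℕ)] x)) ≤
    Hfun ρ (fun x (i : Fin N) => q (T^[(i : ℕ)] x)) +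
      (-Real.log (1 - δ) + δ * Real.log (Fintype.card ι) + Real.negMulLog δ) := by
  have hTi : ∀ i, Measurable (T^[i]) := fun i => hT.measurable.iterate i
  set W : Ω → (Fin N → ι) := fun x i => q (T^[(i : ℕ)] x) with hW
  have hWm : Measurable W := measurable_pi_lambda _ (fun i => hq.comp (hTi i))
  have h1 := Hfun_pair_le ρ q hq (fun x => W (T x)) (hWm.comp hT.measurable)
    (fun w => F (fun i => w (Fin.castLE hN i))) δ hδ hδ1 (by
      simpa [hW] using herr)
  have h2 : Hfun ρ (fun x => W (T x)) = Hfun ρ W := by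
    unfold Hfun
    apply Finset.sum_congr rfl
    intro a _
    congr 1
    have := hT.measureReal_preimage (s := W ⁻¹' {a}) (hWm (measurableSet_singleton a)).nullMeasurableSet
    exact this
  rw [h2] at h1
  refine le_trans ?_ h1
  have h3 := Hfun_comp_le ρ (fun x => (q x, W (T x))) (hq.prodMk (hWm.comp hT.measurable))
    (fun z => (Fin.cons z.1 z.2 : Fin (N + 1) → ι))
  refine le_trans (le_of_eq ?_) h3
  congr 1
  funext x i
  refine Fin.cases ?_ (fun j => ?_) i
  · simp
  · simp [hW]

lemma exists_small_delta (s : ℝ) (ε : ℝ) (hε : 0 < ε) : ∃ δ : ℝ, 0 < δ ∧ δ < 1 ∧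
    (-Real.log (1 - δ) + δ * Real.log s + Real.negMulLog δ) < ε := by
  have hc : ContinuousAt (fun δ : ℝ => -Real.log (1 - δ) + δ * Real.log s + Real.negMulLog δ) 0 := by
    refine ContinuousAt.add (ContinuousAt.add (ContinuousAt.neg ?_) (by fun_prop))
      Real.continuous_negMulLog.continuousAt
    exact ContinuousAt.log (by fun_prop) (by norm_num)
  have h := hc.eventually_lt (f := fun δ : ℝ => -Real.log (1 - δ) + δ * Real.log s + Real.negMulLog δ)
    (g := fun _ => ε) continuousAt_const (by simpa using hε)
  have h1 : ∀ᶠ δ : ℝ in nhds 0, δ < 1 := eventually_lt_nhds (by norm_num)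
  have h2 := (h.and h1).filter_mono (nhdsWithin_le_nhds (s := Set.Ioi 0))
  obtain ⟨δ, ⟨ha, hb⟩, hc⟩ := (h2.and self_mem_nhdsWithin).exists
  exact ⟨δ, hc, hb, ha⟩

lemma entropy_rate_zero {ρ : Measure Ω} [IsProbabilityMeasure ρ] {T : Ω → Ω}
    (hT : MeasurePreserving T ρ ρ) {ι : Type*} [Fintype ι] [MeasurableSpace ι]
    [MeasurableSingletonClass ι] (q : Ω → ι) (hq : Measurable q)
    (hpred : ∀ δ : ℝ, 0 < δ → ∃ (K : ℕ) (F : (Fin K → ι) → ι),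
      ρ.real {x | q x ≠ F (fun i => q (T^[(i : ℕ) + 1] x))} ≤ δ) (ε : ℝ) (hε : 0 < ε) :
    ∃ N : ℕ, Hfun ρ (fun x (i : Fin (N + 1)) => q (T^[(i : ℕ)] x)) ≤ (N + 1) * ε := by
  obtain ⟨δ, hδ, hδ1, hlt⟩ := exists_small_delta (Fintype.card ι) (ε / 2) (by linarith)
  obtain ⟨K, F, hF⟩ := hpred δ hδ
  set H : ℕ → ℝ := fun N => Hfun ρ (fun x (i : Fin N) => q (T^[(i : ℕ)] x)) with hH
  have hstep : ∀ M, H (K + M) ≤ H K + M * (ε / 2) := by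
    intro M
    induction M with
    | zero => simp
    | succ M ih =>
      have := Hfun_iterate_succ_le hT q hq K F δ hδ hδ1 hF (K + M) (by omega)
      change H (K + M + 1) ≤ H (K + M) + _ at this
      rw [← add_assoc]; push_cast; linarith
  obtain ⟨M, hM⟩ := exists_nat_ge (H K / (ε / 2))
  rw [div_le_iff₀ (by linarith)] at hM
  refine ⟨K + M, ?_⟩
  have := hstep (M + 1)
  change H (K + M + 1) ≤ _
  rw [← add_assoc] at this
  push_cast at this ⊢
  have hK : (0 : ℝ) ≤ K := by positivity
  nlinarith [mul_nonneg hK hε.le]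

lemma ksEntropy_eq_zero {ρ : Measure Ω} [IsProbabilityMeasure ρ] {T : Ω → Ω}
    (hT : MeasurePreserving T ρ ρ) {n : ℕ} (d : Ω → Fin n) (hd : Measurable d)
    (hpred : ∀ (m : ℕ) (p : Ω → Fin m), Measurable p → ∀ δ : ℝ, 0 < δ →
      ∃ (K : ℕ) (F : (Fin K → Fin n) → Fin m × Fin n),
      ρ.real {x | (p x, d x) ≠ F (fun i => d (T^[(i : ℕ) + 1] x))} ≤ δ) :
    ksEntropy T ρ = 0 := by
  unfold ksEntropy
  rw [← nonpos_iff_eq_zero]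
  refine iSup_le fun m => iSup_le fun P => iSup_le fun hP => ?_
  obtain ⟨hPm, hPd, hPc⟩ := hP
  -- label function
  have hex : ∃ p : Ω → Fin m, Measurable p ∧ ∀ᵐ x ∂ρ, ∀ i, x ∈ P i ↔ p x = i := by
    have hm : 0 < m := by
      rcases Nat.eq_zero_or_pos m with rfl | h
      · simp at hPc
      · exact h
    classical
    set p : Ω → Fin m := fun x => if h : ∃ i, x ∈ P i then h.choose else ⟨0, hm⟩ with hp
    have hpi : ∀ x i, x ∈ P i → p x = i := by
      intro x i hx
      have h : ∃ i, x ∈ P i := ⟨i, hx⟩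
      simp only [hp, dif_pos h]
      by_contra hne
      exact Set.disjoint_left.1 (hPd hne) h.choose_spec hx
    refine ⟨p, ?_, ?_⟩
    · apply measurable_to_countable'
      intro i
      have : p ⁻¹' {i} = P i ∪ (if i = ⟨0, hm⟩ then (⋃ i, P i)ᶜ else ∅) := by
        ext x
        by_cases h : ∃ i, x ∈ P i
        · obtain ⟨j, hj⟩ := h
          have := hpi x j hj
          have hx : x ∉ (if i = ⟨0, hm⟩ then (⋃ i, P i)ᶜ else ∅) := by
            split_ifs
            · simp; exact ⟨j, hj⟩
            · simp
          simp only [Set.mem_preimage, Set.mem_singleton_iff, Set.mem_union, hx, or_false]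
          constructor
          · rintro rfl; rw [this]; exact hj
          · exact hpi x i
        · have h1 : x ∉ P i := fun hx => h ⟨i, hx⟩
          have h2 : p x = ⟨0, hm⟩ := by simp only [hp, dif_neg h]
          simp only [Set.mem_preimage, h2, Set.mem_singleton_iff, Set.mem_union, h1, false_or]
          push Not at h
          split_ifs with h3
          · simp [h3, h]
          · simp [Ne.symm h3]
      rw [this]
      refine (hPm i).union ?_
      split_ifs
      · exact (MeasurableSet.iUnion hPm).compl
      · exact MeasurableSet.empty
    · have : ∀ᵐ x ∂ρ, x ∈ ⋃ i, P i := by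
        rw [ae_iff]; exact hPc
      filter_upwards [this] with x hx i
      obtain ⟨j, hj⟩ := Set.mem_iUnion.1 hx
      constructor
      · exact hpi x i
      · intro h; rw [← h, hpi x j hj]; exact hj
  obtain ⟨p, hpm, hpP⟩ := hex
  have hTi : ∀ i, MeasurePreserving (T^[i]) ρ ρ := fun i => hT.iterate i
  have hHeq : ∀ N, finPartitionEntropy ρ (refinedPartition T P N) =
      ENNReal.ofReal (Hfun ρ (fun x (i : Fin N) => p (T^[(i : ℕ)] x))) := by
    intro N
    unfold finPartitionEntropy Hfun
    congr 1
    apply Finset.sum_congr rfl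
    intro f _
    congr 1
    change ρ.real _ = _
    apply measureReal_congr
    have hall : ∀ᵐ x ∂ρ, ∀ k : ℕ, ∀ i, T^[k] x ∈ P i ↔ p (T^[k] x) = i := by
      rw [ae_all_iff]
      intro k
      exact (hTi k).quasiMeasurePreserving.ae hpP
    filter_upwards [hall] with x hx
    apply propext
    change x ∈ refinedPartition T P N f ↔ (fun i : Fin N => p (T^[(i : ℕ)] x)) = f
    simp only [refinedPartition, Set.mem_iInter, Set.mem_preimage, funext_iff, hx]
  apply _root_.le_of_forall_pos_le_add
  intro ε hε
  rw [zero_add]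
  rcases eq_or_ne ε ⊤ with rfl | hεt
  · exact le_top
  have hq : Measurable (fun x => (p x, d x)) := hpm.prodMk hd
  obtain ⟨N, hN⟩ := entropy_rate_zero hT (fun x => (p x, d x)) hq (fun δ hδ => by
    obtain ⟨K, F, hF⟩ := hpred m p hpm δ hδ
    exact ⟨K, fun w => F (fun i => (w i).2), hF⟩) ε.toReal (ENNReal.toReal_pos hε.ne' hεt)
  refine (iInf_le _ N).trans ?_
  rw [hHeq]
  apply ENNReal.div_le_of_le_mul
  have hmono := Hfun_comp_le ρ (fun x (i : Fin (N + 1)) => (p (T^[(i : ℕ)] x), d (T^[(i : ℕ)] x)))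
    (measurable_pi_lambda _ fun i => hq.comp (hTi i).measurable) (fun w i => (w i).1)
  calc ENNReal.ofReal _ ≤ ENNReal.ofReal ((N + 1) * ε.toReal) :=
        ENNReal.ofReal_le_ofReal (hmono.trans hN)
    _ = ε * (N + 1) := by
        rw [ENNReal.ofReal_mul (by positivity), ENNReal.ofReal_toReal hεt, mul_comm]
        congr 1
        rw [ENNReal.ofReal_add (by positivity) (by positivity)]; simp

end HostEntropy
section HostCore

variable {X : Type*} [MeasurableSpace X]

/-- abstract `n`-to-one system with inverse branches -/
structure BranchSys (X : Type*) [MeasurableSpace X] (n : ℕ) where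
  T : X → X
  hT : Measurable T
  d : X → Fin n
  hd : Measurable d
  s : Fin n → X → X
  hs : ∀ j, Measurable (s j)
  s_d : ∀ x, s (d x) (T x) = x
  T_s : ∀ j y, T (s j y) = y
  d_s : ∀ j y, d (s j y) = j
  inj : Function.Injective (fun x (i : ℕ) => d (T^[i] x))

variable {n : ℕ} (S : BranchSys X n)

namespace BranchSys

/-- transfer densities -/
noncomputable def v (ρ : Measure X) (j : Fin n) : X → ℝ≥0∞ :=
  (Measure.map S.T (ρ.restrict (S.d ⁻¹' {j}))).rnDeriv ρ

lemma measurable_v (ρ : Measure X) (j : Fin n) : Measurable (S.v ρ j) :=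
  Measure.measurable_rnDeriv _ _

/-- weight of a point in its fibre -/
noncomputable def w (ρ : Measure X) (x : X) : ℝ≥0∞ := S.v ρ (S.d x) (S.T x)

lemma measurable_w (ρ : Measure X) : Measurable (S.w ρ) := by
  have : S.w ρ = fun x => ∑ j, (S.d ⁻¹' {j}).indicator (fun x => S.v ρ j (S.T x)) x := by
    funext x
    rw [Finset.sum_eq_single (S.d x)]
    · simp [w]
    · intro j _ hj
      simp [Ne.symm hj]
    · simp
  rw [this]
  refine Finset.measurable_sum _ fun j _ => ?_
  exact ((S.measurable_v ρ j).comp S.hT).indicator (S.hd (measurableSet_singleton j))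

/-- transfer operator -/
noncomputable def L (ρ : Measure X) (f : X → ℝ≥0∞) (y : X) : ℝ≥0∞ :=
  ∑ j, S.v ρ j y * f (S.s j y)

lemma measurable_L (ρ : Measure X) {f : X → ℝ≥0∞} (hf : Measurable f) : Measurable (S.L ρ f) :=
  Finset.measurable_sum _ fun j _ => (S.measurable_v ρ j).mul (hf.comp (S.hs j))

lemma measurable_L_iterate (ρ : Measure X) {f : X → ℝ≥0∞} (hf : Measurable f) (k : ℕ) :
    Measurable ((S.L ρ)^[k] f) := by
  induction k generalizing f with
  | zero => exact hf
  | succ k ih => exact ih (S.measurable_L ρ hf)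

lemma map_restrict_eq {ρ : Measure X} [IsProbabilityMeasure ρ] (h : MeasurePreserving S.T ρ ρ)
    (j : Fin n) : Measure.map S.T (ρ.restrict (S.d ⁻¹' {j})) = ρ.withDensity (S.v ρ j) := by
  have hac : Measure.map S.T (ρ.restrict (S.d ⁻¹' {j})) ≪ ρ := by
    have : Measure.map S.T (ρ.restrict (S.d ⁻¹' {j})) ≤ Measure.map S.T ρ :=
      Measure.map_mono Measure.restrict_le_self S.hT
    rw [h.map_eq] at this
    exact this.absolutelyContinuous
  exact (Measure.withDensity_rnDeriv_eq _ _ hac).symm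

lemma duality {ρ : Measure X} [IsProbabilityMeasure ρ] (h : MeasurePreserving S.T ρ ρ)
    {f g : X → ℝ≥0∞} (hf : Measurable f) (hg : Measurable g) :
    ∫⁻ x, f x * g (S.T x) ∂ρ = ∫⁻ y, S.L ρ f y * g y ∂ρ := by
  have hm : ∀ j, MeasurableSet (S.d ⁻¹' {j}) := fun j => S.hd (measurableSet_singleton j)
  have h1 : ∫⁻ x, f x * g (S.T x) ∂ρ = ∑ j, ∫⁻ x in S.d ⁻¹' {j}, f x * g (S.T x) ∂ρ := by
    rw [← lintegral_finsetSum_measure]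
    congr 1
    have : (⋃ j, S.d ⁻¹' {j}) = Set.univ := by ext x; simp
    conv_lhs => rw [← Measure.restrict_univ (μ := ρ), ← this]
    rw [Measure.restrict_iUnion _ hm, Measure.sum_fintype]
    intro i j hij
    exact Disjoint.preimage _ (by simpa using hij)
  rw [h1]
  have h2 : ∀ j, ∫⁻ x in S.d ⁻¹' {j}, f x * g (S.T x) ∂ρ
      = ∫⁻ y, (S.v ρ j y * f (S.s j y)) * g y ∂ρ := by
    intro j
    have e1 : ∫⁻ x in S.d ⁻¹' {j}, f x * g (S.T x) ∂ρ =
        ∫⁻ x in S.d ⁻¹' {j}, (fun y => f (S.s j y) * g y) (S.T x) ∂ρ := by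
      apply setLIntegral_congr_fun (hm j)
      intro x hx
      have hx' : S.d x = j := hx
      simp only
      rw [← hx', S.s_d]
    have hmm : Measurable (fun y => f (S.s j y) * g y) := (hf.comp (S.hs j)).mul hg
    rw [e1, ← lintegral_map hmm S.hT, S.map_restrict_eq h,
      lintegral_withDensity_eq_lintegral_mul _ (S.measurable_v ρ j) hmm]
    simp only [Pi.mul_apply, mul_assoc]
  simp_rw [h2]
  rw [← lintegral_finsetSum]
  · simp only [L, Finset.sum_mul]
  · intro j _
    exact ((S.measurable_v ρ j).mul (hf.comp (S.hs j))).mul hg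

lemma duality_iterate {ρ : Measure X} [IsProbabilityMeasure ρ] (h : MeasurePreserving S.T ρ ρ)
    (k : ℕ) {f g : X → ℝ≥0∞} (hf : Measurable f) (hg : Measurable g) :
    ∫⁻ x, f x * g (S.T^[k] x) ∂ρ = ∫⁻ y, (S.L ρ)^[k] f y * g y ∂ρ := by
  induction k generalizing f with
  | zero => rfl
  | succ k ih =>
    have := S.duality h hf (hg.comp (S.hT.iterate k))
    simp only [Function.comp_apply] at this
    simp only [Function.iterate_succ_apply]
    rw [this, ih (S.measurable_L ρ hf)]

lemma L_iterate_apply (ρ : Measure X) (k : ℕ) (f : X → ℝ≥0∞) (x : X)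
    (hf : ∀ z, S.T^[k] z = S.T^[k] x → z ≠ x → f z = 0) :
    (S.L ρ)^[k] f (S.T^[k] x) = f x * ∏ i ∈ Finset.range k, S.w ρ (S.T^[i] x) := by
  induction k generalizing f x with
  | zero => simp
  | succ k ih =>
    simp only [Function.iterate_succ_apply] at hf ⊢
    have h1 : S.L ρ f (S.T x) = f x * S.w ρ x := by
      unfold L
      rw [Finset.sum_eq_single (S.d x)]
      · rw [S.s_d, mul_comm]; rfl
      · intro j _ hj
        rw [hf, mul_zero]
        · rw [S.T_s]
        · intro he
          apply hj
          rw [← S.d_s j (S.T x), he]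
      · simp
    rw [ih (S.L ρ f) (S.T x), h1, Finset.prod_range_succ', mul_assoc]
    · simp only [Function.iterate_succ_apply, Function.iterate_zero, id]
      rw [mul_comm (S.w ρ x)]
    · intro z hz hne
      unfold L
      apply Finset.sum_eq_zero
      intro j _
      rw [hf, mul_zero]
      · rw [S.T_s, hz]
      · rintro he
        apply hne
        rw [← he, S.T_s]

lemma sum_v {ρ : Measure X} [IsProbabilityMeasure ρ] (h : MeasurePreserving S.T ρ ρ) :
    ∀ᵐ y ∂ρ, ∑ j, S.v ρ j y = 1 := by
  have hL : S.L ρ (fun _ => 1) = fun y => ∑ j, S.v ρ j y := by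
    funext y; simp [L]
  have hm := S.measurable_L ρ (measurable_const (a := (1 : ℝ≥0∞)))
  have key : (fun y => ∑ j, S.v ρ j y) =ᵐ[ρ] fun _ => 1 := by
    rw [hL] at hm
    apply ae_eq_of_forall_setLIntegral_eq_of_sigmaFinite hm measurable_const
    intro A hA _
    have := S.duality h (measurable_const (a := (1 : ℝ≥0∞)))
      (measurable_const (a := (1 : ℝ≥0∞)) |>.indicator hA)
    rw [hL] at this
    have e1 : ∀ y, (∑ j, S.v ρ j y) * A.indicator (fun _ => (1 : ℝ≥0∞)) y
        = A.indicator (fun y => ∑ j, S.v ρ j y) y := by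
      intro y; by_cases hy : y ∈ A <;> simp [hy]
    have e2 : ∀ y, (1 : ℝ≥0∞) * A.indicator (fun _ => (1 : ℝ≥0∞)) (S.T y)
        = (S.T ⁻¹' A).indicator (fun y => 1) y := by
      intro y; by_cases hy : S.T y ∈ A <;> simp [hy]
    simp_rw [e1, e2] at this
    rw [lintegral_indicator hA, lintegral_indicator (S.hT hA)] at this
    rw [← this]
    simp [h.measure_preimage hA.nullMeasurableSet]
  exact key

lemma w_le_one {ρ : Measure X} [IsProbabilityMeasure ρ] (h : MeasurePreserving S.T ρ ρ) :
    ∀ᵐ x ∂ρ, S.w ρ x ≤ 1 := by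
  filter_upwards [h.quasiMeasurePreserving.ae (S.sum_v h)] with x hx
  rw [← hx]
  exact Finset.single_le_sum (f := fun j => S.v ρ j (S.T x)) (fun _ _ => zero_le) (Finset.mem_univ _)

lemma prod_tendsto_zero {a : ℕ → ℝ≥0∞} (ha : ∀ i, a i ≤ 1) {c : ℝ≥0∞} (hc : c < 1)
    (hfr : ∃ᶠ i in Filter.atTop, a i < c) :
    Filter.Tendsto (fun k => ∏ i ∈ Finset.range k, a i) Filter.atTop (nhds 0) := by
  have hanti : Antitone (fun k => ∏ i ∈ Finset.range k, a i) := by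
    apply antitone_nat_of_succ_le
    intro k
    rw [Finset.prod_range_succ]
    exact mul_le_of_le_one_right' (ha k)
  have hpow : ∀ m : ℕ, ∃ k, ∏ i ∈ Finset.range k, a i ≤ c ^ m := by
    intro m
    induction m with
    | zero => exact ⟨0, by simp⟩
    | succ m ih =>
      obtain ⟨k, hk⟩ := ih
      obtain ⟨i, hi, hai⟩ := (Filter.frequently_atTop.1 hfr) k
      refine ⟨i + 1, ?_⟩
      rw [Finset.prod_range_succ, pow_succ]
      exact mul_le_mul' ((hanti hi).trans hk) hai.le
  rw [ENNReal.tendsto_atTop_zero]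
  intro ε hε
  have ht := ENNReal.tendsto_pow_atTop_nhds_zero_of_lt_one hc
  obtain ⟨m, hm⟩ := ENNReal.tendsto_atTop_zero.1 ht ε hε
  obtain ⟨k, hk⟩ := hpow m
  exact ⟨k, fun j hj => (hanti hj).trans (hk.trans (hm m le_rfl))⟩

lemma frequently_visit {ρ : Measure X} [IsProbabilityMeasure ρ] {T : X → X} (h : Ergodic T ρ)
    {D : Set X} (hD : MeasurableSet D) (hpos : ρ D ≠ 0) :
    ∀ᵐ x ∂ρ, ∃ᶠ i in Filter.atTop, T^[i] x ∈ D := by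
  set V := {x | ∃ᶠ i in Filter.atTop, T^[i] x ∈ D} with hV
  have hTm := h.toMeasurePreserving.measurable
  have hVm : MeasurableSet V := by
    have : V = ⋂ k : ℕ, ⋃ i : ℕ, ⋃ _ : k ≤ i, T^[i] ⁻¹' D := by
      ext x; simp [hV, Filter.frequently_atTop]
    rw [this]
    exact MeasurableSet.iInter fun k => MeasurableSet.iUnion fun i => MeasurableSet.iUnion fun _ =>
      (hTm.iterate i) hD
  have hinv : T ⁻¹' V = V := by
    ext x
    simp only [hV, Set.mem_preimage, Set.mem_ofPred_eq, ← Function.iterate_succ_apply]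
    conv_rhs => rw [← Filter.map_add_atTop_eq_nat 1, Filter.frequently_map]
  rcases h.toPreErgodic.ae_mem_or_ae_notMem hVm hinv with h1 | h1
  · exact h1
  · exfalso
    apply hpos
    have hc := h.toMeasurePreserving.conservative.ae_mem_imp_frequently_image_mem hD.nullMeasurableSet
    have : ∀ᵐ x ∂ρ, x ∉ D := by
      filter_upwards [h1, hc] with x hx hx2 hxD
      exact hx (hx2 hxD)
    simpa [ae_iff] using this

/-- if some weight is nontrivial, partial transversals are null -/
lemma transversal_null {ρ : Measure X} [IsProbabilityMeasure ρ] (h : Ergodic S.T ρ)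
    (hw : ¬ ∀ᵐ x ∂ρ, S.w ρ x = 1) {E : Set X} (hE : MeasurableSet E)
    (hinj : ∀ k, Set.InjOn (S.T^[k]) E) : ρ E = 0 := by
  have hmp := h.toMeasurePreserving
  have hw1 := S.w_le_one hmp
  have hc : ∃ c : ℝ≥0∞, c < 1 ∧ ρ {x | S.w ρ x < c} ≠ 0 := by
    by_contra! hcon
    apply hw
    obtain ⟨u, -, hu1, hu⟩ := exists_seq_strictMono_tendsto' (show (0 : ℝ≥0∞) < 1 by simp)
    have : ∀ᵐ x ∂ρ, ∀ k, ¬ (S.w ρ x < u k) := by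
      rw [ae_all_iff]
      intro k
      rw [ae_iff]
      simpa using hcon (u k) (hu1 k).2
    filter_upwards [this, hw1] with x hx hx1
    refine le_antisymm hx1 ?_
    exact le_of_tendsto' hu (fun k => not_lt.1 (hx k))
  obtain ⟨c, hc1, hcpos⟩ := hc
  have hDm : MeasurableSet {x | S.w ρ x < c} := measurableSet_lt (S.measurable_w ρ) measurable_const
  have hvis := frequently_visit h hDm hcpos
  have hall : ∀ᵐ x ∂ρ, ∀ k : ℕ, S.w ρ (S.T^[k] x) ≤ 1 := by
    rw [ae_all_iff]
    intro k
    exact (hmp.iterate k).quasiMeasurePreserving.ae hw1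
  set W : ℕ → X → ℝ≥0∞ := fun k x =>
    E.indicator 1 x * ∏ i ∈ Finset.range k, S.w ρ (S.T^[i] x) with hW
  have hindm : Measurable (E.indicator (1 : X → ℝ≥0∞)) := measurable_one.indicator hE
  have hWm : ∀ k, Measurable (W k) := by
    intro k
    refine hindm.mul (Finset.measurable_prod _ fun i _ => ?_)
    exact (S.measurable_w ρ).comp (S.hT.iterate i)
  have hlim : Filter.Tendsto (fun k => ∫⁻ x, W k x ∂ρ) Filter.atTop (nhds (∫⁻ _, 0 ∂ρ)) := by
    apply tendsto_lintegral_of_dominated_convergence (fun _ => 1) hWm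
    · intro k
      filter_upwards [hall] with x hx
      calc W k x ≤ 1 * 1 := by
            apply mul_le_mul'
            · by_cases hxE : x ∈ E <;> simp [hxE]
            · exact Finset.prod_le_one' fun i _ => hx i
        _ = 1 := one_mul 1
    · simp
    · filter_upwards [hall, hvis] with x hx hv
      have := prod_tendsto_zero hx hc1 hv
      by_cases hxE : x ∈ E
      · simpa [hW, hxE] using this
      · simp [hW, hxE]
  have hsq : ∀ k, ρ E * ρ E ≤ ∫⁻ x, W k x ∂ρ := by
    intro k
    set g := (S.L ρ)^[k] (E.indicator 1) with hg
    have hgm : Measurable g := S.measurable_L_iterate ρ hindm k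
    have e1 : ∫⁻ x, W k x ∂ρ = ∫⁻ y, g y * g y ∂ρ := by
      rw [← S.duality_iterate hmp k hindm hgm]
      congr 1
      funext x
      by_cases hxE : x ∈ E
      · rw [hg, S.L_iterate_apply ρ k _ x]
        · simp [hW, hxE]
        · intro z hz hne
          by_cases hzE : z ∈ E
          · exact absurd (hinj k hzE hxE hz) hne
          · simp [hzE]
      · simp [hW, hxE]
    have e2 : ρ E = ∫⁻ y, g y ∂ρ := by
      have := S.duality_iterate hmp k hindm (measurable_const (a := (1 : ℝ≥0∞)))
      simp only [mul_one] at this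
      rw [← this, lintegral_indicator_one hE]
    have e3 := ENNReal.lintegral_mul_le_Lp_mul_Lq ρ Real.HolderConjugate.two_two
      hgm.aemeasurable (aemeasurable_const (b := (1 : ℝ≥0∞)))
    simp only [Pi.mul_apply, mul_one, ENNReal.one_rpow, lintegral_const, measure_univ] at e3
    rw [← e2] at e3
    have e4 := mul_le_mul' e3 e3
    rw [← ENNReal.rpow_add_of_nonneg _ _ (by norm_num) (by norm_num)] at e4
    norm_num at e4
    rw [e1]
    simpa [sq] using e4
  rw [lintegral_zero] at hlim
  have : ρ E * ρ E ≤ 0 := ge_of_tendsto' hlim hsq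
  simpa using this

lemma exists_left_inverse {ρ : Measure X} [IsProbabilityMeasure ρ] (h : MeasurePreserving S.T ρ ρ)
    (hw : ∀ᵐ x ∂ρ, S.w ρ x = 1) : ∃ σ : X → X, Measurable σ ∧ ∀ᵐ x ∂ρ, σ (S.T x) = x := by
  classical
  have hn : Nonempty (Fin n) := by
    obtain ⟨x⟩ : Nonempty X := nonempty_of_isProbabilityMeasure ρ
    exact ⟨S.d x⟩
  -- selection of a branch as function of the set of indices with v = 1
  let A : X → Fin n → Prop := fun y j => S.v ρ j y = 1
  have hAm : Measurable A := by
    refine measurable_pi_lambda _ fun j => ?_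
    exact measurableSet_setOfPred.1 (S.measurable_v ρ j (measurableSet_singleton 1))
  let sel : (Fin n → Prop) → Fin n := fun a => if h : ∃ j, a j then h.choose else hn.some
  have hselm : Measurable sel := measurable_of_countable _
  have hJ : Measurable (fun y => sel (A y)) := hselm.comp hAm
  refine ⟨fun y => S.s (sel (A y)) y, ?_, ?_⟩
  · have : Measurable (fun z : Fin n × X => S.s z.1 z.2) := measurable_from_prod_countable_right S.hs
    exact this.comp (hJ.prodMk measurable_id)
  · filter_upwards [hw, h.quasiMeasurePreserving.ae (S.sum_v h)] with x hx hx2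
    have hex : ∃ j, A (S.T x) j := ⟨S.d x, hx⟩
    have hsel : sel (A (S.T x)) = hex.choose := dif_pos hex
    have hspec : S.v ρ hex.choose (S.T x) = 1 := hex.choose_spec
    have : hex.choose = S.d x := by
      by_contra hne
      have h2 : S.v ρ hex.choose (S.T x) + S.v ρ (S.d x) (S.T x) ≤ 1 := by
        rw [← hx2, ← Finset.sum_pair (f := fun j => S.v ρ j (S.T x)) hne]
        exact Finset.sum_le_sum_of_subset (Finset.subset_univ _)
      have hx' : S.v ρ (S.d x) (S.T x) = 1 := hx
      rw [hspec, hx'] at h2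
      norm_num at h2
    rw [hsel, this, S.s_d]

lemma approx_set [StandardBorelSpace X] (ρ : Measure X) [IsProbabilityMeasure ρ] (A : Set X)
    (hA : MeasurableSet A)
    (δ : ℝ) (hδ : 0 < δ) : ∃ (K : ℕ) (U : Set (ℕ → Fin n)),
      (∀ f g : ℕ → Fin n, (∀ i < K, f i = g i) → (f ∈ U ↔ g ∈ U)) ∧
      ρ (symmDiff A ((fun x (i : ℕ) => S.d (S.T^[i] x)) ⁻¹' U)) < ENNReal.ofReal δ := by
  set Φ : X → (ℕ → Fin n) := fun x i => S.d (S.T^[i] x) with hΦ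
  have hΦm : Measurable Φ := measurable_pi_lambda _ fun i => S.hd.comp (S.hT.iterate i)
  have hemb : MeasurableEmbedding Φ := hΦm.measurableEmbedding S.inj
  have hA' := hemb.measurableSet_image' hA
  have : IsProbabilityMeasure (ρ.map Φ) := Measure.isProbabilityMeasure_map hΦm.aemeasurable
  have hdense := Measure.MeasureDense.of_generateFrom_isSetAlgebra_finite (ρ.map Φ)
    (isSetAlgebra_measurableCylinders (α := fun _ : ℕ => Fin n))
    generateFrom_measurableCylinders.symm
  obtain ⟨U, hU, hlt⟩ := hdense.approx _ hA' (measure_ne_top _ _) δ hδ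
  obtain ⟨s, V, hV, rfl⟩ := (mem_measurableCylinders U).1 hU
  refine ⟨s.sup id + 1, cylinder s V, ?_, ?_⟩
  · intro f g hfg
    have : s.restrict f = s.restrict g := by
      funext i
      exact hfg i (Nat.lt_succ_of_le (Finset.le_sup (f := id) i.2))
    rw [mem_cylinder, mem_cylinder, this]
  · rw [Measure.map_apply hΦm (hA'.symmDiff (hdense.measurable _ hU))] at hlt
    have e : Φ ⁻¹' (symmDiff (Φ '' A) (cylinder s V)) = symmDiff A (Φ ⁻¹' cylinder s V) := by
      rw [Set.preimage_symmDiff, Set.preimage_image_eq _ S.inj]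
    rwa [e] at hlt

lemma approx_fun [StandardBorelSpace X] (ρ : Measure X) [IsProbabilityMeasure ρ]
    {ι : Type*} [Fintype ι] [MeasurableSpace ι] [MeasurableSingletonClass ι] (q : X → ι)
    (hq : Measurable q) (δ : ℝ) (hδ : 0 < δ) :
    ∃ (K : ℕ) (F : (Fin K → Fin n) → ι),
      ρ.real {x | q x ≠ F (fun i => S.d (S.T^[(i : ℕ)] x))} ≤ δ := by
  classical
  have hne : Nonempty X := nonempty_of_isProbabilityMeasure ρ
  have hι : Nonempty ι := hne.map q
  have hn : Nonempty (Fin n) := hne.map S.d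
  set Φ : X → (ℕ → Fin n) := fun x i => S.d (S.T^[i] x) with hΦ
  have hcard : (0 : ℝ) < Fintype.card ι := by exact_mod_cast Fintype.card_pos
  choose K U hU hlt using fun a : ι => S.approx_set ρ (q ⁻¹' {a}) (hq (measurableSet_singleton a))
    (δ / Fintype.card ι) (by positivity)
  set M := Finset.univ.sup K with hM
  let ext : (Fin M → Fin n) → (ℕ → Fin n) := fun f i => if h : i < M then f ⟨i, h⟩ else hn.some
  let F : (Fin M → Fin n) → ι := fun f => if h : ∃ a, ext f ∈ U a then h.choose else hι.some
  refine ⟨M, F, ?_⟩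
  have hext : ∀ x a, ext (fun i => S.d (S.T^[(i : ℕ)] x)) ∈ U a ↔ Φ x ∈ U a := by
    intro x a
    apply hU
    intro i hi
    have : i < M := hi.trans_le (Finset.le_sup (f := K) (Finset.mem_univ a))
    simp [ext, this, hΦ]
  have hsub : {x | q x ≠ F (fun i => S.d (S.T^[(i : ℕ)] x))} ⊆
      ⋃ a ∈ (Finset.univ : Finset ι), symmDiff (q ⁻¹' {a}) (Φ ⁻¹' U a) := by
    intro x hx
    by_contra hcon
    simp only [Set.mem_iUnion, not_exists, Finset.mem_univ, true_and, Set.mem_symmDiff, exists_prop,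
      Set.mem_preimage, Set.mem_singleton_iff, not_or, not_and, not_not] at hcon
    apply hx
    have h1 : Φ x ∈ U (q x) := (hcon (q x)).1 rfl
    have hex : ∃ a, ext (fun i => S.d (S.T^[(i : ℕ)] x)) ∈ U a := ⟨q x, (hext x _).2 h1⟩
    have hF : F (fun i => S.d (S.T^[(i : ℕ)] x)) = hex.choose := dif_pos hex
    rw [hF]
    exact (hcon _).2 ((hext x _).1 hex.choose_spec)
  calc ρ.real _ ≤ ρ.real (⋃ a ∈ (Finset.univ : Finset ι), symmDiff (q ⁻¹' {a}) (Φ ⁻¹' U a)) :=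
        measureReal_mono hsub (measure_ne_top _ _)
    _ ≤ ∑ a, ρ.real (symmDiff (q ⁻¹' {a}) (Φ ⁻¹' U a)) := measureReal_biUnion_finset_le _ _
    _ ≤ ∑ a : ι, δ / Fintype.card ι := by
        apply Finset.sum_le_sum
        intro a _
        exact ENNReal.toReal_le_of_le_ofReal (by positivity) (hlt a).le
    _ = δ := by simp; field_simp

lemma entropy_zero [StandardBorelSpace X] {ρ : Measure X} [IsProbabilityMeasure ρ]
    (h : MeasurePreserving S.T ρ ρ) (hw : ∀ᵐ x ∂ρ, S.w ρ x = 1) : ksEntropy S.T ρ = 0 := by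
  obtain ⟨σ, hσ, hσT⟩ := S.exists_left_inverse h hw
  apply ksEntropy_eq_zero h S.d S.hd
  intro m p hp δ hδ
  have hq : Measurable (fun x => (p x, S.d x)) := hp.prodMk S.hd
  obtain ⟨K, F, hF⟩ := S.approx_fun ρ (fun x => (p (σ x), S.d (σ x))) (hq.comp hσ) δ hδ
  refine ⟨K, F, ?_⟩
  refine le_trans (le_of_eq ?_) hF
  have hm : MeasurableSet {x | (p (σ x), S.d (σ x)) ≠ F (fun i => S.d (S.T^[(i : ℕ)] x))} := by
    refine (measurableSet_eq_fun (hq.comp hσ) ((measurable_of_countable F).comp ?_)).compl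
    exact measurable_pi_lambda _ fun i => S.hd.comp (S.hT.iterate i)
  rw [← h.measureReal_preimage hm.nullMeasurableSet]
  apply measureReal_congr
  filter_upwards [hσT] with x hx
  apply propext
  change (p x, S.d x) ≠ F (fun i => S.d (S.T^[(i : ℕ) + 1] x)) ↔
    (p (σ (S.T x)), S.d (σ (S.T x))) ≠ F (fun i => S.d (S.T^[(i : ℕ)] (S.T x)))
  rw [hx]
  rfl

theorem main [StandardBorelSpace X] {ρ : Measure X} [IsProbabilityMeasure ρ]
    (h : Ergodic S.T ρ) (hent : 0 < ksEntropy S.T ρ) {E : Set X} (hE : MeasurableSet E)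
    (hinj : ∀ k, Set.InjOn (S.T^[k]) E) : ρ E = 0 := by
  apply S.transversal_null h _ hE hinj
  intro hw
  rw [S.entropy_zero h.toMeasurePreserving hw] at hent
  exact lt_irrefl _ hent

end BranchSys
end HostCore
section HostCircle

/-- representative in `[0,1)` -/
noncomputable def circRep (x : UnitAddCircle) : ℝ := (AddCircle.measurableEquivIco (1 : ℝ) 0 x : ℝ)

lemma circRep_measurable : Measurable circRep :=
  measurable_subtype_coe.comp (AddCircle.measurableEquivIco (1 : ℝ) 0).measurable

lemma circRep_nonneg (x : UnitAddCircle) : 0 ≤ circRep x :=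
  (AddCircle.measurableEquivIco (1 : ℝ) 0 x).2.1

lemma circRep_lt_one (x : UnitAddCircle) : circRep x < 1 := by
  have := (AddCircle.measurableEquivIco (1 : ℝ) 0 x).2.2
  exact this.trans_eq (zero_add 1)

lemma coe_circRep (x : UnitAddCircle) : ((circRep x : ℝ) : UnitAddCircle) = x :=
  AddCircle.coe_equivIco (p := (1 : ℝ)) (a := 0)

lemma circRep_coe {r : ℝ} (h0 : 0 ≤ r) (h1 : r < 1) : circRep (r : UnitAddCircle) = r := by
  have := AddCircle.equivIco_coe_eq (p := (1 : ℝ)) (a := 0) (x := r) ⟨h0, by simpa using h1⟩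
  exact congrArg Subtype.val this

lemma circRep_floor_lt {n : ℕ} (hn : 2 ≤ n) (x : UnitAddCircle) : ⌊(n : ℝ) * circRep x⌋₊ < n := by
  have hn0 : (0 : ℝ) < n := by positivity
  rw [Nat.floor_lt (mul_nonneg hn0.le (circRep_nonneg x))]
  have := circRep_lt_one x
  nlinarith

lemma circRep_nsmul {n : ℕ} (hn : 2 ≤ n) (x : UnitAddCircle) :
    circRep (n • x) = n * circRep x - ⌊(n : ℝ) * circRep x⌋₊ := by
  have h0 : 0 ≤ (n : ℝ) * circRep x := mul_nonneg (by positivity) (circRep_nonneg x)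
  have h1 := Nat.floor_le h0
  have h2 := Nat.lt_floor_add_one ((n : ℝ) * circRep x)
  have : n • x = ((n * circRep x - ⌊(n : ℝ) * circRep x⌋₊ : ℝ) : UnitAddCircle) := by
    conv_lhs => rw [← coe_circRep x]
    rw [← AddCircle.coe_nsmul, nsmul_eq_mul, AddCircle.coe_sub]
    have : (((⌊(n : ℝ) * circRep x⌋₊ : ℕ) : ℝ) : UnitAddCircle) = 0 := by
      rw [AddCircle.coe_eq_zero_iff]
      exact ⟨⌊(n : ℝ) * circRep x⌋₊, by simp⟩
    rw [this, sub_zero]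
  rw [this]
  exact circRep_coe (by linarith) (by linarith)

lemma branch_bounds {n : ℕ} (hn : 2 ≤ n) (j : Fin n) (y : UnitAddCircle) :
    0 ≤ (circRep y + (j : ℕ)) / n ∧ (circRep y + (j : ℕ)) / n < 1 := by
  have hn0 : (0 : ℝ) < n := by positivity
  have h0 := circRep_nonneg y
  have h1 := circRep_lt_one y
  have hj : ((j : ℕ) : ℝ) + 1 ≤ n := by exact_mod_cast j.2
  constructor
  · positivity
  · rw [div_lt_one hn0]; linarith

/-- the circle map as a branch system -/
noncomputable def circSys (n : ℕ) (hn : 2 ≤ n) : BranchSys UnitAddCircle n where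
  T := fun x => n • x
  hT := (continuous_nsmul n).measurable
  d := fun x => ⟨⌊(n : ℝ) * circRep x⌋₊, circRep_floor_lt hn x⟩
  hd := by
    apply measurable_to_countable'
    intro j
    have : Measurable (fun x => ⌊(n : ℝ) * circRep x⌋₊) :=
      Nat.measurable_floor.comp (measurable_const.mul circRep_measurable)
    have h := this (measurableSet_singleton (j : ℕ))
    convert h using 1
    ext x; simp [Fin.ext_iff]
  s := fun j y => (((circRep y + (j : ℕ)) / n : ℝ) : UnitAddCircle)
  hs := fun j => (AddCircle.measurable_mk' (a := (1 : ℝ))).comp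
    ((circRep_measurable.add measurable_const).div_const _)
  s_d := by
    intro x
    have hn0 : (0 : ℝ) < n := by positivity
    simp only [circRep_nsmul hn]
    rw [sub_add_cancel, mul_div_cancel_left₀ _ hn0.ne', coe_circRep]
  T_s := by
    intro j y
    have hn0 : (0 : ℝ) < n := by positivity
    rw [← AddCircle.coe_nsmul, nsmul_eq_mul, mul_div_cancel₀ _ hn0.ne', AddCircle.coe_add, coe_circRep]
    have : (((j : ℕ) : ℝ) : UnitAddCircle) = 0 := by
      rw [AddCircle.coe_eq_zero_iff]
      exact ⟨(j : ℕ), by simp⟩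
    rw [this, add_zero]
  d_s := by
    intro j y
    have hn0 : (0 : ℝ) < n := by positivity
    have hb := branch_bounds hn j y
    apply Fin.ext
    change ⌊(n : ℝ) * circRep (((circRep y + (j : ℕ)) / n : ℝ) : UnitAddCircle)⌋₊ = (j : ℕ)
    rw [circRep_coe hb.1 hb.2, mul_div_cancel₀ _ hn0.ne', Nat.floor_add_natCast (circRep_nonneg y)]
    have : ⌊circRep y⌋₊ = 0 := Nat.floor_eq_zero.2 (circRep_lt_one y)
    omega
  inj := by
    have hn0 : (0 : ℝ) < n := by positivity
    intro x y hxy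
    have key : ∀ k : ℕ, ∀ x y : UnitAddCircle,
        (∀ i : ℕ, ⌊(n : ℝ) * circRep ((fun x => n • x)^[i] x)⌋₊ =
          ⌊(n : ℝ) * circRep ((fun x => n • x)^[i] y)⌋₊) →
        (n : ℝ) ^ k * |circRep x - circRep y| ≤ 1 := by
      intro k
      induction k with
      | zero =>
        intro x y _
        have h1 := circRep_nonneg x
        have h2 := circRep_nonneg y
        have h3 := circRep_lt_one x
        have h4 := circRep_lt_one y
        rw [pow_zero, one_mul, abs_le]; constructor <;> linarith
      | succ k ih =>
        intro x y h
        have h0 := h 0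
        simp only [Function.iterate_zero, id] at h0
        have h1 := ih (n • x) (n • y) (fun i => h (i + 1))
        rw [circRep_nsmul hn, circRep_nsmul hn, h0, sub_sub_sub_cancel_right, ← mul_sub, abs_mul,
          abs_of_pos hn0, ← mul_assoc, ← pow_succ] at h1
        exact h1
    have hk := fun k => key k x y (fun i => by
      have := congrFun hxy i
      simpa [Fin.ext_iff] using this)
    have hz : circRep x - circRep y = 0 := by
      by_contra hne
      have hpos : 0 < |circRep x - circRep y| := abs_pos.2 hne
      obtain ⟨k, hk2⟩ := pow_unbounded_of_one_lt (1 / |circRep x - circRep y|)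
        (show (1 : ℝ) < n by exact_mod_cast hn)
      rw [div_lt_iff₀ hpos] at hk2
      exact absurd (hk k) (not_le.2 hk2)
    rw [← coe_circRep x, ← coe_circRep y, sub_eq_zero.1 hz]

lemma nAdic_countable (n : ℕ) : (nAdicRationals n).Countable := by
  have : nAdicRationals n = Set.range
      (fun z : ℕ × ℤ => (((z.2 : ℝ) / n ^ z.1 : ℝ) : UnitAddCircle)) := by
    ext t
    simp only [nAdicRationals, Set.mem_ofPred_eq, Set.mem_range, Prod.exists, eq_comm]
  rw [this]
  exact Set.countable_range _

lemma mem_nAdic_of_nsmul {n : ℕ} (hn : 2 ≤ n) (k : ℕ) (t : UnitAddCircle) (h : n ^ k • t = 0) :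
    t ∈ nAdicRationals n := by
  have hn0 : (0 : ℝ) < n := by positivity
  rw [← coe_circRep t, ← AddCircle.coe_nsmul, AddCircle.coe_eq_zero_iff] at h
  obtain ⟨q, hq⟩ := h
  refine ⟨k, q, ?_⟩
  rw [← coe_circRep t]
  congr 1
  rw [_root_.eq_div_iff (by positivity)]
  rw [zsmul_eq_mul, nsmul_eq_mul] at hq
  push_cast at hq
  linarith

end HostCircle

/-- Host: Let `n ≥ 2` and let `μ` be a `×n`-invariant Borel probability
measure on `𝕋` such that almost every ergodic component of `μ` with respect to `×n`
(in its ergodic decomposition, here a measure `ν` on the space of measures) has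
positive entropy.  Then `μ` is `N_n`-recurrent. -/
theorem host_positive_entropy_components_implies_Nn_recurrent
    (n : ℕ) (hn : 2 ≤ n)
    (μ : Measure UnitAddCircle) [IsProbabilityMeasure μ]
    (hinv : Measure.map (fun x : UnitAddCircle => n • x) μ = μ)
    (hdec : ∃ ν : Measure (Measure UnitAddCircle),
      (∀ᵐ ρ ∂ν, IsProbabilityMeasure ρ ∧
        Ergodic (fun x : UnitAddCircle => n • x) ρ ∧
        0 < ksEntropy (fun x : UnitAddCircle => n • x) ρ) ∧
      ∀ A : Set UnitAddCircle, MeasurableSet A → μ A = ∫⁻ ρ, ρ A ∂ν) :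
    NnRecurrent n μ := by
  obtain ⟨ν, hν, hμ⟩ := hdec
  intro B hB _
  have hN := nAdic_countable n
  let 𝒰 := TopologicalSpace.countableBasis UnitAddCircle
  have h𝒰 : 𝒰.Countable := TopologicalSpace.countable_countableBasis _
  have hbasis := TopologicalSpace.isBasis_countableBasis UnitAddCircle
  let E : Set UnitAddCircle → Set UnitAddCircle := fun U =>
    {x | x ∈ B ∩ U ∧ ∀ t ∈ nAdicRationals n, t ≠ 0 → x + t ∉ B ∩ U}
  have hEnull : ∀ U ∈ 𝒰, μ (E U) = 0 := by
    intro U hU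
    have hUm : MeasurableSet (B ∩ U) := hB.inter (hbasis.isOpen hU).measurableSet
    have hEm : MeasurableSet (E U) := by
      have : E U = (B ∩ U) ∩ ⋂ t ∈ nAdicRationals n, {x | t ≠ 0 → x + t ∉ B ∩ U} := by
        ext x; simp [E]; tauto
      rw [this]
      refine hUm.inter (MeasurableSet.biInter hN fun t _ => ?_)
      by_cases ht : t = 0
      · simp [ht]
      · simp only [ne_eq, ht, not_false_eq_true, forall_const]
        exact ((measurable_add_const t) hUm).compl
    rw [hμ _ hEm]
    have : ∀ᵐ ρ ∂ν, ρ (E U) = 0 := by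
      filter_upwards [hν] with ρ hρ
      obtain ⟨hp, herg, hent⟩ := hρ
      refine (circSys n hn).main herg hent hEm ?_
      intro k x hx y hy hxy
      have hit : ∀ z : UnitAddCircle, (circSys n hn).T^[k] z = n ^ k • z := by
        intro z
        exact smul_iterate_apply n k z
      by_contra hne
      rw [hit, hit] at hxy
      have ht : y - x ∈ nAdicRationals n := by
        apply mem_nAdic_of_nsmul hn k
        rw [smul_sub, hxy, sub_self]
      have := hx.2 (y - x) ht (sub_ne_zero.2 (Ne.symm hne))
      rw [add_sub_cancel] at this
      exact this hy.1
    rw [lintegral_congr_ae this, lintegral_zero]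
  have hall : ∀ᵐ x ∂μ, ∀ U ∈ 𝒰, x ∉ E U := by
    rw [ae_ball_iff h𝒰]
    intro U hU
    rw [ae_iff]
    simpa using hEnull U hU
  filter_upwards [hall] with x hx hxB
  by_contra hfin
  rw [Set.not_infinite] at hfin
  have hfin2 : ((fun t => x + t) '' ({t | t ∈ nAdicRationals n ∧ x + t ∈ B} \ {0})).Finite :=
    (hfin.sdiff).image _
  have hopen := hfin2.isClosed.isOpen_compl
  obtain ⟨U, hU, hxU, hsub⟩ := hbasis.exists_subset_of_mem_open (a := x) (by
    rintro ⟨t, ⟨-, ht⟩, hxt⟩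
    apply ht
    simpa using hxt) hopen
  refine hx U hU ⟨⟨hxB, hxU⟩, ?_⟩
  intro t ht ht0 hxt
  exact hsub hxt.2 ⟨t, ⟨⟨ht, hxt.1⟩, ht0⟩, rfl⟩
end

section
/- Let m and n be relatively prime integers, each at least 2, and let μ be a Borel probability measure on 𝕋 invariant under ×n such that the measure-theoretic entropies of the ergodic components of μ with respect to ×n are bounded below by some positive number. Then for μ-almost every x ∈ 𝕋 the orbit of x under iterates of ×m is uniformly distributed with respect to Lebesgue measure: for every continuous function f on 𝕋, (1/N) Σ_{k=0}^{N-1} f(m^k x mod 1) converges as N → ∞ to the Lebesgue integral of f. -/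
open MeasureTheory ENNReal

open MeasureTheory Filter

theorem hostNT1 (m n : ℕ) (hm : 2 ≤ m) (hn : 2 ≤ n) (hmn : Nat.Coprime m n) :
    ∃ C : ℕ, 0 < C ∧ ∀ (N k : ℕ) (a : ℕ), ((n ^ N : ℕ) : ℤ) ∣ (a : ℤ) * ((m : ℤ) ^ k - 1) →
      n ^ N ∣ a * C * k := by
  set r := 2 * n.totient with hr
  have hx1 : 1 ≤ m ^ r := Nat.one_le_pow _ _ (by omega)
  have hrpos : r ≠ 0 := by
    have := Nat.totient_pos.2 (show 0 < n by omega)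
    omega
  have hx2 : 1 < m ^ r := Nat.one_lt_pow hrpos (by omega)
  refine ⟨m ^ r - 1, by omega, ?_⟩
  intro N k a h
  have hdn : (n : ℤ) ∣ (m : ℤ) ^ r - 1 := by
    have h1 : m ^ n.totient ≡ 1 [MOD n] := Nat.ModEq.pow_totient hmn
    have h2 : m ^ r ≡ 1 [MOD n] := by
      rw [hr, mul_comm, pow_mul]
      simpa using h1.pow 2
    have := (Nat.modEq_iff_dvd.1 h2.symm)
    simpa using this
  have h' : ((n ^ N : ℕ) : ℤ) ∣ (a : ℤ) * (((m : ℤ) ^ r) ^ k - 1) := by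
    refine h.trans (mul_dvd_mul_left _ ?_)
    rw [← pow_mul, mul_comm, pow_mul]
    simpa using sub_dvd_pow_sub_pow ((m : ℤ) ^ k) 1 r
  have key : ∀ p : ℕ, p.Prime → p ∣ n → emultiplicity (p : ℤ) (((m : ℤ) ^ r) ^ k - 1)
      = emultiplicity (p : ℤ) ((m : ℤ) ^ r - 1) + emultiplicity (p : ℤ) (k : ℤ) := by
    intro p hp hpn
    have hpm : ¬ (p : ℤ) ∣ (m : ℤ) ^ r := by
      intro hd
      have := (Nat.prime_iff_prime_int.1 hp).dvd_of_dvd_pow hd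
      have h3 : p ∣ m := by exact_mod_cast this
      have := Nat.dvd_gcd h3 hpn
      rw [hmn] at this
      exact hp.one_lt.ne' (Nat.dvd_one.1 this)
    have hpx : (p : ℤ) ∣ (m : ℤ) ^ r - 1 := (Int.natCast_dvd_natCast.2 hpn).trans hdn
    rcases hp.eq_two_or_odd' with h2 | hodd
    · subst h2
      have h4 : (4 : ℤ) ∣ (m : ℤ) ^ r - 1 := by
        have hmo : Odd (m : ℤ) := by
          rw [← Int.not_even_iff_odd, even_iff_two_dvd]
          intro hd
          exact hpm (dvd_pow (by exact_mod_cast hd) hrpos)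
        have := Int.sq_mod_four_eq_one_of_odd (hmo.pow (n := n.totient))
        rw [hr, mul_comm, pow_mul]
        omega
      have := Int.two_pow_sub_pow' (x := (m : ℤ) ^ r) (y := 1) k h4 (by exact_mod_cast hpm)
      simpa using this
    · have := Int.emultiplicity_pow_sub_pow hp hodd (x := (m : ℤ) ^ r) (y := 1) hpx hpm k
      simpa [Int.natCast_emultiplicity] using this
  rw [Nat.dvd_iff_prime_pow_dvd_dvd]
  intro p j hp hpj
  rcases Nat.eq_zero_or_pos j with hj | hj
  · subst hj; simp
  have hpn : p ∣ n := hp.dvd_of_dvd_pow ((dvd_pow_self p hj.ne').trans hpj)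
  have hpp := Nat.prime_iff_prime_int.1 hp
  have h5 : (p : ℤ) ^ j ∣ (a : ℤ) * (((m : ℤ) ^ r) ^ k - 1) := by
    refine Dvd.dvd.trans ?_ h'
    exact_mod_cast hpj
  have h6 : (p : ℤ) ^ j ∣ (a : ℤ) * ((m : ℤ) ^ r - 1) * (k : ℤ) := by
    rw [pow_dvd_iff_le_emultiplicity, emultiplicity_mul hpp] at h5 ⊢
    rw [emultiplicity_mul hpp, add_assoc, ← key p hp hpn]
    exact h5
  have : ((p ^ j : ℕ) : ℤ) ∣ ((a * (m ^ r - 1) * k : ℕ) : ℤ) := by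
    push_cast [hx1]
    exact h6
  exact_mod_cast this

theorem hostNT2 (m n : ℕ) (hm : 2 ≤ m) (hn : 2 ≤ n) (hmn : Nat.Coprime m n) (a : ℤ)
    (ha : a ≠ 0) :
    ∃ B : ℕ, ∀ N K : ℕ, n ^ N ≤ K →
      n ^ N * ((Finset.range K ×ˢ Finset.range K).filter
        (fun q => ((n ^ N : ℕ) : ℤ) ∣ a * ((m : ℤ) ^ q.1 - (m : ℤ) ^ q.2))).card ≤ B * K ^ 2 := by
  obtain ⟨C, hC, h⟩ := hostNT1 m n hm hn hmn
  set A := a.natAbs * C with hA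
  have hApos : 0 < A := Nat.mul_pos (Int.natAbs_pos.2 ha) hC
  refine ⟨A + 1, fun N K hK => ?_⟩
  set M := n ^ N with hM
  have hMpos : 0 < M := pow_pos (by omega) _
  have hcopM : IsCoprime (M : ℤ) (m : ℤ) := by
    rw [Nat.isCoprime_iff_coprime]
    exact (Nat.Coprime.pow_left _ hmn.symm)
  have hge : ∀ k l : ℕ, l ≤ k → (M : ℤ) ∣ a * ((m : ℤ) ^ k - (m : ℤ) ^ l) →
      A * l ≡ A * k [MOD M] := by
    intro k l hkl hd
    obtain ⟨d, rfl⟩ := Nat.exists_eq_add_of_le hkl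
    have h1 : (M : ℤ) ∣ (m : ℤ) ^ l * (a * ((m : ℤ) ^ d - 1)) := by
      convert hd using 1; ring
    have h2 := (hcopM.pow_right (n := l)).dvd_of_dvd_mul_left h1
    have h3 : (M : ℤ) ∣ (a.natAbs : ℤ) * ((m : ℤ) ^ d - 1) := by
      rw [← Int.dvd_natAbs, Int.natAbs_mul] at h2 ⊢
      simpa using h2
    have h4 := h N d a.natAbs h3
    rw [mul_add]
    exact ((Nat.modEq_zero_iff_dvd.2 h4).symm.add_left (A * l))
  have hall : ∀ k l : ℕ, (M : ℤ) ∣ a * ((m : ℤ) ^ k - (m : ℤ) ^ l) →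
      A * k ≡ A * l [MOD M] := by
    intro k l hd
    rcases le_total l k with hkl | hkl
    · exact (hge k l hkl hd).symm
    · refine hge l k hkl ?_
      rw [show a * ((m : ℤ) ^ l - (m : ℤ) ^ k) = -(a * ((m : ℤ) ^ k - (m : ℤ) ^ l)) by ring,
        dvd_neg]
      exact hd
  have hcard : ((Finset.range K ×ˢ Finset.range K).filter
        (fun q => (M : ℤ) ∣ a * ((m : ℤ) ^ q.1 - (m : ℤ) ^ q.2))).card
        ≤ (Finset.range (A * K / M + 1) ×ˢ Finset.range K).card := by
    refine Finset.card_le_card_of_injOn (fun q => (A * q.1 / M, q.2)) ?_ ?_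
    · intro q hq
      simp only [Finset.coe_filter, Finset.mem_product, Finset.mem_range, Set.mem_ofPred_eq] at hq
      simp only [Finset.coe_product, Set.mem_prod, Finset.coe_range, Set.mem_Iio]
      refine ⟨Nat.lt_succ_of_le (Nat.div_le_div_right (Nat.mul_le_mul_left _ hq.1.1.le)), hq.1.2⟩
    · rintro ⟨k, l⟩ hq ⟨k', l'⟩ hq' heq
      simp only [Finset.coe_filter, Finset.mem_product, Finset.mem_range, Set.mem_ofPred_eq]
        at hq hq'
      simp only [Prod.mk.injEq] at heq ⊢
      obtain ⟨h1, rfl⟩ := heq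
      have h2 : A * k % M = A * k' % M := (hall _ _ hq.2).trans (hall _ _ hq'.2).symm
      have h3 : A * k = A * k' := by
        rw [← Nat.div_add_mod (A * k) M, ← Nat.div_add_mod (A * k') M, h1, h2]
      exact ⟨Nat.eq_of_mul_eq_mul_left hApos h3, rfl⟩
  rw [Finset.card_product, Finset.card_range, Finset.card_range] at hcard
  calc _ ≤ M * ((A * K / M + 1) * K) := Nat.mul_le_mul_left _ hcard
    _ = (M * (A * K / M) + M) * K := by ring
    _ ≤ (A * K + K) * K := Nat.mul_le_mul_right _ (add_le_add (Nat.mul_div_le _ _) hK)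
    _ = _ := by ring

/-- running maximum of Birkhoff sums -/
noncomputable def hostMax {α : Type*} (T : α → α) (f : α → ℝ) : ℕ → α → ℝ
  | 0 => fun _ => 0
  | N + 1 => fun x => max 0 (f x + hostMax T f N (T x))

theorem hostMax_nonneg {α : Type*} (T : α → α) (f : α → ℝ) (N : ℕ) (x : α) :
    0 ≤ hostMax T f N x := by
  cases N with
  | zero => exact le_rfl
  | succ N => exact le_max_left _ _

theorem hostMax_mono {α : Type*} (T : α → α) (f : α → ℝ) (N : ℕ) :
    ∀ x, hostMax T f N x ≤ hostMax T f (N + 1) x := by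
  induction N with
  | zero => intro x; exact hostMax_nonneg _ _ _ _
  | succ N ih =>
    intro x
    exact max_le_max le_rfl (by have := ih (T x); linarith)

theorem hostMax_sum {α : Type*} (T : α → α) (f : α → ℝ) (N : ℕ) :
    ∀ x, ∑ k ∈ Finset.range N, f (T^[k] x) ≤ hostMax T f N x := by
  induction N with
  | zero => intro x; simp [hostMax]
  | succ N ih =>
    intro x
    rw [Finset.sum_range_succ']
    have := ih (T x)
    simp only [Function.iterate_succ, Function.comp, Function.iterate_zero, id] at this ⊢
    refine le_trans ?_ (le_max_right _ _)
    linarith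

theorem hostMax_measurable {α : Type*} [MeasurableSpace α] {T : α → α} (hT : Measurable T)
    {f : α → ℝ} (hf : Measurable f) (N : ℕ) : Measurable (hostMax T f N) := by
  induction N with
  | zero => exact measurable_const
  | succ N ih => exact measurable_const.max (hf.add (ih.comp hT))

theorem hostMax_bdd {α : Type*} (T : α → α) {f : α → ℝ} (hf : ∀ x, f x ≤ 1) (N : ℕ) :
    ∀ x, hostMax T f N x ≤ N := by
  induction N with
  | zero => intro x; simp [hostMax]
  | succ N ih =>
    intro x
    refine max_le (by positivity) ?_
    push_cast
    have := ih (T x)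
    have := hf x
    linarith

theorem hostVisits {α : Type*} [MeasurableSpace α] (ρ : Measure α) [IsProbabilityMeasure ρ]
    (T : α → α) (hT : Ergodic T ρ) (A : Set α) (hA : MeasurableSet A) (hpos : 0 < ρ A) :
    ∃ η : ℝ, 0 < η ∧ ∀ᵐ x ∂ρ, ∀ᶠ N : ℕ in atTop,
      η * N ≤ ∑ k ∈ Finset.range N, A.indicator (fun _ => (1 : ℝ)) (T^[k] x) := by
  have hTm := hT.measurable
  have hposr : 0 < ρ.real A := ENNReal.toReal_pos hpos.ne' (measure_ne_top _ _)
  have hle1 : ρ.real A ≤ 1 := measureReal_le_one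
  set η := ρ.real A / 2 with hη
  have hηpos : 0 < η := by positivity
  set I : α → ℝ := A.indicator (fun _ => (1 : ℝ)) with hI
  have hIm : Measurable I := measurable_const.indicator hA
  have hI0 : ∀ x, 0 ≤ I x := fun x => Set.indicator_nonneg (fun _ _ => zero_le_one) x
  have hI1 : ∀ x, I x ≤ 1 := fun x => Set.indicator_le_self' (fun _ _ => zero_le_one) x
  set f : α → ℝ := fun x => η - I x with hf
  have hfm : Measurable f := measurable_const.sub hIm
  have hf1 : ∀ x, f x ≤ 1 := fun x => by have := hI0 x; simp only [hf]; linarith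
  have hf2 : ∀ x, -1 ≤ f x := fun x => by have := hI1 x; simp only [hf]; linarith
  have hfint : Integrable f ρ := by
    refine Integrable.of_bound hfm.aestronglyMeasurable 1 (Eventually.of_forall fun x => ?_)
    rw [Real.norm_eq_abs, abs_le]; exact ⟨hf2 x, hf1 x⟩
  have hIint : Integrable I ρ := (integrable_const 1).indicator hA
  have hintf : ∫ x, f x ∂ρ = -η := by
    simp only [hf]
    rw [integral_sub (integrable_const _) hIint]
    simp only [hI]
    rw [integral_indicator hA]
    simp [hη]; ring
  set M := hostMax T f with hM
  have hMm : ∀ N, Measurable (M N) := hostMax_measurable hTm hfm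
  have hMint : ∀ N, Integrable (M N) ρ := by
    intro N
    refine Integrable.of_bound (hMm N).aestronglyMeasurable N (Eventually.of_forall fun x => ?_)
    rw [Real.norm_eq_abs, abs_of_nonneg (hostMax_nonneg _ _ _ _)]
    exact hostMax_bdd T hf1 N x
  set F : ℕ → Set α := fun N => {x | M N x = 0} with hF
  have hFm : ∀ N, MeasurableSet (F N) := fun N => (hMm N) (measurableSet_singleton 0)
  have hFanti : Antitone F := by
    refine antitone_nat_of_succ_le fun N x hx => ?_
    have h1 : M (N + 1) x = 0 := hx
    have h2 : M N x ≤ M (N + 1) x := hostMax_mono T f N x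
    have h3 : 0 ≤ M N x := hostMax_nonneg T f N x
    show M N x = 0
    linarith
  have hFge : ∀ N, η ≤ ρ.real (F (N + 1)) := by
    intro N
    have h1 : ∀ x, M (N + 1) x ≤ (F (N + 1))ᶜ.indicator f x + M (N + 1) (T x) := by
      intro x
      by_cases hx : x ∈ F (N + 1)
      · have h2 : M (N + 1) x = 0 := hx
        rw [Set.indicator_of_notMem (by simpa using hx), h2, zero_add]
        exact hostMax_nonneg _ _ _ _
      · rw [Set.indicator_of_mem (by simpa using hx)]
        have h2 : M (N + 1) x ≠ 0 := hx
        have h3 : M (N + 1) x = max 0 (f x + M N (T x)) := rfl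
        have h4 := hostMax_mono T f N (T x)
        rcases max_choice 0 (f x + M N (T x)) with h5 | h5
        · exact absurd (h3.trans h5) h2
        · rw [h3, h5]
          exact add_le_add le_rfl h4
    have hcomp : Integrable (fun x => M (N + 1) (T x)) ρ :=
      hT.toMeasurePreserving.integrable_comp_of_integrable (hMint (N + 1))
    have hind : Integrable ((F (N + 1))ᶜ.indicator f) ρ := hfint.indicator (hFm _).compl
    have h2 := integral_mono (hMint (N + 1)) (hind.add hcomp) h1
    rw [integral_add' hind hcomp] at h2
    have h3 : ∫ x, M (N + 1) (T x) ∂ρ = ∫ x, M (N + 1) x ∂ρ := by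
      have h4 := integral_map (μ := ρ) hTm.aemeasurable
        (f := M (N + 1)) (hMm (N + 1)).aestronglyMeasurable
      rw [hT.map_eq] at h4
      exact h4.symm
    rw [h3, integral_indicator (hFm _).compl] at h2
    have h5 := integral_add_compl (hFm (N + 1)) hfint
    have h6 : -ρ.real (F (N + 1)) ≤ ∫ x in F (N + 1), f x ∂ρ := by
      have : ∫ x in F (N + 1), (-1 : ℝ) ∂ρ ≤ ∫ x in F (N + 1), f x ∂ρ :=
        integral_mono (integrable_const _) hfint.integrableOn hf2
      simpa using this
    rw [hintf] at h5
    linarith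
  have hinter : ρ (⋂ N, F N) ≠ 0 := by
    have ht := tendsto_measure_iInter_atTop (μ := ρ) (fun N => (hFm N).nullMeasurableSet) hFanti
      ⟨0, measure_ne_top _ _⟩
    have ht' := (tendsto_add_atTop_iff_nat 1).2 ht
    have : ENNReal.ofReal η ≤ ρ (⋂ N, F N) := by
      refine ge_of_tendsto' ht' fun N => ?_
      exact (ENNReal.ofReal_le_iff_le_toReal (measure_ne_top _ _)).2 (hFge N)
    intro h0
    rw [h0] at this
    exact absurd (le_antisymm this bot_le) (ENNReal.ofReal_pos.2 hηpos).ne'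
  set V : ℕ → α → ℝ := fun N x => ∑ k ∈ Finset.range N, I (T^[k] x) with hV
  have hVm : ∀ N, Measurable (V N) := fun N =>
    Finset.measurable_sum _ fun k _ => hIm.comp (hTm.iterate k)
  have hVs : ∀ N x, V (N + 1) x = V N (T x) + I x := by
    intro N x
    simp only [hV]
    rw [Finset.sum_range_succ']
    rfl
  have hVnn : ∀ N x, 0 ≤ V N x := fun N x => Finset.sum_nonneg fun k _ => hI0 _
  set W : Set α := {x | ∃ j : ℕ, ∀ N : ℕ, η * N ≤ V N x + j} with hW
  have hWm : MeasurableSet W := by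
    have : W = ⋃ j : ℕ, ⋂ N : ℕ, {x | η * N ≤ V N x + j} := by
      ext x; simp [hW]
    rw [this]
    exact MeasurableSet.iUnion fun j => MeasurableSet.iInter fun N =>
      measurableSet_le measurable_const ((hVm N).add measurable_const)
  have hWinv : T ⁻¹' W = W := by
    ext x
    constructor
    · rintro ⟨j, hj⟩
      refine ⟨j + 1, fun N => ?_⟩
      rcases N with _ | N
      · have := hVnn 0 x
        push_cast; rw [mul_zero]; positivity
      · rw [hVs]
        have := hj N
        have := hI0 x
        push_cast
        linarith
    · rintro ⟨j, hj⟩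
      refine ⟨j + 1, fun N => ?_⟩
      have h1 := hj (N + 1)
      rw [hVs] at h1
      have := hI1 x
      push_cast at h1 ⊢
      linarith
  have hsub : (⋂ N, F N) ⊆ W := by
    intro x hx
    refine ⟨0, fun N => ?_⟩
    have h1 : M N x = 0 := Set.mem_iInter.1 hx N
    have h2 := hostMax_sum T f N x
    simp only [hf, Finset.sum_sub_distrib, Finset.sum_const, Finset.card_range, nsmul_eq_mul] at h2
    have h3 : hostMax T (fun x => η - I x) N x = 0 := h1
    rw [h3] at h2
    simp only [hV, Nat.cast_zero, add_zero]
    linarith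
  have hWae : ∀ᵐ x ∂ρ, x ∈ W := by
    rcases hT.toPreErgodic.ae_mem_or_ae_notMem hWm hWinv with h | h
    · exact h
    · exfalso
      refine hinter (measure_mono_null hsub ?_)
      simpa [ae_iff] using h
  refine ⟨η / 2, by positivity, ?_⟩
  filter_upwards [hWae] with x hx
  obtain ⟨j, hj⟩ := hx
  filter_upwards [eventually_ge_atTop ⌈j / (η / 2)⌉₊] with N hN
  have h1 : (j : ℝ) / (η / 2) ≤ N := Nat.ceil_le.1 hN
  rw [div_le_iff₀ (by positivity)] at h1
  have := hj N
  show η / 2 * N ≤ V N x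
  linarith

/-- Shannon entropy of a finite valued random variable -/
noncomputable def hostH {α ι : Type*} [MeasurableSpace α] [Fintype ι] (ρ : Measure α)
    (X : α → ι) : ℝ := ∑ i, Real.negMulLog (ρ.real (X ⁻¹' {i}))

theorem host_negMulLog_sum {ι : Type*} (s : Finset ι) (p : ι → ℝ) (hp : ∀ i, 0 ≤ p i) :
    Real.negMulLog (∑ i ∈ s, p i) ≤ ∑ i ∈ s, Real.negMulLog (p i) := by
  rw [Real.negMulLog, neg_mul, Finset.sum_mul, ← Finset.sum_neg_distrib]
  refine Finset.sum_le_sum fun i hi => ?_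
  rw [Real.negMulLog, neg_mul]
  refine neg_le_neg ?_
  rcases (hp i).eq_or_lt with h | h
  · rw [← h]; simp
  · refine mul_le_mul_of_nonneg_left (Real.log_le_log h ?_) (hp i)
    exact Finset.single_le_sum (fun j _ => hp j) hi

theorem hostH_comp_le {α ι κ : Type*} [MeasurableSpace α] [Fintype ι] [Fintype κ]
    [MeasurableSpace ι] [MeasurableSingletonClass ι] (ρ : Measure α) [IsProbabilityMeasure ρ]
    (X : α → ι) (hX : Measurable X) (φ : ι → κ) :
    hostH ρ (fun x => φ (X x)) ≤ hostH ρ X := by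
  classical
  unfold hostH
  rw [← Finset.sum_fiberwise (Finset.univ : Finset ι) φ]
  refine Finset.sum_le_sum fun j _ => ?_
  have : ρ.real ((fun x => φ (X x)) ⁻¹' {j}) =
      ∑ i ∈ Finset.univ.filter (fun i => φ i = j), ρ.real (X ⁻¹' {i}) := by
    rw [sum_measureReal_preimage_singleton]
    · congr 1
      ext x; simp
    · intro i _; exact hX (measurableSet_singleton i)
  rw [this]
  exact host_negMulLog_sum _ _ fun i => measureReal_nonneg

theorem hostH_prod_le {α ι κ : Type*} [MeasurableSpace α] [Fintype ι] [Fintype κ]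
    [MeasurableSpace ι] [MeasurableSingletonClass ι] [MeasurableSpace κ]
    [MeasurableSingletonClass κ] (ρ : Measure α) [IsProbabilityMeasure ρ]
    (X : α → ι) (hX : Measurable X) (Y : α → κ) (hY : Measurable Y) :
    hostH ρ (fun x => (X x, Y x)) ≤ hostH ρ X + hostH ρ Y := by
  classical
  set p : ι → ℝ := fun i => ρ.real (X ⁻¹' {i}) with hp
  set q : κ → ℝ := fun j => ρ.real (Y ⁻¹' {j}) with hq
  set r : ι → κ → ℝ := fun i j => ρ.real ((fun x => (X x, Y x)) ⁻¹' {(i, j)}) with hr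
  have hp0 : ∀ i, 0 ≤ p i := fun i => measureReal_nonneg
  have hq0 : ∀ i, 0 ≤ q i := fun i => measureReal_nonneg
  have hr0 : ∀ i j, 0 ≤ r i j := fun i j => measureReal_nonneg
  have hXYm : Measurable (fun x => (X x, Y x)) := hX.prodMk hY
  have hpr : ∀ i, p i = ∑ j, r i j := by
    intro i
    have h1 : p i = ρ.real ((fun x => (X x, Y x)) ⁻¹' ↑(({i} : Finset ι) ×ˢ (Finset.univ : Finset κ))) := by
      simp only [hp]; congr 1; ext x; simp; exact eq_comm
    rw [h1, ← sum_measureReal_preimage_singleton, Finset.sum_product]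
    · simp [hr]
    · intro y _; exact hXYm (measurableSet_singleton y)
  have hqr : ∀ j, q j = ∑ i, r i j := by
    intro j
    have h1 : q j = ρ.real ((fun x => (X x, Y x)) ⁻¹' ↑((Finset.univ : Finset ι) ×ˢ ({j} : Finset κ))) := by
      simp only [hq]; congr 1; ext x; simp; exact eq_comm
    rw [h1, ← sum_measureReal_preimage_singleton, Finset.sum_product]
    · simp [hr]
    · intro y _; exact hXYm (measurableSet_singleton y)
  have hp1 : ∑ i, p i = 1 := by
    simp only [hp]
    rw [sum_measureReal_preimage_singleton _ (fun y _ => hX (measurableSet_singleton y))]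
    simp
  have hq1 : ∑ i, q i = 1 := by
    simp only [hq]
    rw [sum_measureReal_preimage_singleton _ (fun y _ => hY (measurableSet_singleton y))]
    simp
  have hr1 : ∑ i, ∑ j, r i j = 1 := by
    rw [← hp1]; exact Finset.sum_congr rfl fun i _ => (hpr i).symm
  have e1 : hostH ρ (fun x => (X x, Y x)) = ∑ i, ∑ j, Real.negMulLog (r i j) := by
    unfold hostH
    rw [Fintype.sum_prod_type]
  have e2 : hostH ρ X = ∑ i, ∑ j, -(r i j * Real.log (p i)) := by
    unfold hostH
    refine Finset.sum_congr rfl fun i _ => ?_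
    rw [Finset.sum_neg_distrib, ← Finset.sum_mul, ← hpr, Real.negMulLog, neg_mul]
  have e3 : hostH ρ Y = ∑ i, ∑ j, -(r i j * Real.log (q j)) := by
    unfold hostH
    rw [Finset.sum_comm]
    refine Finset.sum_congr rfl fun j _ => ?_
    rw [Finset.sum_neg_distrib, ← Finset.sum_mul, ← hqr, Real.negMulLog, neg_mul]
  have e4 : ∑ i, ∑ j, (p i * q j - r i j) = 0 := by
    simp only [Finset.sum_sub_distrib]
    rw [hr1, ← Finset.sum_mul_sum, hp1, hq1]; norm_num
  have key : ∀ i j, Real.negMulLog (r i j) ≤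
      -(r i j * Real.log (p i)) + -(r i j * Real.log (q j)) + (p i * q j - r i j) := by
    intro i j
    rcases (hr0 i j).eq_or_lt with h | h
    · rw [← h]; simpa using mul_nonneg (hp0 i) (hq0 j)
    · have hpi : 0 < p i := by
        rw [hpr]; exact h.trans_le (Finset.single_le_sum (fun j _ => hr0 i j) (Finset.mem_univ j))
      have hqj : 0 < q j := by
        rw [hqr]
        exact h.trans_le (Finset.single_le_sum (f := fun i => r i j)
          (fun i _ => hr0 i j) (Finset.mem_univ i))
      have h2 := Real.log_le_sub_one_of_pos (show 0 < p i * q j / r i j by positivity)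
      rw [Real.log_div (by positivity) h.ne', Real.log_mul hpi.ne' hqj.ne'] at h2
      have h3 := mul_le_mul_of_nonneg_left h2 h.le
      have h4 : r i j * (p i * q j / r i j - 1) = p i * q j - r i j := by
        field_simp
      rw [h4] at h3
      rw [Real.negMulLog]
      linarith
  have : ∑ i, ∑ j, Real.negMulLog (r i j) ≤ ∑ i, ∑ j,
      (-(r i j * Real.log (p i)) + -(r i j * Real.log (q j)) + (p i * q j - r i j)) :=
    Finset.sum_le_sum fun i _ => Finset.sum_le_sum fun j _ => key i j
  rw [e1, e2, e3]
  simp only [Finset.sum_add_distrib] at this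
  rw [e4] at this
  linarith

theorem hostH_comp_T {α ι : Type*} [MeasurableSpace α] [Fintype ι]
    [MeasurableSpace ι] [MeasurableSingletonClass ι] (ρ : Measure α)
    {T : α → α} (hT : MeasurePreserving T ρ ρ) (X : α → ι) (hX : Measurable X) :
    hostH ρ (fun x => X (T x)) = hostH ρ X := by
  unfold hostH
  refine Finset.sum_congr rfl fun i _ => ?_
  have := hT.measureReal_preimage (hX (measurableSet_singleton i)).nullMeasurableSet
  rw [← this]; rfl

/-- The name of length `N`. -/
def hostName {α ι : Type*} (T : α → α) (X : α → ι) (N : ℕ) (x : α) : Fin N → ι :=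
  fun k => X (T^[(k : ℕ)] x)

theorem hostName_measurable {α ι : Type*} [MeasurableSpace α] [MeasurableSpace ι]
    {T : α → α} (hT : Measurable T) {X : α → ι} (hX : Measurable X) (N : ℕ) :
    Measurable (hostName T X N) :=
  measurable_pi_lambda _ fun k => hX.comp (hT.iterate k)

theorem hostName_succ {α ι : Type*} (T : α → α) (X : α → ι) (N : ℕ) (x : α) :
    hostName T X (N + 1) x = Fin.cons (α := fun _ => ι) (X x) (hostName T X N (T x)) := by
  funext k
  refine Fin.cases ?_ (fun k => ?_) k
  · rfl
  · simp [hostName]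

theorem hostH_name_le {α ι : Type*} [MeasurableSpace α] [Fintype ι]
    [MeasurableSpace ι] [MeasurableSingletonClass ι] (ρ : Measure α) [IsProbabilityMeasure ρ]
    {T : α → α} (hT : MeasurePreserving T ρ ρ) (D : α → ι) (hD : Measurable D) (L : ℕ) :
    hostH ρ (hostName T D L) ≤ L * hostH ρ D := by
  induction L with
  | zero =>
    unfold hostH
    rw [Fintype.sum_unique]
    have : hostName T D 0 ⁻¹' {default} = Set.univ := by
      ext x; simp; exact Subsingleton.elim _ _
    rw [this]; simp
  | succ L ih =>
    have hm := hostName_measurable hT.measurable hD L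
    have h1 : hostName T D (L + 1) = fun x => (fun u : ι × (Fin L → ι) =>
        Fin.cons (α := fun _ => ι) u.1 u.2) (D x, hostName T D L (T x)) := by
      funext x; exact hostName_succ T D L x
    rw [h1]
    have h3 := hostH_comp_le ρ (fun x => (D x, hostName T D L (T x)))
      (hD.prodMk (hm.comp hT.measurable)) (fun u : ι × (Fin L → ι) =>
        Fin.cons (α := fun _ => ι) u.1 u.2)
    have h4 := hostH_prod_le ρ D hD (fun x => hostName T D L (T x)) (hm.comp hT.measurable)
    have h2 := hostH_comp_T ρ hT _ hm
    refine h3.trans (h4.trans ?_)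
    rw [h2]
    push_cast
    linarith

theorem hostH_name_rec {α : Type*} {n : ℕ} [NeZero n] [MeasurableSpace α]
    (ρ : Measure α) [IsProbabilityMeasure ρ]
    {T : α → α} (hT : MeasurePreserving T ρ ρ) (X : α → Fin n) (hX : Measurable X) (N : ℕ)
    (F : (Fin N → Fin n) → Fin n) (L : ℕ) :
    hostH ρ (hostName T X (N + L)) ≤ hostH ρ (hostName T X N) +
      L * hostH ρ (fun x => X x - F (hostName T X N (T x))) := by
  set D : α → Fin n := fun x => X x - F (hostName T X N (T x)) with hD
  have hDm : Measurable D :=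
    (measurable_of_finite (f := fun u : Fin n × Fin n => u.1 - u.2)).comp
      (hX.prodMk ((measurable_of_finite F).comp
        ((hostName_measurable hT.measurable hX N).comp hT.measurable)))
  induction L with
  | zero => simp
  | succ L ih =>
    have hm := hostName_measurable hT.measurable hX (N + L)
    have h1 : hostName T X (N + (L + 1)) = fun x => (fun u : Fin n × (Fin (N + L) → Fin n) =>
        Fin.cons (α := fun _ => Fin n) (u.1 + F (fun k => u.2 (Fin.castAdd L k))) u.2)
          (D x, hostName T X (N + L) (T x)) := by
      funext x
      have := hostName_succ T X (N + L) x
      refine this.trans ?_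
      have h2 : D x + F (fun k => hostName T X (N + L) (T x) (Fin.castAdd L k)) = X x := by
        have : (fun k => hostName T X (N + L) (T x) (Fin.castAdd L k)) = hostName T X N (T x) := by
          funext k; rfl
        rw [this, hD]; simp
      simp only [h2]
    rw [h1]
    have h3 := hostH_comp_le ρ (fun x => (D x, hostName T X (N + L) (T x)))
      (hDm.prodMk (hm.comp hT.measurable)) (fun u : Fin n × (Fin (N + L) → Fin n) =>
        Fin.cons (α := fun _ => Fin n) (u.1 + F (fun k => u.2 (Fin.castAdd L k))) u.2)
    have h4 := hostH_prod_le ρ D hDm (fun x => hostName T X (N + L) (T x)) (hm.comp hT.measurable)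
    have h2 := hostH_comp_T ρ hT _ hm
    refine h3.trans (h4.trans ?_)
    rw [h2]
    push_cast
    linarith

theorem hostH_name_Q {α : Type*} {n q : ℕ} [NeZero q] [MeasurableSpace α]
    (ρ : Measure α) [IsProbabilityMeasure ρ]
    {T : α → α} (hT : MeasurePreserving T ρ ρ) (X : α → Fin n) (hX : Measurable X)
    (Z : α → Fin q) (hZ : Measurable Z) (M : ℕ)
    (F : (Fin M → Fin n) → Fin q) (L : ℕ) :
    hostH ρ (hostName T Z L) ≤ hostH ρ (hostName T X (M + L)) +
      L * hostH ρ (fun x => Z x - F (hostName T X M x)) := by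
  set D : α → Fin q := fun x => Z x - F (hostName T X M x) with hD
  have hDm : Measurable D :=
    (measurable_of_finite (f := fun u : Fin q × Fin q => u.1 - u.2)).comp
      (hZ.prodMk ((measurable_of_finite F).comp
        ((hostName_measurable hT.measurable hX M))))
  have hm := hostName_measurable hT.measurable hX (M + L)
  have hmD := hostName_measurable hT.measurable hDm L
  have h1 : hostName T Z L = fun x => (fun u : (Fin (M + L) → Fin n) × (Fin L → Fin q) =>
      fun k : Fin L => F (fun j : Fin M => u.1 ⟨j + k, by omega⟩) + u.2 k)
      (hostName T X (M + L) x, hostName T D L x) := by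
    funext x k
    simp only [hostName, hD, Function.iterate_add_apply]
    exact (add_sub_cancel (F (hostName T X M (T^[(k : ℕ)] x))) (Z (T^[(k : ℕ)] x))).symm
  rw [h1]
  have h3 := hostH_comp_le ρ (fun x => (hostName T X (M + L) x, hostName T D L x))
    (hm.prodMk hmD) (fun u : (Fin (M + L) → Fin n) × (Fin L → Fin q) =>
      fun k : Fin L => F (fun j : Fin M => u.1 ⟨j + k, by omega⟩) + u.2 k)
  refine h3.trans ((hostH_prod_le ρ _ hm _ hmD).trans ?_)
  have := hostH_name_le ρ hT D hDm L
  linarith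

theorem hostH_name_mono {α : Type*} {n : ℕ} [MeasurableSpace α]
    (ρ : Measure α) [IsProbabilityMeasure ρ]
    {T : α → α} (hT : MeasurePreserving T ρ ρ) (X : α → Fin n) (hX : Measurable X) (M L : ℕ) :
    hostH ρ (hostName T X L) ≤ hostH ρ (hostName T X (M + L)) :=
  hostH_comp_le ρ _ (hostName_measurable hT.measurable hX (M + L))
    (fun u => fun k : Fin L => u ⟨k, by omega⟩)

theorem hostH_small {α : Type*} (q : ℕ) [NeZero q] [MeasurableSpace α]
    (ρ : Measure α) [IsProbabilityMeasure ρ] (ε : ℝ) (hε : 0 < ε) :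
    ∃ δ : ℝ, 0 < δ ∧ ∀ D : α → Fin q, Measurable D → ρ.real {x | D x ≠ 0} ≤ δ →
      hostH ρ D ≤ ε := by
  have hq : 0 < (q : ℝ) := by exact_mod_cast Nat.pos_of_ne_zero (NeZero.ne q)
  have h0 : ∀ᶠ t in nhds (0 : ℝ), Real.negMulLog t < ε / q := by
    have := Real.continuous_negMulLog.tendsto 0
    rw [Real.negMulLog_zero] at this
    exact this.eventually_lt_const (by positivity)
  have h1 : ∀ᶠ t in nhds (0 : ℝ), Real.negMulLog (1 - t) < ε / q := by
    have : Tendsto (fun t : ℝ => Real.negMulLog (1 - t)) (nhds 0) (nhds (Real.negMulLog (1 - 0))) :=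
      (Real.continuous_negMulLog.comp (continuous_const.sub continuous_id)).tendsto 0
    rw [sub_zero, Real.negMulLog_one] at this
    exact this.eventually_lt_const (by positivity)
  obtain ⟨δ, hδ, hb⟩ := Metric.eventually_nhds_iff.1 (h0.and h1)
  refine ⟨δ / 2, by positivity, fun D hD hDs => ?_⟩
  have hterm : ∀ i : Fin q, Real.negMulLog (ρ.real (D ⁻¹' {i})) ≤ ε / q := by
    intro i
    by_cases hi : i = 0
    · subst hi
      have hc : ρ.real (D ⁻¹' {0}) = 1 - ρ.real {x | D x ≠ 0} := by
        have := probReal_compl_eq_one_sub (μ := ρ) (hD (measurableSet_singleton 0)).compl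
        rw [compl_compl] at this
        exact this
      rw [hc]
      refine (hb ?_).2.le
      rw [Real.dist_eq, sub_zero, abs_of_nonneg measureReal_nonneg]
      linarith
    · refine (hb ?_).1.le
      rw [Real.dist_eq, sub_zero, abs_of_nonneg measureReal_nonneg]
      have : ρ.real (D ⁻¹' {i}) ≤ ρ.real {x | D x ≠ 0} := by
        refine measureReal_mono ?_
        intro x hx
        have : D x = i := hx
        show D x ≠ 0
        rw [this]; exact hi
      linarith
  calc hostH ρ D ≤ ∑ i : Fin q, ε / q := Finset.sum_le_sum fun i _ => hterm i
    _ = ε := by simp; field_simp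

theorem hostApprox {α : Type*} {n q : ℕ} [NeZero q] [mα : MeasurableSpace α]
    (ρ : Measure α) [IsProbabilityMeasure ρ]
    (T : α → α) (hTm : Measurable T) (X : α → Fin n) (hX : Measurable X)
    (hgen : mα ≤ MeasurableSpace.generateFrom
      {s | ∃ (N : ℕ) (S : Set (Fin N → Fin n)), s = hostName T X N ⁻¹' S})
    (Z : α → Fin q) (hZ : Measurable Z) (δ : ℝ) (hδ : 0 < δ) :
    ∃ (N : ℕ) (F : (Fin N → Fin n) → Fin q), ρ.real {x | Z x - F (hostName T X N x) ≠ 0} ≤ δ := by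
  classical
  set 𝒜 : Set (Set α) := {s | ∃ (N : ℕ) (S : Set (Fin N → Fin n)), s = hostName T X N ⁻¹' S}
    with h𝒜
  have hup : ∀ (N N' : ℕ) (S : Set (Fin N → Fin n)), N ≤ N' →
      ∃ S' : Set (Fin N' → Fin n), hostName T X N ⁻¹' S = hostName T X N' ⁻¹' S' := by
    intro N N' S hN
    refine ⟨{v | (fun k : Fin N => v ⟨k, by omega⟩) ∈ S}, ?_⟩
    ext x; rfl
  have halg : IsSetAlgebra 𝒜 := by
    refine ⟨⟨0, ∅, by simp⟩, ?_, ?_⟩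
    · rintro s ⟨N, S, rfl⟩
      exact ⟨N, Sᶜ, rfl⟩
    · rintro s t ⟨N, S, rfl⟩ ⟨N', S', rfl⟩
      obtain ⟨S1, h1⟩ := hup N (max N N') S (le_max_left _ _)
      obtain ⟨S2, h2⟩ := hup N' (max N N') S' (le_max_right _ _)
      exact ⟨max N N', S1 ∪ S2, by rw [h1, h2]; rfl⟩
  have hgen' : mα = MeasurableSpace.generateFrom 𝒜 := by
    refine le_antisymm hgen (MeasurableSpace.generateFrom_le ?_)
    rintro s ⟨N, S, rfl⟩
    exact hostName_measurable hTm hX N (Set.toFinite S).measurableSet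
  have hdense := Measure.MeasureDense.of_generateFrom_isSetAlgebra_finite ρ halg hgen'
  have hq : 0 < (q : ℝ) := by exact_mod_cast Nat.pos_of_ne_zero (NeZero.ne q)
  have happ : ∀ i : Fin q, ∃ (N : ℕ) (S : Set (Fin N → Fin n)),
      ρ (symmDiff (Z ⁻¹' {i}) (hostName T X N ⁻¹' S)) < ENNReal.ofReal (δ / q) := by
    intro i
    obtain ⟨t, ⟨N, S, rfl⟩, h⟩ := hdense.approx (Z ⁻¹' {i}) (hZ (measurableSet_singleton i))
      (measure_ne_top _ _) (δ / q) (by positivity)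
    exact ⟨N, S, h⟩
  choose Nf Sf hNf using happ
  set N := Finset.univ.sup Nf with hN
  have happ2 : ∀ i : Fin q, ∃ S' : Set (Fin N → Fin n),
      hostName T X (Nf i) ⁻¹' (Sf i) = hostName T X N ⁻¹' S' :=
    fun i => hup _ _ _ (Finset.le_sup (Finset.mem_univ i))
  choose S hS using happ2
  refine ⟨N, fun v => if h : ∃ i, v ∈ S i then h.choose else 0, ?_⟩
  have hsub : {x | Z x - (fun v => if h : ∃ i, v ∈ S i then h.choose else 0)
      (hostName T X N x) ≠ 0} ⊆ ⋃ i : Fin q, symmDiff (Z ⁻¹' {i}) (hostName T X N ⁻¹' S i) := by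
    intro x hx
    by_contra hcon
    simp only [Set.mem_iUnion, not_exists] at hcon
    have hiff : ∀ i, Z x = i ↔ hostName T X N x ∈ S i := by
      intro i
      have := hcon i
      simp only [Set.mem_symmDiff, Set.mem_preimage, Set.mem_singleton_iff] at this
      tauto
    apply hx
    have hex : ∃ i, hostName T X N x ∈ S i := ⟨Z x, (hiff _).1 rfl⟩
    simp only [dif_pos hex]
    rw [← (hiff _).2 hex.choose_spec, sub_self]
  refine (measureReal_mono hsub (measure_ne_top _ _)).trans ?_
  refine (measureReal_iUnion_fintype_le _).trans ?_
  calc _ ≤ ∑ i : Fin q, δ / q := by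
        refine Finset.sum_le_sum fun i _ => ?_
        have := (hNf i).le
        rw [hS] at this
        exact ENNReal.toReal_le_of_le_ofReal (by positivity) this
    _ = δ := by simp; field_simp

theorem hostEntropyZero {α : Type*} {n : ℕ} [NeZero n] [mα : MeasurableSpace α]
    (ρ : Measure α) [IsProbabilityMeasure ρ]
    (T : α → α) (hT : MeasurePreserving T ρ ρ) (X : α → Fin n) (hX : Measurable X)
    (hgen : mα ≤ MeasurableSpace.generateFrom
      {s | ∃ (N : ℕ) (S : Set (Fin N → Fin n)), s = hostName T X N ⁻¹' S})
    (Y : α → Fin n) (hY : Measurable Y) (hXY : ∀ᵐ x ∂ρ, X x = Y (T x)) :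
    ksEntropy T ρ = 0 := by
  classical
  have hTm := hT.measurable
  refine le_antisymm ?_ bot_le
  refine iSup_le fun q => iSup_le fun P => iSup_le fun hP => ?_
  obtain ⟨hPm, hPd, hPc⟩ := hP
  have hq0 : q ≠ 0 := by
    rintro rfl
    simp at hPc
  haveI : NeZero q := ⟨hq0⟩
  set Z : α → Fin q := fun x => if h : ∃ i, x ∈ P i then h.choose else 0 with hZdef
  have hZP : ∀ x, (∃ i, x ∈ P i) → ∀ i, x ∈ P i ↔ Z x = i := by
    intro x hx i
    have h1 : Z x = hx.choose := by simp only [hZdef, dif_pos hx]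
    have h2 : x ∈ P (Z x) := by rw [h1]; exact hx.choose_spec
    constructor
    · intro hi
      by_contra hne
      exact Set.disjoint_left.1 (hPd hne) h2 hi
    · rintro rfl; exact h2
  have hZm : Measurable Z := by
    refine measurable_to_countable' fun i => ?_
    have : Z ⁻¹' {i} = P i ∪ ((⋃ j, P j)ᶜ ∩ {_x | (0 : Fin q) = i}) := by
      ext x
      by_cases hx : ∃ j, x ∈ P j
      · have := hZP x hx i
        simp only [Set.mem_preimage, Set.mem_singleton_iff, Set.mem_union, Set.mem_inter_iff,
          Set.mem_compl_iff, Set.mem_iUnion]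
        tauto
      · have h1 : Z x = 0 := by simp only [hZdef, dif_neg hx]
        have h2 : x ∉ P i := fun h => hx ⟨i, h⟩
        simp [h1, h2, hx]
        intro h j hj
        exact hx ⟨j, hj⟩
    rw [this]
    exact (hPm i).union ((MeasurableSet.iUnion hPm).compl.inter (MeasurableSet.const _))
  have hae : ∀ᵐ x ∂ρ, ∃ i, x ∈ P i := by
    rw [ae_iff]
    convert hPc using 2
    ext x; simp
  have haeT : ∀ᵐ x ∂ρ, ∀ k : ℕ, ∃ i, T^[k] x ∈ P i := by
    rw [ae_all_iff]
    intro k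
    exact (hT.iterate k).quasiMeasurePreserving.ae hae
  have href : ∀ L : ℕ, finPartitionEntropy ρ (refinedPartition T P L) =
      ENNReal.ofReal (hostH ρ (hostName T Z L)) := by
    intro L
    unfold finPartitionEntropy hostH
    congr 1
    refine Finset.sum_congr rfl fun f _ => ?_
    congr 1
    show (ρ _).toReal = (ρ _).toReal
    congr 1
    refine measure_congr ?_
    filter_upwards [haeT] with x hx
    refine propext ?_
    show x ∈ refinedPartition T P L f ↔ hostName T Z L x = f
    simp only [refinedPartition, Set.mem_iInter, Set.mem_preimage]
    rw [funext_iff]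
    refine forall_congr' fun k => ?_
    exact hZP _ (hx k) (f k)
  simp only [href]
  refine ENNReal.le_of_forall_pos_le_add ?_
  intro ε hε _
  have hε' : (0 : ℝ) < ε := hε
  -- approximations
  obtain ⟨δ1, hδ1, hs1⟩ := hostH_small n ρ ((ε : ℝ) / 3) (by positivity)
  obtain ⟨δ2, hδ2, hs2⟩ := hostH_small q ρ ((ε : ℝ) / 3) (by positivity)
  obtain ⟨N, F, hF⟩ := hostApprox ρ T hTm X hX hgen Y hY δ1 hδ1
  obtain ⟨M, G, hG⟩ := hostApprox ρ T hTm X hX hgen Z hZm δ2 hδ2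
  have hD1 : hostH ρ (fun x => X x - F (hostName T X N (T x))) ≤ ε / 3 := by
    refine hs1 _ ?_ ?_
    · exact (measurable_of_finite (f := fun u : Fin n × Fin n => u.1 - u.2)).comp
        (hX.prodMk ((measurable_of_finite F).comp ((hostName_measurable hTm hX N).comp hTm)))
    · refine le_trans (le_of_eq ?_) hF
      have hms : MeasurableSet {x | Y x - F (hostName T X N x) ≠ 0} := by
        have : Measurable fun x => Y x - F (hostName T X N x) :=
          (measurable_of_finite (f := fun u : Fin n × Fin n => u.1 - u.2)).comp
            (hY.prodMk ((measurable_of_finite F).comp (hostName_measurable hTm hX N)))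
        exact (this (measurableSet_singleton 0)).compl
      rw [← hT.measureReal_preimage hms.nullMeasurableSet]
      show (ρ _).toReal = (ρ _).toReal
      congr 1
      refine measure_congr ?_
      filter_upwards [hXY] with x hx
      refine propext ?_
      show X x - F (hostName T X N (T x)) ≠ 0 ↔ Y (T x) - F (hostName T X N (T x)) ≠ 0
      rw [hx]
  have hD2 : hostH ρ (fun x => Z x - G (hostName T X M x)) ≤ ε / 3 := by
    refine hs2 _ ?_ hG
    exact (measurable_of_finite (f := fun u : Fin q × Fin q => u.1 - u.2)).comp
        (hZm.prodMk ((measurable_of_finite G).comp (hostName_measurable hTm hX M)))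
  set c := hostH ρ (hostName T X N) + M * ((ε : ℝ) / 3) with hc
  have hbound : ∀ L : ℕ, hostH ρ (hostName T Z L) ≤ c + L * (2 * (ε / 3)) := by
    intro L
    have h1 := hostH_name_Q ρ hT X hX Z hZm M G L
    have h2 := hostH_name_mono ρ hT X hX N (M + L)
    have h3 := hostH_name_rec ρ hT X hX N F (M + L)
    have h4 : ((M + L : ℕ) : ℝ) * hostH ρ (fun x => X x - F (hostName T X N (T x))) ≤
        ((M + L : ℕ) : ℝ) * (ε / 3) := mul_le_mul_of_nonneg_left hD1 (by positivity)
    have h5 : (L : ℝ) * hostH ρ (fun x => Z x - G (hostName T X M x)) ≤ L * (ε / 3) :=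
      mul_le_mul_of_nonneg_left hD2 (by positivity)
    push_cast at h3 h4
    simp only [hc]
    linarith
  obtain ⟨L, hL⟩ := exists_nat_ge (c / (ε / 3))
  rw [div_le_iff₀ (by positivity)] at hL
  refine (iInf_le _ L).trans ?_
  rw [zero_add]
  refine ENNReal.div_le_of_le_mul ?_
  rw [ENNReal.ofReal_le_iff_le_toReal]
  · have := hbound (L + 1)
    rw [ENNReal.toReal_mul, ENNReal.toReal_add (by simp) (by simp)]
    simp only [ENNReal.coe_toReal, ENNReal.toReal_natCast, ENNReal.toReal_one]
    push_cast at this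
    nlinarith
  · exact ENNReal.mul_ne_top (by simp) (by simp)

/-- representative in `[0,1)` -/
noncomputable def hostS (x : UnitAddCircle) : ℝ := (AddCircle.equivIco (1 : ℝ) 0 x : ℝ)

theorem hostS_measurable : Measurable hostS :=
  measurable_subtype_coe.comp (AddCircle.measurableEquivIco (1 : ℝ) 0).measurable

theorem hostS_nonneg (x : UnitAddCircle) : 0 ≤ hostS x := (AddCircle.equivIco (1 : ℝ) 0 x).2.1

theorem hostS_lt (x : UnitAddCircle) : hostS x < 1 := by
  have : hostS x < 0 + 1 := (AddCircle.equivIco (1 : ℝ) 0 x).2.2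
  linarith

theorem coe_hostS (x : UnitAddCircle) : ((hostS x : ℝ) : UnitAddCircle) = x :=
  AddCircle.coe_equivIco (p := (1 : ℝ)) (a := 0)

theorem hostS_coe {r : ℝ} (h0 : 0 ≤ r) (h1 : r < 1) : hostS (r : UnitAddCircle) = r :=
  AddCircle.equivIco_coe_of_mem (p := (1 : ℝ)) (a := 0) ⟨h0, by rwa [zero_add]⟩

theorem coe_add_nat (r : ℝ) (k : ℕ) : ((r + k : ℝ) : UnitAddCircle) = (r : UnitAddCircle) := by
  rw [AddCircle.coe_add]
  have : ((k : ℝ) : UnitAddCircle) = 0 := by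
    rw [AddCircle.coe_eq_zero_iff]
    exact ⟨k, by simp⟩
  rw [this, add_zero]

/-- inverse branches -/
noncomputable def hostB (n : ℕ) (i : Fin n) (x : UnitAddCircle) : UnitAddCircle :=
  (((hostS x + (i : ℕ)) / n : ℝ) : UnitAddCircle)

theorem hostB_measurable (n : ℕ) (i : Fin n) : Measurable (hostB n i) :=
  (AddCircle.measurable_mk').comp ((hostS_measurable.add_const _).div_const _)

theorem nsmul_hostB (n : ℕ) (hn : 2 ≤ n) (i : Fin n) (x : UnitAddCircle) :
    n • hostB n i x = x := by
  unfold hostB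
  rw [← AddCircle.coe_nsmul]
  have : n • ((hostS x + (i : ℕ)) / n : ℝ) = hostS x + (i : ℕ) := by
    have : (n : ℝ) ≠ 0 := by positivity
    rw [nsmul_eq_mul]; field_simp
  rw [this, coe_add_nat, coe_hostS]

theorem hostS_hostB (n : ℕ) (hn : 2 ≤ n) (i : Fin n) (x : UnitAddCircle) :
    hostS (hostB n i x) = (hostS x + (i : ℕ)) / n := by
  have h0 := hostS_nonneg x
  have h1 := hostS_lt x
  have hi : ((i : ℕ) : ℝ) + 1 ≤ n := by exact_mod_cast i.2
  have hn' : (0 : ℝ) < n := by positivity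
  refine hostS_coe (by positivity) ?_
  rw [div_lt_one hn']
  linarith

/-- first digit -/
noncomputable def hostX (n : ℕ) [NeZero n] (x : UnitAddCircle) : Fin n :=
  ⟨⌊(n : ℝ) * hostS x⌋₊, by
    have hn : (0 : ℝ) < n := by exact_mod_cast Nat.pos_of_ne_zero (NeZero.ne n)
    rw [Nat.floor_lt (mul_nonneg hn.le (hostS_nonneg x))]
    have := hostS_lt x
    nlinarith⟩

theorem hostX_measurable (n : ℕ) [NeZero n] : Measurable (hostX n) := by
  refine measurable_to_countable' fun i => ?_
  have : hostX n ⁻¹' {i} = (fun x => ⌊(n : ℝ) * hostS x⌋₊) ⁻¹' {(i : ℕ)} := by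
    ext x; simp [hostX, Fin.ext_iff]
  rw [this]
  exact (Nat.measurable_floor.comp (hostS_measurable.const_mul _)) (measurableSet_singleton _)

theorem hostX_hostB (n : ℕ) [NeZero n] (hn : 2 ≤ n) (i : Fin n) (x : UnitAddCircle) :
    hostX n (hostB n i x) = i := by
  have hn' : (n : ℝ) ≠ 0 := by positivity
  apply Fin.ext
  show ⌊(n : ℝ) * hostS (hostB n i x)⌋₊ = i
  rw [hostS_hostB n hn, mul_div_cancel₀ _ hn', Nat.floor_add_natCast (hostS_nonneg x),
    Nat.floor_eq_zero.2 (hostS_lt x), zero_add]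

theorem hostS_nsmul (n : ℕ) [NeZero n] (x : UnitAddCircle) :
    hostS (n • x) = n * hostS x - (hostX n x : ℕ) := by
  have hnn : (0 : ℝ) ≤ (n : ℝ) * hostS x := mul_nonneg (by positivity) (hostS_nonneg x)
  have h1 : n • x = ((n * hostS x - (hostX n x : ℕ) : ℝ) : UnitAddCircle) := by
    rw [← coe_add_nat _ (hostX n x : ℕ), sub_add_cancel, ← nsmul_eq_mul, AddCircle.coe_nsmul,
      coe_hostS]
  rw [h1]
  have h2 : ((hostX n x : ℕ) : ℝ) ≤ n * hostS x := Nat.floor_le hnn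
  have h3 : n * hostS x < ((hostX n x : ℕ) : ℝ) + 1 := Nat.lt_floor_add_one _
  exact hostS_coe (by linarith) (by linarith)

theorem hostB_hostX (n : ℕ) [NeZero n] (hn : 2 ≤ n) (y : UnitAddCircle) :
    hostB n (hostX n y) (n • y) = y := by
  have hn' : (n : ℝ) ≠ 0 := by positivity
  unfold hostB
  rw [hostS_nsmul, sub_add_cancel, mul_div_cancel_left₀ _ hn', coe_hostS]

theorem host_generates (n : ℕ) [NeZero n] (hn : 2 ≤ n) :
    (inferInstance : MeasurableSpace UnitAddCircle) ≤ MeasurableSpace.generateFrom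
      {s | ∃ (N : ℕ) (S : Set (Fin N → Fin n)),
        s = hostName (fun x : UnitAddCircle => n • x) (hostX n) N ⁻¹' S} := by
  set T : UnitAddCircle → UnitAddCircle := fun x => n • x with hT
  set σ' := MeasurableSpace.generateFrom
      {s | ∃ (N : ℕ) (S : Set (Fin N → Fin n)), s = hostName T (hostX n) N ⁻¹' S} with hσ
  have hn' : (n : ℝ) ≠ 0 := by positivity
  set u : ℕ → UnitAddCircle → ℝ := fun N x =>
    ∑ k : Fin N, ((hostName T (hostX n) N x k).val : ℝ) / n ^ ((k : ℕ) + 1) with hu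
  have hum : ∀ N, @Measurable _ _ σ' _ (u N) := by
    intro N s _
    refine MeasurableSpace.measurableSet_generateFrom
      ⟨N, {v | ∑ k : Fin N, ((v k : ℕ) : ℝ) / n ^ ((k : ℕ) + 1) ∈ s}, rfl⟩
  have hus : ∀ N x, hostS x = u N x + hostS (T^[N] x) / n ^ N := by
    intro N x
    have hu' : u N x = ∑ k ∈ Finset.range N, ((hostX n (T^[k] x) : ℕ) : ℝ) / n ^ (k + 1) :=
      Fin.sum_univ_eq_sum_range (fun k => ((hostX n (T^[k] x) : ℕ) : ℝ) / n ^ (k + 1)) N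
    rw [hu']
    clear hu'
    induction N with
    | zero => simp
    | succ N ih =>
      rw [Finset.sum_range_succ, Function.iterate_succ_apply']
      have : hostS (T (T^[N] x)) = n * hostS (T^[N] x) - (hostX n (T^[N] x) : ℕ) :=
        hostS_nsmul n _
      rw [this, ih]
      field_simp
      ring
  have hlim : ∀ x, Tendsto (fun N => u N x) atTop (nhds (hostS x)) := by
    intro x
    have h1 : Tendsto (fun N : ℕ => hostS (T^[N] x) / (n : ℝ) ^ N) atTop (nhds 0) := by
      have h2 : Tendsto (fun N : ℕ => ((n : ℝ)⁻¹) ^ N) atTop (nhds 0) := by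
        refine tendsto_pow_atTop_nhds_zero_of_lt_one (by positivity) ?_
        refine inv_lt_one_of_one_lt₀ ?_
        exact_mod_cast hn
      refine squeeze_zero (fun N => div_nonneg (hostS_nonneg _) (by positivity)) (fun N => ?_) h2
      rw [inv_pow, div_eq_mul_inv]
      exact mul_le_of_le_one_left (by positivity) (hostS_lt _).le
    have h3 := (tendsto_const_nhds (x := hostS x)).sub h1
    rw [sub_zero] at h3
    refine h3.congr fun N => ?_
    rw [hus N x]; ring
  have hsm : @Measurable _ _ σ' _ hostS :=
    @measurable_of_tendsto_metrizable _ _ σ' _ _ _ _ u hostS hum (tendsto_pi_nhds.2 hlim)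
  intro s hs
  have h1 : @MeasurableSet _ σ' (hostS ⁻¹' ((fun r : ℝ => (r : UnitAddCircle)) ⁻¹' s)) :=
    hsm (AddCircle.measurable_mk' hs)
  convert h1 using 1
  ext x
  simp [coe_hostS]

theorem hostG (n : ℕ) [NeZero n] (hn : 2 ≤ n) (ρ : Measure UnitAddCircle) [IsProbabilityMeasure ρ]
    (hT : MeasurePreserving (fun x : UnitAddCircle => n • x) ρ ρ) :
    ∃ g : UnitAddCircle → ℝ≥0∞, Measurable g ∧ (∀ x, g x ≤ 1) ∧
      (∀ f : UnitAddCircle → ℝ≥0∞, Measurable f →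
        ∫⁻ x, f x ∂ρ = ∫⁻ x, ∑ i : Fin n, g (hostB n i x) * f (hostB n i x) ∂ρ) ∧
      ((∀ᵐ x ∂ρ, g x = 1) → ∃ Y : UnitAddCircle → Fin n, Measurable Y ∧
        ∀ᵐ x ∂ρ, hostX n x = Y (n • x)) := by
  classical
  set T : UnitAddCircle → UnitAddCircle := fun x => n • x with hTdef
  have hTm : Measurable T := hT.measurable
  have hXm := hostX_measurable n
  set P : Fin n → Set UnitAddCircle := fun i => hostX n ⁻¹' {i} with hP
  have hPm : ∀ i, MeasurableSet (P i) := fun i => hXm (measurableSet_singleton i)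
  set κ : Fin n → Measure UnitAddCircle := fun i => (ρ.restrict (P i)).map T with hκ
  have hκle : ∀ i, κ i ≤ ρ := by
    intro i
    calc κ i ≤ ρ.map T := Measure.map_mono Measure.restrict_le_self hTm
      _ = ρ := hT.map_eq
  haveI hfin : ∀ i, IsFiniteMeasure (κ i) := fun i => isFiniteMeasure_of_le ρ (hκle i)
  haveI hleb : ∀ i, (κ i).HaveLebesgueDecomposition ρ := fun i => by
    haveI := hfin i
    exact Measure.haveLebesgueDecomposition_of_sigmaFinite (κ i) ρ
  have hκac : ∀ i, κ i ≪ ρ := fun i => Measure.absolutelyContinuous_of_le (hκle i)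
  set G : Fin n → UnitAddCircle → ℝ≥0∞ := fun i x => min ((κ i).rnDeriv ρ x) 1 with hG
  have hGm : ∀ i, Measurable (G i) := fun i => (Measure.measurable_rnDeriv _ _).min measurable_const
  have hGae : ∀ i, ∀ᵐ x ∂ρ, G i x = (κ i).rnDeriv ρ x := by
    intro i
    filter_upwards [Measure.rnDeriv_le_one_of_le (hκle i)] with x hx
    exact min_eq_left hx
  have hGint : ∀ i, ∀ f : UnitAddCircle → ℝ≥0∞, Measurable f →
      ∫⁻ x, G i x * f x ∂ρ = ∫⁻ y in P i, f (T y) ∂ρ := by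
    intro i f hf
    have h1 : ∫⁻ x, G i x * f x ∂ρ = ∫⁻ x, (κ i).rnDeriv ρ x * f x ∂ρ := by
      refine lintegral_congr_ae ?_
      filter_upwards [hGae i] with x hx
      rw [hx]
    have h2 : ∫⁻ x, f x ∂(κ i) = ∫⁻ y in P i, f (T y) ∂ρ := lintegral_map hf hTm
    rw [h1, lintegral_rnDeriv_mul (hκac i) hf.aemeasurable, h2]
  refine ⟨fun y => G (hostX n y) (T y), ?_, fun x => min_le_right _ _, ?_, ?_⟩
  · have : (fun y => G (hostX n y) (T y)) =
        (fun z : Fin n × UnitAddCircle => G z.1 z.2) ∘ (fun y => (hostX n y, T y)) := rfl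
    rw [this]
    exact (measurable_from_prod_countable_right hGm).comp (hXm.prodMk hTm)
  · intro f hf
    have h1 : ∀ x, ∀ i : Fin n, G (hostX n (hostB n i x)) (T (hostB n i x)) * f (hostB n i x)
        = G i x * f (hostB n i x) := by
      intro x i
      rw [hostX_hostB n hn]
      simp only [hTdef, nsmul_hostB n hn]
    simp only [h1]
    rw [lintegral_finsetSum (f := fun i x => G i x * f (hostB n i x)) _
      (fun i _ => (hGm i).mul (hf.comp (hostB_measurable n i)))]
    have h2 : ∀ i, ∫⁻ x, G i x * f (hostB n i x) ∂ρ = ∫⁻ y in P i, f y ∂ρ := by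
      intro i
      rw [hGint i (fun x => f (hostB n i x)) (hf.comp (hostB_measurable n i))]
      refine setLIntegral_congr_fun (hPm i) fun y hy => ?_
      have : hostX n y = i := hy
      simp only [hTdef]
      rw [← this, hostB_hostX n hn]
    simp only [h2]
    have hU : (⋃ i ∈ (Finset.univ : Finset (Fin n)), P i) = Set.univ := by
      ext x; simp [hP]
    rw [← lintegral_biUnion_finset (fun i _ j _ hij => ?_) (fun i _ => hPm i), hU,
      setLIntegral_univ]
    exact Set.disjoint_left.2 fun x hx hx' => hij ((show hostX n x = i from hx).symm.trans hx')
  · intro hg1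
    set B : Fin n → Set UnitAddCircle := fun i => {x | G i x = 1} with hB
    have hBm : ∀ i, MeasurableSet (B i) := fun i => hGm i (measurableSet_singleton 1)
    have hkey : ∀ j, ∀ᵐ y ∂ρ, T y ∈ B j → hostX n y = j := by
      intro j
      have h1 := hGint j ((B j).indicator 1) (measurable_one.indicator (hBm j))
      have h2 : ∫⁻ x, G j x * (B j).indicator 1 x ∂ρ = ρ (T ⁻¹' B j) := by
        rw [hT.measure_preimage (hBm j).nullMeasurableSet, ← lintegral_indicator_one (hBm j)]
        refine lintegral_congr fun x => ?_
        by_cases hx : x ∈ B j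
        · have : G j x = 1 := hx
          simp [hx, this]
        · simp [hx]
      have h3 : ∫⁻ y in P j, (B j).indicator 1 (T y) ∂ρ = ρ (T ⁻¹' B j ∩ P j) := by
        rw [← Measure.restrict_apply (hTm (hBm j)), ← lintegral_indicator_one (hTm (hBm j))]
        rfl
      rw [h2, h3] at h1
      have h4 : ρ (T ⁻¹' B j \ P j) = 0 := by
        have := measure_inter_add_sdiff (μ := ρ) (T ⁻¹' B j) (hPm j)
        rw [← h1] at this
        exact (ENNReal.add_right_inj (measure_ne_top ρ (T ⁻¹' B j))).1 (this.trans (add_zero _).symm)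
      rw [ae_iff]
      refine measure_mono_null ?_ h4
      intro y hy
      simp only [Set.mem_ofPred_eq, not_forall] at hy
      exact ⟨hy.1, hy.2⟩
    set p : UnitAddCircle → ℕ → Prop := fun x N => (∃ h : N < n, x ∈ B ⟨N, h⟩) ∨ N = n with hp
    have hpe : ∀ x, ∃ N, p x N := fun x => ⟨n, Or.inr rfl⟩
    have hfm : Measurable fun x => Nat.find (hpe x) := by
      refine measurable_find hpe fun k => ?_
      by_cases hk : k < n
      · have : {x | p x k} = B ⟨k, hk⟩ := by
          ext x
          simp [hp, hk, hk.ne]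
        rw [this]; exact hBm _
      · have : {x | p x k} = {_x | k = n} := by
          ext x
          simp [hp, hk]
        rw [this]; exact MeasurableSet.const _
    set c : ℕ → Fin n := fun N => if h : N < n then ⟨N, h⟩ else 0 with hc
    refine ⟨fun x => c (Nat.find (hpe x)), (measurable_of_countable c).comp hfm, ?_⟩
    filter_upwards [hg1, ae_all_iff.2 hkey] with y hy1 hy2
    apply hy2
    have hsp := Nat.find_spec (hpe (T y))
    have hle : Nat.find (hpe (T y)) ≤ (hostX n y : ℕ) :=
      Nat.find_min' _ (Or.inl ⟨(hostX n y).2, hy1⟩)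
    have hlt : Nat.find (hpe (T y)) < n := hle.trans_lt (hostX n y).2
    rcases hsp with ⟨h, hmem⟩ | heq
    · show T y ∈ B (c (Nat.find (hpe (T y))))
      simp only [hc, dif_pos h]
      exact hmem
    · omega

noncomputable def hostL (n : ℕ) {M : Type*} [AddCommMonoid M] (f : UnitAddCircle → M) :
    UnitAddCircle → M := fun x => ∑ i : Fin n, f (hostB n i x)

theorem hostL_iter_hom (n : ℕ) {M M' : Type*} [AddCommMonoid M] [AddCommMonoid M']
    (φ : M →+ M') (N : ℕ) (f : UnitAddCircle → M) :
    (hostL n)^[N] (fun x => φ (f x)) = fun x => φ ((hostL n)^[N] f x) := by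
  induction N generalizing f with
  | zero => rfl
  | succ N ih =>
    rw [Function.iterate_succ_apply, Function.iterate_succ_apply, ← ih]
    congr 1
    funext x
    simp [hostL, map_sum]

theorem hostL_iter_sum (n : ℕ) {M ι : Type*} [AddCommMonoid M] (s : Finset ι)
    (N : ℕ) (F : ι → UnitAddCircle → M) :
    (hostL n)^[N] (fun x => ∑ j ∈ s, F j x) = fun x => ∑ j ∈ s, (hostL n)^[N] (F j) x := by
  induction N generalizing F with
  | zero => rfl
  | succ N ih =>
    simp only [Function.iterate_succ_apply]
    rw [← ih]
    congr 1
    funext x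
    simp only [hostL]
    rw [Finset.sum_comm]

theorem hostL_iter_pull (n : ℕ) (hn : 2 ≤ n) (N : ℕ) (g h : UnitAddCircle → ℝ≥0∞) :
    (hostL n)^[N] (fun y => g ((fun x : UnitAddCircle => n • x)^[N] y) * h y)
      = fun x => g x * (hostL n)^[N] h x := by
  induction N generalizing h with
  | zero => rfl
  | succ N ih =>
    simp only [Function.iterate_succ_apply]
    rw [← ih]
    congr 1
    funext x
    simp only [hostL, nsmul_hostB n hn, Finset.mul_sum]

theorem hostL_iter_mono (n : ℕ) (N : ℕ) (f h : UnitAddCircle → ℝ≥0∞) (hfh : ∀ x, f x ≤ h x) :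
    ∀ x, (hostL n)^[N] f x ≤ (hostL n)^[N] h x := by
  induction N generalizing f h with
  | zero => exact hfh
  | succ N ih =>
    simp only [Function.iterate_succ_apply]
    exact ih _ _ fun x => Finset.sum_le_sum fun i _ => hfh _

theorem hostL_iter_measurable (n : ℕ) (N : ℕ) (f : UnitAddCircle → ℝ≥0∞) (hf : Measurable f) :
    Measurable ((hostL n)^[N] f) := by
  induction N generalizing f with
  | zero => exact hf
  | succ N ih =>
    simp only [Function.iterate_succ_apply]
    refine ih _ ?_
    exact Finset.measurable_sum _ fun i _ => hf.comp (hostB_measurable n i)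

theorem host_transfer (n : ℕ) (hn : 2 ≤ n) (ρ : Measure UnitAddCircle)
    (g : UnitAddCircle → ℝ≥0∞) (hg : Measurable g)
    (hgi : ∀ f : UnitAddCircle → ℝ≥0∞, Measurable f →
        ∫⁻ x, f x ∂ρ = ∫⁻ x, ∑ i : Fin n, g (hostB n i x) * f (hostB n i x) ∂ρ)
    (hTm : Measurable (fun x : UnitAddCircle => n • x))
    (N : ℕ) (f : UnitAddCircle → ℝ≥0∞) (hf : Measurable f) :
    ∫⁻ x, f x ∂ρ = ∫⁻ x, (hostL n)^[N]
      (fun y => (∏ k ∈ Finset.range N, g ((fun x : UnitAddCircle => n • x)^[k] y)) * f y) x ∂ρ := by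
  induction N with
  | zero => simp
  | succ N ih =>
    have hm : Measurable (fun y => (∏ k ∈ Finset.range N,
        g ((fun x : UnitAddCircle => n • x)^[k] y)) * f y) :=
      (Finset.measurable_prod _ fun k _ => hg.comp (hTm.iterate k)).mul hf
    rw [ih, hgi _ (hostL_iter_measurable n N _ hm)]
    refine lintegral_congr fun x => ?_
    rw [Function.iterate_succ_apply']
    have := hostL_iter_pull n hn N g (fun y => (∏ k ∈ Finset.range N,
        g ((fun x : UnitAddCircle => n • x)^[k] y)) * f y)
    have h2 : (fun y => (∏ k ∈ Finset.range (N + 1),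
        g ((fun x : UnitAddCircle => n • x)^[k] y)) * f y) =
        fun y => g ((fun x : UnitAddCircle => n • x)^[N] y) * ((∏ k ∈ Finset.range N,
        g ((fun x : UnitAddCircle => n • x)^[k] y)) * f y) := by
      funext y
      rw [Finset.prod_range_succ]
      ring
    rw [h2, this]
    rfl

theorem host_transfer_bound (n : ℕ) (hn : 2 ≤ n) (ρ : Measure UnitAddCircle)
    (g : UnitAddCircle → ℝ≥0∞) (hg : Measurable g)
    (hgi : ∀ f : UnitAddCircle → ℝ≥0∞, Measurable f →
        ∫⁻ x, f x ∂ρ = ∫⁻ x, ∑ i : Fin n, g (hostB n i x) * f (hostB n i x) ∂ρ)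
    (hTm : Measurable (fun x : UnitAddCircle => n • x))
    (N : ℕ) (f : UnitAddCircle → ℝ≥0∞) (hf : Measurable f) (t : ℝ≥0∞) :
    ∫⁻ x, {y | ∏ k ∈ Finset.range N, g ((fun x : UnitAddCircle => n • x)^[k] y) ≤ t}.indicator f x ∂ρ
      ≤ ∫⁻ x, t * (hostL n)^[N] f x ∂ρ := by
  have hpm : Measurable (fun y => ∏ k ∈ Finset.range N,
        g ((fun x : UnitAddCircle => n • x)^[k] y)) :=
    Finset.measurable_prod _ fun k _ => hg.comp (hTm.iterate k)
  have hS : MeasurableSet {y | ∏ k ∈ Finset.range N,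
      g ((fun x : UnitAddCircle => n • x)^[k] y) ≤ t} := measurableSet_le hpm measurable_const
  rw [host_transfer n hn ρ g hg hgi hTm N _ (hf.indicator hS)]
  refine lintegral_mono fun x => ?_
  have h1 := congrFun (hostL_iter_hom n (AddMonoidHom.mulLeft t) N f) x
  simp only [AddMonoidHom.coe_mulLeft] at h1
  rw [← h1]
  refine hostL_iter_mono n N _ _ (fun y => ?_) x
  by_cases hy : y ∈ {y | ∏ k ∈ Finset.range N, g ((fun x : UnitAddCircle => n • x)^[k] y) ≤ t}
  · rw [Set.indicator_of_mem hy]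
    gcongr
    exact hy
  · rw [Set.indicator_of_notMem hy]
    simp

theorem hostL_fourier_mul (n : ℕ) (hn : 2 ≤ n) (b : ℤ) :
    hostL n (fun y : UnitAddCircle => fourier ((n : ℤ) * b) y) = fun x => (n : ℂ) * fourier b x := by
  funext x
  have : ∀ i : Fin n, (fourier ((n : ℤ) * b) (hostB n i x) : ℂ) = fourier b x := by
    intro i
    rw [fourier_apply, fourier_apply, mul_comm, mul_smul, natCast_zsmul, nsmul_hostB n hn]
  simp [hostL, this]

theorem hostL_fourier_not (n : ℕ) (hn : 2 ≤ n) (a : ℤ) (ha : ¬ (n : ℤ) ∣ a) :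
    hostL n (fun y : UnitAddCircle => (fourier a y : ℂ)) = fun _ => 0 := by
  funext x
  have hn' : (n : ℂ) ≠ 0 := by
    have : n ≠ 0 := by omega
    exact_mod_cast this
  set ζ : ℂ := Complex.exp (2 * Real.pi * Complex.I * a / n) with hζ
  have hζn : ζ ^ n = 1 := by
    rw [hζ, ← Complex.exp_nat_mul, Complex.exp_eq_one_iff]
    exact ⟨a, by field_simp⟩
  have hζ1 : ζ ≠ 1 := by
    intro h
    rw [hζ, Complex.exp_eq_one_iff] at h
    obtain ⟨k, hk⟩ := h
    apply ha
    refine ⟨k, ?_⟩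
    have hpi : (2 * Real.pi * Complex.I : ℂ) ≠ 0 := Complex.two_pi_I_ne_zero
    have h2 : (a : ℂ) = n * k := by
      have h3 : (2 * Real.pi * Complex.I : ℂ) * a = (2 * Real.pi * Complex.I : ℂ) * (n * k) := by
        field_simp at hk ⊢
        linear_combination hk
      exact mul_left_cancel₀ hpi h3
    exact_mod_cast h2
  have hterm : ∀ i : Fin n, (fourier a (hostB n i x) : ℂ) =
      Complex.exp (2 * Real.pi * Complex.I * a * hostS x / n) * ζ ^ (i : ℕ) := by
    intro i
    rw [hostB, fourier_coe_apply, hζ, ← Complex.exp_nat_mul, ← Complex.exp_add]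
    congr 1
    push_cast
    field_simp
  simp only [hostL, hterm]
  rw [← Finset.mul_sum, Fin.sum_univ_eq_sum_range (fun i => ζ ^ i) n]
  have h0 : ∑ i ∈ Finset.range n, ζ ^ i = 0 := by
    have := mul_geom_sum ζ n
    rw [hζn, sub_self] at this
    exact (mul_eq_zero.1 this).resolve_left (sub_ne_zero.2 hζ1)
  rw [h0, mul_zero]

theorem hostL_iter_fourier (n : ℕ) (hn : 2 ≤ n) (N : ℕ) (a : ℤ) (x : UnitAddCircle) :
    ‖(hostL n)^[N] (fun y : UnitAddCircle => (fourier a y : ℂ)) x‖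
      ≤ if ((n ^ N : ℕ) : ℤ) ∣ a then ((n ^ N : ℕ) : ℝ) else 0 := by
  induction N generalizing a x with
  | zero => simpa using (Circle.norm_coe _).le
  | succ N ih =>
    rw [Function.iterate_succ_apply]
    by_cases h : (n : ℤ) ∣ a
    · obtain ⟨b, rfl⟩ := h
      rw [hostL_fourier_mul n hn b]
      have h1 := congrFun (hostL_iter_hom n (AddMonoidHom.mulLeft (n : ℂ)) N
        (fun y : UnitAddCircle => (fourier b y : ℂ))) x
      simp only [AddMonoidHom.coe_mulLeft] at h1
      rw [h1, norm_mul, Complex.norm_natCast]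
      have hn0 : (n : ℤ) ≠ 0 := by omega
      have h2 : ((n ^ (N + 1) : ℕ) : ℤ) ∣ n * b ↔ ((n ^ N : ℕ) : ℤ) ∣ b := by
        push_cast
        rw [pow_succ', mul_dvd_mul_iff_left hn0]
      have h3 := mul_le_mul_of_nonneg_left (ih b x) (Nat.cast_nonneg (α := ℝ) n)
      refine h3.trans (le_of_eq ?_)
      simp only [h2]
      split_ifs
      · push_cast; ring
      · simp
    · rw [hostL_fourier_not n hn a h]
      have h1 := congrFun (hostL_iter_sum (M := ℂ) n (∅ : Finset ℕ) N (fun _ _ => 0)) x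
      simp only [Finset.sum_empty] at h1
      rw [h1, norm_zero]
      split_ifs
      · positivity
      · exact le_rfl

noncomputable def hostW (m : ℕ) (a : ℤ) (K : ℕ) (x : UnitAddCircle) : ℂ :=
  (K : ℂ)⁻¹ * ∑ k ∈ Finset.range K, (fourier a (m ^ k • x) : ℂ)

theorem hostW_sq (m : ℕ) (a : ℤ) (K : ℕ) (x : UnitAddCircle) :
    (((‖hostW m a K x‖₊ ^ 2 : NNReal) : ℝ) : ℂ) = ∑ q ∈ Finset.range K ×ˢ Finset.range K,
      ((K : ℂ)⁻¹ ^ 2) * (fourier (a * ((m : ℤ) ^ q.1 - (m : ℤ) ^ q.2)) x : ℂ) := by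
  have h1 : (((‖hostW m a K x‖₊ ^ 2 : NNReal) : ℝ) : ℂ) =
      hostW m a K x * (starRingEnd ℂ) (hostW m a K x) := by
    rw [Complex.mul_conj, Complex.normSq_eq_norm_sq]
    simp
  rw [h1, hostW, map_mul, map_sum, ← Finset.mul_sum, Finset.sum_product]
  have h2 : ∀ k l : ℕ, (fourier (a * ((m : ℤ) ^ k - (m : ℤ) ^ l)) x : ℂ) =
      fourier a (m ^ k • x) * (starRingEnd ℂ) (fourier a (m ^ l • x)) := by
    intro k l
    rw [← fourier_neg]
    simp only [fourier_apply]
    rw [← Circle.coe_mul, ← AddCircle.toCircle_add]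
    congr 2
    rw [← natCast_zsmul, ← natCast_zsmul, smul_smul, smul_smul, ← add_smul]
    congr 1
    push_cast; ring
  simp only [h2, ← Finset.mul_sum, ← Finset.sum_mul]
  simp
  ring

theorem hostW_measurable (m : ℕ) (a : ℤ) (K : ℕ) : Measurable (hostW m a K) := by
  unfold hostW
  have : Continuous (fun x : UnitAddCircle =>
      (K : ℂ)⁻¹ * ∑ k ∈ Finset.range K, (fourier a (m ^ k • x) : ℂ)) := by fun_prop
  exact this.measurable

theorem hostL_W (m n : ℕ) (hm : 2 ≤ m) (hn : 2 ≤ n) (hmn : Nat.Coprime m n)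
    (a : ℤ) (ha : a ≠ 0) :
    ∃ B : ℕ, ∀ N K, n ^ N ≤ K → ∀ x,
      (hostL n)^[N] (fun y => ((‖hostW m a K y‖₊ ^ 2 : NNReal) : ℝ≥0∞)) x ≤ B := by
  obtain ⟨B, hB⟩ := hostNT2 m n hm hn hmn a ha
  refine ⟨B, fun N K hNK x => ?_⟩
  have h1 := congrFun (hostL_iter_hom n (ENNReal.ofNNRealHom : NNReal →+* ℝ≥0∞).toAddMonoidHom N
    (fun y => (‖hostW m a K y‖₊ ^ 2 : NNReal))) x
  have h1' : (hostL n)^[N] (fun y => ((‖hostW m a K y‖₊ ^ 2 : NNReal) : ℝ≥0∞)) x =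
      (((hostL n)^[N] (fun y => (‖hostW m a K y‖₊ ^ 2 : NNReal)) x : NNReal) : ℝ≥0∞) := h1
  rw [h1']
  set r : NNReal := (hostL n)^[N] (fun y => (‖hostW m a K y‖₊ ^ 2 : NNReal)) x with hr
  have h2 := congrFun (hostL_iter_hom n (Complex.ofRealHom.comp NNReal.toRealHom).toAddMonoidHom N
    (fun y => (‖hostW m a K y‖₊ ^ 2 : NNReal))) x
  have h2' : ((r : ℝ) : ℂ) =
      (hostL n)^[N] (fun y => (((‖hostW m a K y‖₊ ^ 2 : NNReal) : ℝ) : ℂ)) x := h2.symm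
  have hK : 0 < K := lt_of_lt_of_le (by positivity) hNK
  have h3 : (r : ℝ) ≤ B := by
    have h4 : (r : ℝ) = ‖((r : ℝ) : ℂ)‖ := by simp
    rw [h4, h2']
    simp only [hostW_sq]
    rw [hostL_iter_sum]
    have h5 : ∀ q : ℕ × ℕ, ‖(hostL n)^[N] (fun x : UnitAddCircle => ((K : ℂ)⁻¹ ^ 2) *
        (fourier (a * ((m : ℤ) ^ q.1 - (m : ℤ) ^ q.2)) x : ℂ)) x‖ ≤ ((K : ℝ)⁻¹ ^ 2) *
        if ((n ^ N : ℕ) : ℤ) ∣ a * ((m : ℤ) ^ q.1 - (m : ℤ) ^ q.2) then ((n ^ N : ℕ) : ℝ) else 0 := by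
      intro q
      have h6 := congrFun (hostL_iter_hom n (AddMonoidHom.mulLeft ((K : ℂ)⁻¹ ^ 2)) N
        (fun y : UnitAddCircle => (fourier (a * ((m : ℤ) ^ q.1 - (m : ℤ) ^ q.2)) y : ℂ))) x
      simp only [AddMonoidHom.coe_mulLeft] at h6
      rw [h6, norm_mul, norm_pow, norm_inv, Complex.norm_natCast]
      exact mul_le_mul_of_nonneg_left (hostL_iter_fourier n hn N _ x) (by positivity)
    refine (norm_sum_le _ _).trans ((Finset.sum_le_sum fun q _ => h5 q).trans ?_)
    rw [← Finset.mul_sum, ← Finset.sum_filter, Finset.sum_const, nsmul_eq_mul]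
    have h7 : ((n ^ N * ((Finset.range K ×ˢ Finset.range K).filter (fun q =>
      ((n ^ N : ℕ) : ℤ) ∣ a * ((m : ℤ) ^ q.1 - (m : ℤ) ^ q.2))).card : ℕ) : ℝ) ≤
        ((B * K ^ 2 : ℕ) : ℝ) := by exact_mod_cast hB N K hNK
    rw [inv_pow, inv_mul_le_iff₀ (by positivity)]
    push_cast at h7 ⊢
    linarith
  have h8 : r ≤ (B : NNReal) := by exact_mod_cast h3
  calc (r : ℝ≥0∞) ≤ ((B : NNReal) : ℝ≥0∞) := by exact_mod_cast h8
    _ = B := by simp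

theorem host_summable (n : ℕ) (hn : 2 ≤ n) (c : ℝ) (hc : 1 < c) (θ : ℝ) (h0 : 0 < θ) (h1 : θ < 1) :
    Summable (fun j : ℕ => θ ^ (Nat.log n ⌊c ^ j⌋₊)) := by
  have hn1 : (1 : ℝ) < n := by exact_mod_cast hn
  have hn0 : (0 : ℝ) < n := by linarith
  have hlogn : 0 < Real.log n := Real.log_pos hn1
  set s : ℝ := -Real.log θ / Real.log n with hs
  have hs0 : 0 < s := div_pos (neg_pos.2 (Real.log_neg h0 h1)) hlogn
  have hθ : θ = (n : ℝ) ^ (-s) := by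
    rw [Real.rpow_def_of_pos hn0, hs]
    have : Real.log n * (-(-Real.log θ / Real.log n)) = Real.log θ := by field_simp
    rw [this, Real.exp_log h0]
  have hc0 : 0 < c := by linarith
  have hd : 0 < 1 - c⁻¹ := sub_pos.2 (inv_lt_one_of_one_lt₀ hc)
  have hr : c ^ (-s) < 1 := Real.rpow_lt_one_of_one_lt_of_neg hc (neg_lt_zero.2 hs0)
  have hsum := (summable_geometric_of_lt_one (Real.rpow_nonneg hc0.le (-s)) hr).mul_left
    (θ⁻¹ * (1 - c⁻¹) ^ (-s))
  refine Summable.of_nonneg_of_le (fun j => by positivity) (fun j => ?_) hsum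
  set N := Nat.log n ⌊c ^ j⌋₊ with hN
  have h2 : (1 - c⁻¹) * c ^ j ≤ ((n : ℝ)) ^ (N + 1) := by
    refine (mul_pow_le_nat_floor_pow hc j).trans ?_
    have := (Nat.lt_pow_succ_log_self (b := n) (by omega) ⌊c ^ j⌋₊).le
    exact_mod_cast this
  have h3 := Real.rpow_le_rpow_of_nonpos (by positivity) h2 (neg_nonpos.2 hs0.le)
  have h4 : ((n : ℝ) ^ (N + 1)) ^ (-s) = θ ^ (N + 1) := by
    rw [hθ, ← Real.rpow_natCast, ← Real.rpow_natCast, ← Real.rpow_mul hn0.le,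
      ← Real.rpow_mul hn0.le, mul_comm]
  have h5 : ((1 - c⁻¹) * c ^ j) ^ (-s) = (1 - c⁻¹) ^ (-s) * (c ^ (-s)) ^ j := by
    rw [Real.mul_rpow hd.le (by positivity), ← Real.rpow_natCast, ← Real.rpow_natCast,
      ← Real.rpow_mul hc0.le, ← Real.rpow_mul hc0.le, mul_comm (j : ℝ)]
  rw [h4, h5] at h3
  have h6 : θ ^ N = θ⁻¹ * θ ^ (N + 1) := by
    rw [pow_succ']; field_simp
  rw [h6, mul_assoc]
  exact mul_le_mul_of_nonneg_left h3 (by positivity)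

theorem host_log_tendsto (n : ℕ) (hn : 2 ≤ n) (c : ℝ) (hc : 1 < c) :
    Tendsto (fun j : ℕ => Nat.log n ⌊c ^ j⌋₊) atTop atTop := by
  have h1 : Tendsto (fun j : ℕ => ⌊c ^ j⌋₊) atTop atTop :=
    tendsto_nat_floor_atTop.comp (tendsto_pow_atTop_atTop_of_one_lt hc)
  refine tendsto_atTop.2 fun b => ?_
  filter_upwards [tendsto_atTop.1 h1 (n ^ b)] with j hj
  exact Nat.le_log_of_pow_le (by omega) hj

theorem host_floor_pos (c : ℝ) (hc : 1 < c) (j : ℕ) : ⌊c ^ j⌋₊ ≠ 0 := by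
  have : 1 ≤ ⌊c ^ j⌋₊ := Nat.le_floor (by simpa using one_le_pow₀ hc.le)
  omega

theorem host_subseq (m n : ℕ) (hm : 2 ≤ m) (hn : 2 ≤ n) (hmn : Nat.Coprime m n)
    (ρ : Measure UnitAddCircle) [IsProbabilityMeasure ρ]
    (g : UnitAddCircle → ℝ≥0∞) (hg : Measurable g)
    (hgi : ∀ f : UnitAddCircle → ℝ≥0∞, Measurable f →
        ∫⁻ x, f x ∂ρ = ∫⁻ x, ∑ i : Fin n, g (hostB n i x) * f (hostB n i x) ∂ρ)
    (hTm : Measurable (fun x : UnitAddCircle => n • x))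
    (θ : ℝ) (h0 : 0 < θ) (h1 : θ < 1)
    (hev : ∀ᵐ x ∂ρ, ∀ᶠ N : ℕ in atTop,
      ∏ k ∈ Finset.range N, g ((fun x : UnitAddCircle => n • x)^[k] x) ≤ ENNReal.ofReal (θ ^ N))
    (c : ℝ) (hc : 1 < c) (a : ℤ) (ha : a ≠ 0) :
    ∀ᵐ x ∂ρ, Tendsto (fun j : ℕ => hostW m a ⌊c ^ j⌋₊ x) atTop (nhds 0) := by
  obtain ⟨B, hB⟩ := hostL_W m n hm hn hmn a ha
  set Nj : ℕ → ℕ := fun j => Nat.log n ⌊c ^ j⌋₊ with hNj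
  set S : ℕ → Set UnitAddCircle := fun N =>
    {y | ∏ k ∈ Finset.range N, g ((fun x : UnitAddCircle => n • x)^[k] y) ≤ ENNReal.ofReal (θ ^ N)}
    with hS
  have hSm : ∀ N, MeasurableSet (S N) := fun N => measurableSet_le
    (Finset.measurable_prod _ fun k _ => hg.comp (hTm.iterate k)) measurable_const
  set W : ℕ → UnitAddCircle → ℝ≥0∞ := fun K y => ((‖hostW m a K y‖₊ ^ 2 : NNReal) : ℝ≥0∞) with hW
  have hWm : ∀ K, Measurable (W K) := fun K =>
    ((hostW_measurable m a K).nnnorm.pow_const 2).coe_nnreal_ennreal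
  set F : ℕ → UnitAddCircle → ℝ≥0∞ := fun j => (S (Nj j)).indicator (W ⌊c ^ j⌋₊) with hF
  have hFm : ∀ j, Measurable (F j) := fun j => (hWm _).indicator (hSm _)
  have hFi : ∀ j, ∫⁻ x, F j x ∂ρ ≤ ENNReal.ofReal (θ ^ Nj j) * B := by
    intro j
    refine (host_transfer_bound n hn ρ g hg hgi hTm (Nj j) (W ⌊c ^ j⌋₊) (hWm _) _).trans ?_
    calc _ ≤ ∫⁻ _x, ENNReal.ofReal (θ ^ Nj j) * B ∂ρ := by
          refine lintegral_mono fun x => ?_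
          gcongr
          exact hB _ _ (Nat.pow_log_le_self n (host_floor_pos c hc j)) x
      _ = _ := by simp
  have hfin : ∫⁻ x, ∑' j, F j x ∂ρ ≠ ∞ := by
    rw [lintegral_tsum fun j => (hFm j).aemeasurable]
    refine ne_top_of_le_ne_top ?_ (ENNReal.tsum_le_tsum hFi)
    rw [ENNReal.tsum_mul_right, ← ENNReal.ofReal_tsum_of_nonneg (fun j => by positivity)
      (host_summable n hn c hc θ h0 h1)]
    exact ENNReal.mul_ne_top ENNReal.ofReal_ne_top (ENNReal.natCast_ne_top B)
  have hlt := ae_lt_top (Measurable.tsum hFm) hfin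
  filter_upwards [hlt, hev] with x hx1 hx2
  have h2 : Tendsto (fun j => F j x) atTop (nhds 0) :=
    ENNReal.tendsto_atTop_zero_of_tsum_ne_top hx1.ne
  have h3 : Tendsto (fun j => W ⌊c ^ j⌋₊ x) atTop (nhds 0) := by
    refine h2.congr' ?_
    filter_upwards [(host_log_tendsto n hn c hc).eventually hx2] with j hj
    exact Set.indicator_of_mem (show x ∈ S (Nj j) from hj) _
  have h4 : Tendsto (fun j => ‖hostW m a ⌊c ^ j⌋₊ x‖₊ ^ 2) atTop (nhds 0) := by
    rw [← ENNReal.tendsto_coe]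
    exact h3
  have h5 : Tendsto (fun j => ‖hostW m a ⌊c ^ j⌋₊ x‖ ^ 2) atTop (nhds 0) := by
    have := (NNReal.tendsto_coe.2 h4)
    simpa using this
  have h6 := h5.sqrt
  rw [Real.sqrt_zero] at h6
  rw [tendsto_zero_iff_norm_tendsto_zero]
  refine h6.congr fun j => ?_
  rw [Real.sqrt_sq (norm_nonneg _)]

theorem host_interp (v : ℕ → ℝ) (hv : ∀ k, |v k| ≤ 1)
    (h : ∀ i : ℕ, Tendsto (fun j : ℕ => ((⌊(1 + 1 / ((i : ℝ) + 1)) ^ j⌋₊ : ℕ) : ℝ)⁻¹ *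
      ∑ k ∈ Finset.range ⌊(1 + 1 / ((i : ℝ) + 1)) ^ j⌋₊, v k) atTop (nhds 0)) :
    Tendsto (fun K : ℕ => (K : ℝ)⁻¹ * ∑ k ∈ Finset.range K, v k) atTop (nhds 0) := by
  set u : ℕ → ℝ := fun K => ∑ k ∈ Finset.range K, (1 + v k) with hu
  have hmono : Monotone u := by
    refine monotone_nat_of_le_succ fun K => ?_
    simp only [hu, Finset.sum_range_succ]
    have := (abs_le.1 (hv K)).1
    linarith
  have hue : ∀ K : ℕ, K ≠ 0 → u K / K = 1 + (K : ℝ)⁻¹ * ∑ k ∈ Finset.range K, v k := by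
    intro K hK
    have : (K : ℝ) ≠ 0 := by exact_mod_cast hK
    simp only [hu, Finset.sum_add_distrib]
    simp
    field_simp
  have h1c : ∀ i : ℕ, (1 : ℝ) < 1 + 1 / ((i : ℝ) + 1) := by
    intro i
    have : (0 : ℝ) < 1 / ((i : ℝ) + 1) := by positivity
    linarith
  have key := tendsto_div_of_monotone_of_tendsto_div_floor_pow u 1 hmono
    (fun i : ℕ => 1 + 1 / ((i : ℝ) + 1)) h1c
    (by simpa using (tendsto_one_div_add_atTop_nhds_zero_nat (𝕜 := ℝ)).const_add 1)
    (fun i => by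
      have := (h i).const_add 1
      rw [add_zero] at this
      exact this.congr fun j => (hue _ (host_floor_pos _ (h1c i) j)).symm)
  have k2 := key.sub_const 1
  rw [sub_self] at k2
  refine k2.congr' ?_
  filter_upwards [eventually_ne_atTop 0] with K hK
  rw [hue K hK]; ring

theorem host_interp_W (m : ℕ) (a : ℤ) (x : UnitAddCircle)
    (h : ∀ i : ℕ, Tendsto (fun j : ℕ => hostW m a ⌊(1 + 1 / ((i : ℝ) + 1)) ^ j⌋₊ x) atTop (nhds 0)) :
    Tendsto (fun K : ℕ => hostW m a K x) atTop (nhds 0) := by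
  have hnorm : ∀ k, ‖(fourier a (m ^ k • x) : ℂ)‖ ≤ 1 := fun k => by
    rw [fourier_apply]; exact (Circle.norm_coe _).le
  have hre : ∀ K, (hostW m a K x).re =
      (K : ℝ)⁻¹ * ∑ k ∈ Finset.range K, (fourier a (m ^ k • x) : ℂ).re := by
    intro K
    rw [hostW, ← Complex.ofReal_natCast, ← Complex.ofReal_inv, Complex.re_ofReal_mul, Complex.re_sum]
  have him : ∀ K, (hostW m a K x).im =
      (K : ℝ)⁻¹ * ∑ k ∈ Finset.range K, (fourier a (m ^ k • x) : ℂ).im := by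
    intro K
    rw [hostW, ← Complex.ofReal_natCast, ← Complex.ofReal_inv, Complex.im_ofReal_mul, Complex.im_sum]
  have r := host_interp (fun k => (fourier a (m ^ k • x) : ℂ).re)
    (fun k => (Complex.abs_re_le_norm _).trans (hnorm k)) (fun i => by
      have := (Complex.continuous_re.tendsto 0).comp (h i)
      simpa only [Function.comp_def, hre, Complex.zero_re] using this)
  have s := host_interp (fun k => (fourier a (m ^ k • x) : ℂ).im)
    (fun k => (Complex.abs_im_le_norm _).trans (hnorm k)) (fun i => by
      have := (Complex.continuous_im.tendsto 0).comp (h i)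
      simpa only [Function.comp_def, him, Complex.zero_im] using this)
  have r' := (Complex.continuous_ofReal.tendsto 0).comp r
  have s' := ((Complex.continuous_ofReal.tendsto 0).comp s).mul_const Complex.I
  have := r'.add s'
  simp only [Complex.ofReal_zero, zero_mul, add_zero] at this
  refine this.congr fun K => ?_
  simp only [Function.comp_def, ← hre, ← him]
  exact Complex.re_add_im _

theorem host_int_fourier (a : ℤ) (ha : a ≠ 0) :
    ∫ y, (fourier a y : ℂ) ∂(volume : Measure UnitAddCircle) = 0 :=
  integral_eq_zero_of_add_right_eq_neg (fourier_add_half_inv_index ha one_pos)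

theorem host_weyl (m : ℕ) (x : UnitAddCircle)
    (h : ∀ a : ℤ, a ≠ 0 → Tendsto (fun K : ℕ => hostW m a K x) atTop (nhds 0))
    (f : C(UnitAddCircle, ℝ)) :
    Tendsto (fun N : ℕ => (N : ℝ)⁻¹ * ∑ k ∈ Finset.range N,
          f ((fun y : UnitAddCircle => m • y)^[k] x))
        atTop (nhds (∫ y, f y ∂(volume : Measure UnitAddCircle))) := by
  have hit : ∀ k, (fun y : UnitAddCircle => m • y)^[k] x = m ^ k • x := by
    intro k
    induction k with
    | zero => simp
    | succ k ih => rw [Function.iterate_succ_apply', ih, pow_succ', mul_smul]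
  simp only [hit]
  set A : ℕ → C(UnitAddCircle, ℂ) → ℂ := fun N p =>
    (N : ℂ)⁻¹ * ∑ k ∈ Finset.range N, p (m ^ k • x) with hA
  have hint : ∀ p : C(UnitAddCircle, ℂ), Integrable p (volume : Measure UnitAddCircle) :=
    fun p => p.continuous.integrable_of_hasCompactSupport (HasCompactSupport.of_compactSpace p)
  have huniv : (volume : Measure UnitAddCircle) Set.univ = 1 := by
    rw [AddCircle.measure_univ]; simp
  have hprob : IsProbabilityMeasure (volume : Measure UnitAddCircle) := ⟨huniv⟩
  have hspan : ∀ p ∈ Submodule.span ℂ (Set.range (@fourier (1 : ℝ))),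
      Tendsto (fun N => A N p) atTop (nhds (∫ y, p y ∂(volume : Measure UnitAddCircle))) := by
    intro p hp
    induction hp using Submodule.span_induction with
    | mem p hp =>
      obtain ⟨a, rfl⟩ := hp
      by_cases ha : a = 0
      · subst ha
        have : ∫ y, (fourier 0 y : ℂ) ∂(volume : Measure UnitAddCircle) = 1 := by
          simp [fourier_zero]
        rw [this]
        refine tendsto_const_nhds.congr' ?_
        filter_upwards [eventually_ne_atTop 0] with N hN
        have : (N : ℂ) ≠ 0 := by exact_mod_cast hN
        simp only [hA, fourier_zero]
        simp [this]
      · rw [host_int_fourier a ha]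
        exact h a ha
    | zero => simp [hA]
    | add p q _ _ hp hq =>
      have : ∫ y, (p + q) y ∂(volume : Measure UnitAddCircle) = (∫ y, p y) + ∫ y, q y :=
        integral_add (hint p) (hint q)
      rw [this]
      refine (hp.add hq).congr fun N => ?_
      simp only [hA, ContinuousMap.add_apply, Finset.sum_add_distrib, mul_add]
    | smul c p _ hp =>
      have : ∫ y, (c • p) y ∂(volume : Measure UnitAddCircle) = c * ∫ y, p y :=
        integral_const_mul c _
      rw [this]
      refine (hp.const_mul c).congr fun N => ?_
      simp only [hA, ContinuousMap.smul_apply, smul_eq_mul, ← Finset.mul_sum]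
      ring
  have hAd : ∀ N p q, ‖A N p - A N q‖ ≤ ‖p - q‖ := by
    intro N p q
    have h1 : A N p - A N q = (N : ℂ)⁻¹ * ∑ k ∈ Finset.range N, (p - q) (m ^ k • x) := by
      simp only [hA, ContinuousMap.sub_apply, Finset.sum_sub_distrib, mul_sub]
    rw [h1, norm_mul, norm_inv, Complex.norm_natCast]
    have h2 : ‖∑ k ∈ Finset.range N, (p - q) (m ^ k • x)‖ ≤ N * ‖p - q‖ := by
      refine (norm_sum_le _ _).trans ?_
      refine (Finset.sum_le_sum fun k _ => (p - q).norm_coe_le_norm _).trans ?_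
      simp
    rcases Nat.eq_zero_or_pos N with rfl | hN
    · simp
    · have : (0 : ℝ) < N := by exact_mod_cast hN
      rw [inv_mul_le_iff₀ this]
      exact h2
  have hId : ∀ p q : C(UnitAddCircle, ℂ), ‖(∫ y, p y ∂(volume : Measure UnitAddCircle)) -
      ∫ y, q y ∂(volume : Measure UnitAddCircle)‖ ≤ ‖p - q‖ := by
    intro p q
    rw [← integral_sub (hint p) (hint q)]
    have := norm_integral_le_of_norm_le_const (μ := (volume : Measure UnitAddCircle))
      (f := fun y => p y - q y) (C := ‖p - q‖)
      (Eventually.of_forall fun y => (p - q).norm_coe_le_norm y)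
    simpa using this
  have hall : ∀ p : C(UnitAddCircle, ℂ),
      Tendsto (fun N => A N p) atTop (nhds (∫ y, p y ∂(volume : Measure UnitAddCircle))) := by
    intro p
    have hp : p ∈ closure (Submodule.span ℂ (Set.range (@fourier (1 : ℝ))) : Set _) := by
      rw [← Submodule.topologicalClosure_coe, span_fourier_closure_eq_top]
      trivial
    rw [Metric.tendsto_atTop]
    intro ε hε
    obtain ⟨q, hq, hpq⟩ := Metric.mem_closure_iff.1 hp (ε / 3) (by positivity)
    obtain ⟨N0, hN0⟩ := Metric.tendsto_atTop.1 (hspan q hq) (ε / 3) (by positivity)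
    refine ⟨N0, fun N hN => ?_⟩
    have h1 := hN0 N hN
    rw [dist_eq_norm] at hpq
    have h2 : dist (A N p) (A N q) ≤ ‖p - q‖ := by rw [dist_eq_norm]; exact hAd N p q
    have h3 : dist (∫ y, p y ∂(volume : Measure UnitAddCircle))
      (∫ y, q y ∂(volume : Measure UnitAddCircle)) ≤ ‖p - q‖ := by rw [dist_eq_norm]; exact hId p q
    have h4 := dist_triangle4_right (A N p) (∫ y, p y ∂(volume : Measure UnitAddCircle))
      (A N q) (∫ y, q y ∂(volume : Measure UnitAddCircle))
    linarith
  have hf := hall ⟨fun y => (f y : ℂ), Complex.continuous_ofReal.comp f.continuous⟩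
  have hfi : ∫ y, ((f y : ℝ) : ℂ) ∂(volume : Measure UnitAddCircle) =
    ((∫ y, f y ∂(volume : Measure UnitAddCircle) : ℝ) : ℂ) := integral_ofReal
  simp only [ContinuousMap.coe_mk, hfi] at hf
  have hf2 := (Complex.continuous_re.tendsto _).comp hf
  rw [Complex.ofReal_re] at hf2
  refine hf2.congr fun N => ?_
  simp only [hA, ContinuousMap.coe_mk, Function.comp_def]
  rw [← Complex.ofReal_natCast, ← Complex.ofReal_inv, Complex.re_ofReal_mul, Complex.re_sum]
  simp

theorem host_gN_decay (n : ℕ) (ρ : Measure UnitAddCircle) [IsProbabilityMeasure ρ]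
    (hE : Ergodic (fun x : UnitAddCircle => n • x) ρ)
    (g : UnitAddCircle → ℝ≥0∞) (hg : Measurable g) (hg1 : ∀ x, g x ≤ 1)
    (hne : ¬ ∀ᵐ x ∂ρ, g x = 1) :
    ∃ θ : ℝ, 0 < θ ∧ θ < 1 ∧ ∀ᵐ x ∂ρ, ∀ᶠ N : ℕ in atTop,
      ∏ k ∈ Finset.range N, g ((fun x : UnitAddCircle => n • x)^[k] x) ≤ ENNReal.ofReal (θ ^ N) := by
  set d : ℕ → ℝ := fun k => 1 - (1 / 2) * (1 / ((k : ℝ) + 1)) with hd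
  have hdlt : ∀ k, d k < 1 := fun k => by
    have : (0 : ℝ) < 1 / ((k : ℝ) + 1) := by positivity
    simp only [hd]; linarith
  have hdpos : ∀ k, 0 < d k := fun k => by
    have : 1 / ((k : ℝ) + 1) ≤ 1 := by
      rw [div_le_one (by positivity)]
      have : (0 : ℝ) ≤ k := Nat.cast_nonneg k
      linarith
    simp only [hd]; linarith
  have hdlim : Tendsto d atTop (nhds 1) := by
    have := ((tendsto_one_div_add_atTop_nhds_zero_nat (𝕜 := ℝ)).const_mul (1 / 2)).const_sub 1
    rw [mul_zero, sub_zero] at this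
    exact this
  have hex : ∃ k, 0 < ρ {x | g x ≤ ENNReal.ofReal (d k)} := by
    by_contra hcon
    push Not at hcon
    apply hne
    have h1 : ∀ k, ∀ᵐ x ∂ρ, ¬ g x ≤ ENNReal.ofReal (d k) := by
      intro k
      rw [ae_iff]
      simpa using hcon k
    filter_upwards [ae_all_iff.2 h1] with x hx
    refine le_antisymm (hg1 x) ?_
    have h2 : Tendsto (fun k => ENNReal.ofReal (d k)) atTop (nhds (ENNReal.ofReal 1)) :=
      ENNReal.tendsto_ofReal hdlim
    rw [ENNReal.ofReal_one] at h2
    exact le_of_tendsto' h2 fun k => (not_le.1 (hx k)).le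
  obtain ⟨k, hk⟩ := hex
  set c := d k with hc
  have hc0 : 0 < c := hdpos k
  have hc1 : c < 1 := hdlt k
  set A : Set UnitAddCircle := {x | g x ≤ ENNReal.ofReal c} with hA
  have hAm : MeasurableSet A := measurableSet_le hg measurable_const
  obtain ⟨η, hη, hvis⟩ := hostVisits ρ _ hE A hAm hk
  refine ⟨c ^ η, Real.rpow_pos_of_pos hc0 η, Real.rpow_lt_one hc0.le hc1 hη, ?_⟩
  filter_upwards [hvis] with x hx
  filter_upwards [hx] with N hN
  have h1 : ∀ y, g y ≤ ENNReal.ofReal (c ^ (A.indicator (fun _ => (1 : ℝ)) y)) := by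
    intro y
    by_cases hy : y ∈ A
    · rw [Set.indicator_of_mem hy, Real.rpow_one]; exact hy
    · rw [Set.indicator_of_notMem hy, Real.rpow_zero, ENNReal.ofReal_one]; exact hg1 y
  refine (Finset.prod_le_prod' fun k _ => h1 _).trans ?_
  rw [← ENNReal.ofReal_prod_of_nonneg (fun k _ => Real.rpow_nonneg hc0.le _),
    ← Real.rpow_sum_of_pos hc0]
  refine ENNReal.ofReal_le_ofReal ?_
  rw [← Real.rpow_natCast, ← Real.rpow_mul hc0.le]
  exact Real.rpow_le_rpow_of_exponent_ge hc0 hc1.le hN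

theorem host_ergodic (m n : ℕ) (hm : 2 ≤ m) (hn : 2 ≤ n) (hmn : Nat.Coprime m n)
    (ρ : Measure UnitAddCircle) [IsProbabilityMeasure ρ]
    (hE : Ergodic (fun x : UnitAddCircle => n • x) ρ)
    (hent : ksEntropy (fun x : UnitAddCircle => n • x) ρ ≠ 0) :
    ∀ᵐ x ∂ρ, ∀ a : ℤ, a ≠ 0 → Tendsto (fun K : ℕ => hostW m a K x) atTop (nhds 0) := by
  haveI : NeZero n := ⟨by omega⟩
  have hT := hE.toMeasurePreserving
  obtain ⟨g, hg, hg1, hgi, hgY⟩ := hostG n hn ρ hT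
  have hne : ¬ ∀ᵐ x ∂ρ, g x = 1 := by
    intro h
    obtain ⟨Y, hY, hXY⟩ := hgY h
    exact hent (hostEntropyZero ρ _ hT (hostX n) (hostX_measurable n) (host_generates n hn) Y hY hXY)
  obtain ⟨θ, h0, h1, hev⟩ := host_gN_decay n ρ hE g hg hg1 hne
  rw [ae_all_iff]
  intro a
  by_cases ha : a = 0
  · exact Eventually.of_forall fun x hx => absurd ha hx
  have h2 : ∀ i : ℕ, ∀ᵐ x ∂ρ, Tendsto (fun j : ℕ =>
      hostW m a ⌊(1 + 1 / ((i : ℝ) + 1)) ^ j⌋₊ x) atTop (nhds 0) := by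
    intro i
    have : (0 : ℝ) < 1 / ((i : ℝ) + 1) := by positivity
    exact host_subseq m n hm hn hmn ρ g hg hgi hT.measurable θ h0 h1 hev _ (by linarith) a ha
  filter_upwards [ae_all_iff.2 h2] with x hx _
  exact host_interp_W m a x hx

/-- Host: Let `m` and `n` be relatively prime integers, each at least 2,
and let `μ` be a `×n`-invariant Borel probability measure on `𝕋` whose ergodic
components with respect to `×n` have entropy bounded below by a positive constant.
Then for `μ`-a.e. `x` the orbit of `x` under iterates of `×m` equidistributes with
respect to Lebesgue measure. -/
theorem host_equidistribution_of_times_m_orbits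
    (m n : ℕ) (hm : 2 ≤ m) (hn : 2 ≤ n) (hmn : Nat.Coprime m n)
    (μ : Measure UnitAddCircle) [IsProbabilityMeasure μ]
    (hinv : Measure.map (fun x : UnitAddCircle => n • x) μ = μ)
    (hdec : ∃ (h₀ : ℝ≥0∞), 0 < h₀ ∧ ∃ ν : Measure (Measure UnitAddCircle),
      (∀ᵐ ρ ∂ν, IsProbabilityMeasure ρ ∧
        Ergodic (fun x : UnitAddCircle => n • x) ρ ∧
        h₀ ≤ ksEntropy (fun x : UnitAddCircle => n • x) ρ) ∧
      ∀ A : Set UnitAddCircle, MeasurableSet A → μ A = ∫⁻ ρ, ρ A ∂ν) :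
    ∀ᵐ x ∂μ, ∀ f : C(UnitAddCircle, ℝ),
      Tendsto (fun N : ℕ => (N : ℝ)⁻¹ * ∑ k ∈ Finset.range N,
          f ((fun y : UnitAddCircle => m • y)^[k] x))
        atTop (nhds (∫ y, f y ∂(volume : Measure UnitAddCircle))) := by
  obtain ⟨h₀, hh₀, ν, hν, hμ⟩ := hdec
  have hSm : MeasurableSet {x : UnitAddCircle | ∀ a : ℤ, a ≠ 0 →
      Tendsto (fun K : ℕ => hostW m a K x) atTop (nhds 0)} := by
    simp only [Set.ofPred_forall]
    exact MeasurableSet.iInter fun a => MeasurableSet.iInter fun _ =>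
      measurableSet_tendsto _ fun K => hostW_measurable m a K
  have hae : ∀ᵐ x ∂μ, ∀ a : ℤ, a ≠ 0 →
      Tendsto (fun K : ℕ => hostW m a K x) atTop (nhds 0) := by
    rw [ae_iff]
    have h1 := hμ _ hSm.compl
    have h2 : ∫⁻ ρ, ρ ({x : UnitAddCircle | ∀ a : ℤ, a ≠ 0 →
        Tendsto (fun K : ℕ => hostW m a K x) atTop (nhds 0)}ᶜ) ∂ν = 0 := by
      rw [← lintegral_zero (μ := ν)]
      refine lintegral_congr_ae ?_
      filter_upwards [hν] with ρ hρ
      obtain ⟨hP, hE, hh⟩ := hρ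
      exact host_ergodic m n hm hn hmn ρ hE (hh₀.trans_le hh).ne'
    exact h1.trans h2
  filter_upwards [hae] with x hx f
  exact host_weyl m x hx f
end
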